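/- arXiv:1801.00186 — 2 statements merged into one kernel-verified Lean document; each statement's English description precedes it below -/
import Mathlib

section
/- Set Ω = ( σ_{n-1}^n / (2 σ_n^{n−1}) )^{1/(n+1)}. Then for every measurable function f : ℝ^n → [0,∞], ( ∫_{S^{n-1}} ∫_ℝ (Rf(θ,t))^{n+1} dt d*θ )^{1/(n+1)} ≤ Ω · ( ∫_{ℝ^n} f(x)^{(n+1)/n} dx )^{n/(n+1)}. (This is the case k = n−1 of the sharp L^{(n+1)/(k+1)} → L^{n+1} estimate of Oberlin–Stein, Christ, and Drury for the k-plane transform, with the sharp constant Ω_k(n) = (2^{k-n} σ_k^n / σ_n^k)^{1/(n+1)} found by Drouot.) -/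
open MeasureTheory Metric Real
open scoped ENNReal NNReal

noncomputable section

/-- The normalized (probability) surface measure `d*θ` on the unit sphere of
`EuclideanSpace ℝ (Fin n)`. -/
def sphMeasure (n : ℕ) : Measure (sphere (0 : EuclideanSpace ℝ (Fin n)) 1) :=
  ((volume : Measure (EuclideanSpace ℝ (Fin n))).toSphere Set.univ)⁻¹ •
    (volume : Measure (EuclideanSpace ℝ (Fin n))).toSphere

/-- The hyperplane Radon transform: `Rf(θ,t) = ∫_{θ^⊥} f(tθ + y) dy`, where `θ^⊥` carries its
canonical Lebesgue measure as an (n-1)-dimensional inner product space. -/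
def Radon (n : ℕ) (f : EuclideanSpace ℝ (Fin n) → ℝ≥0∞)
    (θ : sphere (0 : EuclideanSpace ℝ (Fin n)) 1) (t : ℝ) : ℝ≥0∞ :=
  ∫⁻ y : ((ℝ ∙ (θ : EuclideanSpace ℝ (Fin n)))ᗮ),
    f (t • (θ : EuclideanSpace ℝ (Fin n)) + (y : EuclideanSpace ℝ (Fin n)))

/-- `σ_m = 2π^{(m+1)/2}/Γ((m+1)/2)`, the surface area of the unit sphere `S^m`. -/
def sphereArea (m : ℕ) : ℝ :=
  2 * Real.pi ^ (((m : ℝ) + 1) / 2) / Real.Gamma (((m : ℝ) + 1) / 2)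


theorem exists_transport (A : Set ℝ) (hA : MeasurableSet A) (l : ℝ) (hl : 0 ≤ l)
    (hv : volume A = ENNReal.ofReal (2 * l)) :
    ∃ S : ℝ → ℝ, Measurable S ∧
      Measure.map S (volume.restrict (Set.Ioo (-l) l)) = volume.restrict A ∧
      ∀ t ∈ Set.Ioo (-l) l, ∀ t' ∈ Set.Ioo (-l) l, t ≤ t' → t' - t ≤ S t' - S t := by
  set μ : Measure ℝ := volume.restrict A with hμ
  have huniv : μ Set.univ = ENNReal.ofReal (2 * l) := by simp [hμ, hv]
  have : IsFiniteMeasure μ := ⟨by rw [huniv]; exact ENNReal.ofReal_lt_top⟩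
  set T : ℝ → ℝ := fun s => μ.real (Set.Iic s) - l with hT
  have hTmono : Monotone T := by
    intro a b hab
    simp only [hT]
    have := measureReal_mono (μ := μ) (Set.Iic_subset_Iic.2 hab)
    linarith
  have hTlip : ∀ a b, a ≤ b → T b - T a ≤ b - a := by
    intro a b hab
    simp only [hT]
    have h1 : μ.real (Set.Iic b) ≤ μ.real (Set.Iic a) + μ.real (Set.Ioc a b) := by
      rw [← Set.Iic_union_Ioc_eq_Iic hab]
      exact measureReal_union_le _ _
    have h2 : μ.real (Set.Ioc a b) ≤ b - a := by
      have : μ (Set.Ioc a b) ≤ ENNReal.ofReal (b - a) := by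
        calc μ (Set.Ioc a b) ≤ volume (Set.Ioc a b) := Measure.restrict_apply_le _ _
          _ = _ := by simp
      exact ENNReal.toReal_le_of_le_ofReal (by linarith) this
    linarith
  have hTcont : Continuous T := by
    have : LipschitzWith 1 T := by
      apply LipschitzWith.of_le_add
      intro x y
      rcases le_total x y with h | h
      · have := hTmono h
        have := dist_nonneg (x := x) (y := y)
        linarith
      · have := hTlip y x h
        rw [Real.dist_eq, abs_of_nonneg (by linarith)]
        linarith
    exact this.continuous
  have hreal : μ.real Set.univ = 2 * l := by
    simp only [Measure.real, huniv]
    exact ENNReal.toReal_ofReal (by linarith)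
  have htop : Filter.Tendsto T Filter.atTop (nhds l) := by
    have h1 := tendsto_measure_Iic_atTop (μ := μ)
    have h2 := (ENNReal.tendsto_toReal (measure_ne_top μ Set.univ)).comp h1
    have h3 := h2.sub_const l
    simp only [Measure.real] at hreal
    rw [hreal] at h3
    have e : 2 * l - l = l := by ring
    rw [e] at h3
    exact h3
  have hbot : Filter.Tendsto T Filter.atBot (nhds (-l)) := by
    have h1 : Filter.Tendsto (fun s => μ (Set.Iic s)) Filter.atBot (nhds 0) := by
      have := tendsto_measure_iInter_atBot (μ := μ) (s := fun s : ℝ => Set.Iic s)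
        (fun i => measurableSet_Iic.nullMeasurableSet) (fun a b h => Set.Iic_subset_Iic.2 h)
        ⟨0, measure_ne_top _ _⟩
      have he : (⋂ s : ℝ, Set.Iic s) = ∅ := by
        ext x
        simp only [Set.mem_iInter, Set.mem_Iic, Set.mem_empty_iff_false, iff_false, not_forall, not_le]
        exact exists_lt x
      rw [he, measure_empty] at this
      exact this
    have h2 := (ENNReal.tendsto_toReal ENNReal.zero_ne_top).comp h1
    have h3 := h2.sub_const l
    rw [ENNReal.toReal_zero, zero_sub] at h3
    exact h3
  have hsurj : ∀ t ∈ Set.Ioo (-l) l, ∃ s, T s = t := by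
    intro t ht
    obtain ⟨a, ha⟩ := ((hbot.eventually (eventually_lt_nhds ht.1))).exists
    obtain ⟨b, hb⟩ := ((htop.eventually (eventually_gt_nhds ht.2))).exists
    exact mem_range_of_exists_le_of_exists_ge hTcont ⟨a, ha.le⟩ ⟨b, hb.le⟩
  choose! S0 hS0 using hsurj
  classical
  set S : ℝ → ℝ := (Set.Ioo (-l) l).piecewise S0 (fun _ => 0) with hS
  have hSeq : ∀ t ∈ Set.Ioo (-l) l, S t = S0 t := fun t ht => Set.piecewise_eq_of_mem _ _ _ ht
  have hTS : ∀ t ∈ Set.Ioo (-l) l, T (S t) = t := fun t ht => by rw [hSeq t ht, hS0 t ht]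
  have hexp : ∀ t ∈ Set.Ioo (-l) l, ∀ t' ∈ Set.Ioo (-l) l, t ≤ t' → t' - t ≤ S t' - S t := by
    intro t ht t' ht' h
    rcases le_total (S t) (S t') with h1 | h1
    · have := hTlip _ _ h1
      rwa [hTS t ht, hTS t' ht'] at this
    · have := hTmono h1
      rw [hTS t ht, hTS t' ht'] at this
      have : t = t' := le_antisymm h this
      subst this; simp
  have hSm : Measurable S := by
    refine measurable_of_restrict_of_restrict_compl (s := Set.Ioo (-l) l) measurableSet_Ioo ?_ ?_
    · have : Monotone (Set.domRestrict (Set.Ioo (-l) l) S) := by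
        intro a b hab
        have hab' : (a : ℝ) ≤ b := hab
        have := hexp a a.2 b b.2 hab
        simp only [Set.domRestrict_apply]
        linarith
      exact this.measurable
    · have : Set.domRestrict (Set.Ioo (-l) l)ᶜ S = fun _ => 0 := by
        ext a
        exact Set.piecewise_eq_of_notMem (Set.Ioo (-l) l) S0 (fun _ => 0) a.2
      rw [this]; exact measurable_const
  refine ⟨S, hSm, ?_, hexp⟩
  have : IsFiniteMeasure (volume.restrict (Set.Ioo (-l) l)) := ⟨by simp⟩
  have : IsFiniteMeasure (Measure.map S (volume.restrict (Set.Ioo (-l) l))) := inferInstance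
  refine Measure.ext_of_Iic _ _ (fun a => ?_)
  rw [Measure.map_apply hSm measurableSet_Iic, Measure.restrict_apply (hSm measurableSet_Iic)]
  have hTa1 : -l ≤ T a := by
    simp only [hT]; have := measureReal_nonneg (μ := μ) (s := Set.Iic a); linarith
  have hTa2 : T a ≤ l := by
    have := measureReal_mono (μ := μ) (Set.subset_univ (Set.Iic a))
    simp only [hT]; linarith
  have hμa : μ (Set.Iic a) = ENNReal.ofReal (T a + l) := by
    simp only [hT, sub_add_cancel, Measure.real]
    exact (ENNReal.ofReal_toReal (measure_ne_top _ _)).symm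
  rw [hμa]
  apply le_antisymm
  · calc volume (S ⁻¹' Set.Iic a ∩ Set.Ioo (-l) l) ≤ volume (Set.Icc (-l) (T a)) := by
          apply measure_mono
          rintro t ⟨h1, h2⟩
          refine ⟨h2.1.le, ?_⟩
          have := hTmono (show S t ≤ a from h1)
          rwa [hTS t h2] at this
      _ = _ := by rw [Real.volume_Icc]; congr 1; ring
  · calc ENNReal.ofReal (T a + l) = volume (Set.Ioo (-l) (T a)) := by
          rw [Real.volume_Ioo]; congr 1; ring
      _ ≤ _ := by
          apply measure_mono
          rintro t ⟨h1, h2⟩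
          have ht : t ∈ Set.Ioo (-l) l := ⟨h1, h2.trans_le hTa2⟩
          refine ⟨?_, ht⟩
          simp only [Set.mem_preimage, Set.mem_Iic]
          by_contra hc
          push Not at hc
          have := hTmono hc.le
          rw [hTS t ht] at this
          linarith

/-- One-dimensional rearrangement inequality. -/
theorem rearr_one {ι : Type*} [Fintype ι] (A : ι → Set ℝ) (hA : ∀ i, MeasurableSet (A i))
    (l : ι → ℝ) (hl : ∀ i, 0 ≤ l i) (hv : ∀ i, volume (A i) = ENNReal.ofReal (2 * l i))
    (a : ι → ℝ) :
    ∫⁻ s, ‖∑ i, a i * s i‖ₑ ∂(Measure.pi fun i => (volume : Measure ℝ).restrict (Set.Ioo (-l i) (l i)))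
      ≤ ∫⁻ s, ‖∑ i, a i * s i‖ₑ ∂(Measure.pi fun i => (volume : Measure ℝ).restrict (A i)) := by
  classical
  choose S hSm hSmap hexp using fun i => exists_transport (A i) (hA i) (l i) (hl i) (hv i)
  set ν : ι → Measure ℝ := fun i => (volume : Measure ℝ).restrict (Set.Ioo (-l i) (l i)) with hν
  have : ∀ i, IsFiniteMeasure (ν i) := fun i => ⟨by simp [hν]⟩
  set μ := Measure.pi ν with hμ
  have hmeas : Measurable (fun s : ι → ℝ => ‖∑ i, a i * s i‖ₑ) := by fun_prop
  have hrhs : ∫⁻ s, ‖∑ i, a i * s i‖ₑ ∂(Measure.pi fun i => (volume : Measure ℝ).restrict (A i))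
      = ∫⁻ s, ‖∑ i, a i * S i (s i)‖ₑ ∂μ := by
    have h1 : (Measure.pi fun i => (volume : Measure ℝ).restrict (A i))
        = Measure.map (fun s i => S i (s i)) μ := by
      have : ∀ i, IsFiniteMeasure (Measure.map (S i) (ν i)) := fun i => inferInstance
      rw [hμ, Measure.pi_map_pi (fun i => (hSm i).aemeasurable)]
      simp only [hν, hSmap]
    have hm : Measurable (fun (s : ι → ℝ) i => S i (s i)) :=
      measurable_pi_lambda _ fun i => (hSm i).comp (measurable_pi_apply i)
    rw [h1, lintegral_map hmeas hm]
  -- flips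
  have hneg : ∀ i, MeasurePreserving (fun x : ℝ => -x) (ν i) (ν i) := by
    intro i
    have := (Measure.measurePreserving_neg (volume : Measure ℝ)).restrict_preimage
      (s := Set.Ioo (-l i) (l i)) measurableSet_Ioo
    have he : Neg.neg ⁻¹' (Set.Ioo (-l i) (l i)) = Set.Ioo (-l i) (l i) := by
      ext x
      simp only [Set.mem_preimage, Set.mem_Ioo]
      constructor <;> rintro ⟨h1, h2⟩ <;> constructor <;> linarith
    rwa [he] at this
  have hflipall : MeasurePreserving (fun (s : ι → ℝ) i => -(s i)) μ μ :=
    measurePreserving_pi ν ν hneg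
  have hflip : ∀ j, MeasurePreserving (fun (s : ι → ℝ) i => if i = j then -(s i) else s i) μ μ := by
    intro j
    refine measurePreserving_pi ν ν (f := fun i x => if i = j then -x else x) ?_
    intro i
    by_cases h : i = j
    · simpa [h] using hneg j
    · simp only [h, if_false]
      exact MeasurePreserving.id (ν i)
  set z : ι → ℝ → ℝ := fun i t => S i t - S i (-t) with hz
  have hzm : ∀ i, Measurable (z i) := fun i => (hSm i).sub ((hSm i).comp measurable_neg)
  have hzodd : ∀ i t, z i (-t) = - z i t := by intro i t; simp [hz]
  have hzabs : ∀ i, ∀ t ∈ Set.Ioo (-l i) (l i), |2 * t| ≤ |z i t| := by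
    intro i t ht
    have ht' : -t ∈ Set.Ioo (-l i) (l i) := ⟨by linarith [ht.2], by linarith [ht.1]⟩
    rcases le_total 0 t with h | h
    · have := hexp i (-t) ht' t ht (by linarith)
      rw [abs_of_nonneg (by linarith)]
      exact le_trans (by linarith) (le_abs_self _)
    · have := hexp i t ht (-t) ht' (by linarith)
      rw [abs_of_nonpos (by linarith)]
      refine le_trans ?_ (neg_le_abs _)
      simp only [hz]; linarith
  -- step one
  have step1 : ∫⁻ s, ‖∑ i, a i * z i (s i)‖ₑ ∂μ ≤ 2 * ∫⁻ s, ‖∑ i, a i * S i (s i)‖ₑ ∂μ := by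
    have hm : Measurable (fun s : ι → ℝ => ‖∑ i, a i * S i (s i)‖ₑ) := by
      refine Measurable.enorm (Finset.measurable_sum _ fun i _ => ?_)
      exact ((hSm i).comp (measurable_pi_apply i)).const_mul _
    have h1 := hflipall.lintegral_comp hm
    rw [two_mul]
    nth_rewrite 2 [← h1]
    rw [← lintegral_add_left hm]
    refine lintegral_mono fun s => ?_
    have : ∑ i, a i * z i (s i) = ∑ i, a i * S i (s i) - ∑ i, a i * S i (-(s i)) := by
      rw [← Finset.sum_sub_distrib]; congr 1; ext i; simp only [hz]; ring
    show ‖∑ i, a i * z i (s i)‖ₑ ≤ _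
    rw [this]
    exact enorm_sub_le
  have hmem : ∀ᵐ s ∂μ, ∀ i, s i ∈ Set.Ioo (-l i) (l i) := by
    rw [ae_all_iff]
    intro i
    have : ∀ᵐ x ∂(ν i), x ∈ Set.Ioo (-l i) (l i) := ae_restrict_mem measurableSet_Ioo
    exact (Measure.quasiMeasurePreserving_eval ν i).ae this
  -- step two, by induction
  have step2 : ∀ F : Finset ι,
      ∫⁻ s, ‖∑ i, a i * (if i ∈ F then 2 * s i else z i (s i))‖ₑ ∂μ ≤
        ∫⁻ s, ‖∑ i, a i * z i (s i)‖ₑ ∂μ := by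
    intro F
    induction F using Finset.induction_on with
    | empty => simp
    | insert j F hj ih =>
      refine le_trans ?_ ih
      have hmm : ∀ F : Finset ι, Measurable
          (fun s : ι → ℝ => ‖∑ i, a i * (if i ∈ F then 2 * s i else z i (s i))‖ₑ) := by
        intro F
        refine Measurable.enorm (Finset.measurable_sum _ fun i _ => ?_)
        refine Measurable.const_mul ?_ _
        by_cases h : i ∈ F
        · simp only [h, if_true]; exact (measurable_pi_apply i).const_mul _
        · simp only [h, if_false]; exact (hzm i).comp (measurable_pi_apply i)
      have e1 := (hflip j).lintegral_comp (hmm (insert j F))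
      have e2 := (hflip j).lintegral_comp (hmm F)
      have key : 2 * ∫⁻ s, ‖∑ i, a i * (if i ∈ insert j F then 2 * s i else z i (s i))‖ₑ ∂μ ≤
          2 * ∫⁻ s, ‖∑ i, a i * (if i ∈ F then 2 * s i else z i (s i))‖ₑ ∂μ := by
        rw [two_mul, two_mul]
        nth_rewrite 2 [← e1]
        nth_rewrite 2 [← e2]
        rw [← lintegral_add_left (hmm _), ← lintegral_add_left (hmm _)]
        refine lintegral_mono_ae ?_
        filter_upwards [hmem] with s hs
        set c := ∑ i ∈ Finset.univ.erase j, a i * (if i ∈ F then 2 * s i else z i (s i)) with hc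
        have s1 : ∑ i, a i * (if i ∈ insert j F then 2 * s i else z i (s i)) = a j * (2 * s j) + c := by
          rw [← Finset.add_sum_erase _ _ (Finset.mem_univ j)]
          congr 1
          · simp
          · refine Finset.sum_congr rfl fun i hi => ?_
            have : i ≠ j := Finset.ne_of_mem_erase hi
            simp [this]
        have s2 : ∑ i, a i * (if i ∈ insert j F then 2 * (if i = j then -(s i) else s i)
            else z i (if i = j then -(s i) else s i)) = -(a j * (2 * s j)) + c := by
          rw [← Finset.add_sum_erase _ _ (Finset.mem_univ j)]
          congr 1
          · simp
          · refine Finset.sum_congr rfl fun i hi => ?_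
            have : i ≠ j := Finset.ne_of_mem_erase hi
            simp [this]
        have s3 : ∑ i, a i * (if i ∈ F then 2 * s i else z i (s i)) = a j * z j (s j) + c := by
          rw [← Finset.add_sum_erase _ _ (Finset.mem_univ j)]
          congr 1
          simp [hj]
        have s4 : ∑ i, a i * (if i ∈ F then 2 * (if i = j then -(s i) else s i)
            else z i (if i = j then -(s i) else s i)) = -(a j * z j (s j)) + c := by
          rw [← Finset.add_sum_erase _ _ (Finset.mem_univ j)]
          congr 1
          · simp [hj, hzodd]
          · refine Finset.sum_congr rfl fun i hi => ?_
            have : i ≠ j := Finset.ne_of_mem_erase hi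
            simp [this]
        rw [s1, s2, s3, s4]
        have hp : |a j * (2 * s j)| ≤ |a j * z j (s j)| := by
          rw [abs_mul (a j) (2 * s j), abs_mul (a j) (z j (s j))]
          exact mul_le_mul_of_nonneg_left (hzabs j _ (hs j)) (abs_nonneg _)
        have hr : |a j * (2 * s j) + c| + |-(a j * (2 * s j)) + c| ≤
            |a j * z j (s j) + c| + |-(a j * z j (s j)) + c| := by
          generalize a j * (2 * s j) = p at hp
          generalize a j * z j (s j) = q at hp
          rcases abs_cases p with ⟨_, _⟩ | ⟨_, _⟩ <;> rcases abs_cases q with ⟨_, _⟩ | ⟨_, _⟩ <;>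
          rcases abs_cases (p + c) with ⟨_, _⟩ | ⟨_, _⟩ <;> rcases abs_cases (-p + c) with ⟨_, _⟩ | ⟨_, _⟩ <;>
          rcases abs_cases (q + c) with ⟨_, _⟩ | ⟨_, _⟩ <;> rcases abs_cases (-q + c) with ⟨_, _⟩ | ⟨_, _⟩ <;>
          linarith
        simp only [Real.enorm_eq_ofReal_abs]
        rw [← ENNReal.ofReal_add (abs_nonneg _) (abs_nonneg _),
          ← ENNReal.ofReal_add (abs_nonneg _) (abs_nonneg _)]
        exact ENNReal.ofReal_le_ofReal hr
      exact (ENNReal.mul_le_mul_iff_right (by norm_num) (by norm_num)).1 key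
  have fin := (step2 Finset.univ).trans step1
  rw [hrhs]
  have e : ∫⁻ s, ‖∑ i, a i * (if i ∈ Finset.univ then 2 * s i else z i (s i))‖ₑ ∂μ
      = 2 * ∫⁻ s, ‖∑ i, a i * s i‖ₑ ∂μ := by
    rw [← lintegral_const_mul _ hmeas]
    congr 1; ext s
    have : ∑ i, a i * (if i ∈ Finset.univ then 2 * s i else z i (s i)) = 2 * ∑ i, a i * s i := by
      rw [Finset.mul_sum]; congr 1; ext i; simp; ring
    rw [this, enorm_mul]
    congr 1
    simp [Real.enorm_eq_ofReal_abs]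
  rw [e] at fin
  exact (ENNReal.mul_le_mul_iff_right (by norm_num) (by norm_num)).1 fin

/-- The absolute determinant functional of a measure. -/
def phiM (m : ℕ) (μ : Measure (Fin m → ℝ)) : ℝ≥0∞ :=
  ∫⁻ x : Fin m → Fin m → ℝ, ‖(Matrix.of x).det‖ₑ ∂(Measure.pi fun _ => μ)

/-- The absolute determinant functional of a set. -/
def phi (m : ℕ) (K : Set (Fin m → ℝ)) : ℝ≥0∞ := phiM m (volume.restrict K)

/-- Glue a first coordinate. -/
def glue {d : ℕ} (s : ℝ) (y : Fin d → ℝ) : Fin (d + 1) → ℝ := Fin.cons s y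

@[simp] theorem glue_zero {d : ℕ} (s : ℝ) (y : Fin d → ℝ) : glue s y 0 = s := rfl
@[simp] theorem glue_succ {d : ℕ} (s : ℝ) (y : Fin d → ℝ) (i : Fin d) : glue s y i.succ = y i := rfl

theorem glue_self {d : ℕ} (x : Fin (d + 1) → ℝ) : glue (x 0) (fun i => x i.succ) = x := by
  ext i; refine Fin.cases ?_ (fun i => ?_) i <;> simp

theorem mp_glue (d : ℕ) : MeasurePreserving (fun p : ℝ × (Fin d → ℝ) => glue p.1 p.2) := by
  have h := (volume_preserving_piFinSuccAbove (fun _ : Fin (d + 1) => ℝ) 0).symm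
  have e : (fun p : ℝ × (Fin d → ℝ) => glue p.1 p.2) =
      ⇑(MeasurableEquiv.piFinSuccAbove (fun _ : Fin (d + 1) => ℝ) 0).symm := by
    ext p i
    simp [glue, MeasurableEquiv.piFinSuccAbove_symm_apply, Fin.insertNthEquiv]
  rw [e]; exact h

theorem measurable_glue {α : Type*} [MeasurableSpace α] {d : ℕ} {s : α → ℝ} {y : α → Fin d → ℝ}
    (hs : Measurable s) (hy : Measurable y) : Measurable (fun a => glue (s a) (y a)) :=
  (mp_glue d).measurable.comp (hs.prodMk hy)

/-- One-dimensional slice. -/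
def slice {d : ℕ} (K : Set (Fin (d + 1) → ℝ)) (y : Fin d → ℝ) : Set ℝ := {s | glue s y ∈ K}

theorem measurableSet_slice {d : ℕ} {K : Set (Fin (d + 1) → ℝ)} (hK : MeasurableSet K)
    (y : Fin d → ℝ) : MeasurableSet (slice K y) :=
  measurable_glue measurable_id measurable_const hK

theorem volume_eq_slice {d : ℕ} {K : Set (Fin (d + 1) → ℝ)} (hK : MeasurableSet K) :
    volume K = ∫⁻ y, volume (slice K y) := by
  rw [← (mp_glue d).measure_preimage hK.nullMeasurableSet, Measure.volume_eq_prod,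
    Measure.prod_apply_symm ((mp_glue d).measurable hK)]
  rfl

theorem measurable_slice {d : ℕ} {K : Set (Fin (d + 1) → ℝ)} (hK : MeasurableSet K) :
    Measurable (fun y => volume (slice K y)) :=
  measurable_measure_prodMk_right ((mp_glue d).measurable hK)

theorem measurable_det {m : ℕ} : Measurable (fun x : Fin m → Fin m → ℝ => ‖(Matrix.of x).det‖ₑ) := by
  simp only [Matrix.det_apply, Matrix.of_apply]
  fun_prop

theorem mp_glue_pi (k d : ℕ) : MeasurePreserving
    (fun (p : (Fin k → ℝ) × (Fin k → Fin d → ℝ)) i => glue (p.1 i) (p.2 i)) := by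
  have h1 := (volume_measurePreserving_arrowProdEquivProdArrow ℝ (Fin d → ℝ) (Fin k)).symm
  have h2 : MeasurePreserving (fun (x : Fin k → ℝ × (Fin d → ℝ)) i => glue (x i).1 (x i).2) :=
    measurePreserving_pi (fun _ => volume) (fun _ => volume) (fun _ => mp_glue d)
  exact h2.comp h1

theorem phi_fubini {d : ℕ} {K : Set (Fin (d + 1) → ℝ)} (hK : MeasurableSet K) :
    phi (d + 1) K = ∫⁻ y : Fin (d + 1) → Fin d → ℝ,
      ∫⁻ s, ‖(Matrix.of fun i => glue (s i) (y i)).det‖ₑ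
        ∂(Measure.pi fun i => (volume : Measure ℝ).restrict (slice K (y i))) := by
  have hpi : MeasurableSet (Set.univ.pi fun _ : Fin (d + 1) => K) :=
    MeasurableSet.univ_pi fun _ => hK
  unfold phi phiM
  rw [← Measure.restrict_pi_pi, ← lintegral_indicator hpi, ← volume_pi,
    ← (mp_glue_pi (d + 1) d).lintegral_comp (measurable_det.indicator hpi),
    Measure.volume_eq_prod, lintegral_prod_symm']
  · congr 1
    ext y
    rw [← Measure.restrict_pi_pi, ← lintegral_indicator (MeasurableSet.univ_pi fun i => measurableSet_slice hK (y i)), ← volume_pi]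
    congr 1
  · exact (measurable_det.indicator hpi).comp (mp_glue_pi (d + 1) d).measurable

/-- Steiner symmetrization in the first coordinate. -/
def steiner {d : ℕ} (K : Set (Fin (d + 1) → ℝ)) : Set (Fin (d + 1) → ℝ) :=
  {x | |x 0| < (volume (slice K (fun i => x i.succ))).toReal / 2}

theorem measurableSet_steiner {d : ℕ} {K : Set (Fin (d + 1) → ℝ)} (hK : MeasurableSet K) :
    MeasurableSet (steiner K) := by
  have h : Measurable (fun x : Fin (d + 1) → ℝ => (volume (slice K (fun i => x i.succ))).toReal / 2) := by
    refine Measurable.div_const (Measurable.ennreal_toReal ?_) _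
    exact (measurable_slice hK).comp (measurable_pi_lambda _ fun i => measurable_pi_apply _)
  exact measurableSet_lt (by fun_prop) h

theorem slice_steiner {d : ℕ} (K : Set (Fin (d + 1) → ℝ)) (y : Fin d → ℝ) :
    slice (steiner K) y = Set.Ioo (-((volume (slice K y)).toReal / 2)) ((volume (slice K y)).toReal / 2) := by
  ext s
  simp only [slice, steiner, Set.mem_ofPred_eq, glue_zero, glue_succ, Set.mem_Ioo, abs_lt]

theorem volume_slice_steiner {d : ℕ} (K : Set (Fin (d + 1) → ℝ)) (y : Fin d → ℝ)
    (hfin : volume (slice K y) ≠ ∞) :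
    volume (slice (steiner K) y) = volume (slice K y) := by
  rw [slice_steiner, Real.volume_Ioo]
  ring_nf
  exact ENNReal.ofReal_toReal hfin

theorem volume_steiner {d : ℕ} {K : Set (Fin (d + 1) → ℝ)} (hK : MeasurableSet K)
    (hfin : ∀ y, volume (slice K y) ≠ ∞) : volume (steiner K) = volume K := by
  rw [volume_eq_slice hK, volume_eq_slice (measurableSet_steiner hK)]
  simp_rw [volume_slice_steiner K _ (hfin _)]

theorem phi_steiner {d : ℕ} {K : Set (Fin (d + 1) → ℝ)} (hK : MeasurableSet K)
    (hfin : ∀ y, volume (slice K y) ≠ ∞) : phi (d + 1) (steiner K) ≤ phi (d + 1) K := by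
  rw [phi_fubini hK, phi_fubini (measurableSet_steiner hK)]
  refine lintegral_mono fun y => ?_
  simp only [slice_steiner]
  have key := rearr_one (fun i => slice K (y i)) (fun i => measurableSet_slice hK (y i))
    (fun i => (volume (slice K (y i))).toReal / 2) (fun i => by positivity)
    (fun i => by
      rw [mul_div_cancel₀ _ (by norm_num : (2:ℝ) ≠ 0)]
      exact (ENNReal.ofReal_toReal (hfin _)).symm)
    (fun i : Fin (d + 1) => (-1 : ℝ) ^ (i : ℕ) *
      ((Matrix.of fun i => glue 0 (y i)).submatrix i.succAbove Fin.succ).det)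
  have hdet : ∀ s : Fin (d + 1) → ℝ, (Matrix.of fun i => glue (s i) (y i)).det =
      ∑ i : Fin (d + 1), ((-1 : ℝ) ^ (i : ℕ) *
      ((Matrix.of fun i => glue 0 (y i)).submatrix i.succAbove Fin.succ).det) * s i := by
    intro s
    rw [Matrix.det_succ_column_zero]
    refine Finset.sum_congr rfl fun i _ => ?_
    have : ((Matrix.of fun i => glue (s i) (y i)).submatrix i.succAbove Fin.succ) =
      ((Matrix.of fun i => glue 0 (y i)).submatrix i.succAbove Fin.succ) := by
      ext a b; simp
    rw [this]
    simp only [Matrix.of_apply, glue_zero]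
    ring
  simp only [hdet]
  exact key

/-- The Euclidean ball in coordinates. -/
def qball (m : ℕ) (r : ℝ) : Set (Fin m → ℝ) := {x | ∑ i, x i ^ 2 < r ^ 2}

theorem mem_qball {m : ℕ} {r : ℝ} {x : Fin m → ℝ} : x ∈ qball m r ↔ ∑ i, x i ^ 2 < r ^ 2 := Iff.rfl

theorem isOpen_qball (m : ℕ) (r : ℝ) : IsOpen (qball m r) :=
  isOpen_lt (by fun_prop) (by fun_prop)

theorem measurableSet_qball (m : ℕ) (r : ℝ) : MeasurableSet (qball m r) :=
  (isOpen_qball m r).measurableSet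

theorem abs_le_of_mem_qball {m : ℕ} {r : ℝ} (hr : 0 ≤ r) {x : Fin m → ℝ} (hx : x ∈ qball m r)
    (i : Fin m) : |x i| ≤ r := by
  have h1 : x i ^ 2 ≤ ∑ i, x i ^ 2 :=
    Finset.single_le_sum (f := fun i => x i ^ 2) (fun i _ => sq_nonneg _) (Finset.mem_univ i)
  have h2 := mem_qball.1 hx
  exact abs_le_of_sq_le_sq (by linarith) hr

theorem volume_qball_lt_top (m : ℕ) (r : ℝ) (hr : 0 ≤ r) : volume (qball m r) < ∞ := by
  refine (measure_mono (t := Metric.closedBall 0 r) ?_).trans_lt measure_closedBall_lt_top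
  intro x hx
  rw [mem_closedBall_zero_iff, pi_norm_le_iff_of_nonneg hr]
  intro i
  exact abs_le_of_mem_qball hr hx i

theorem volume_qball_pos (m : ℕ) (r : ℝ) (hr : 0 < r) : 0 < volume (qball m r) := by
  refine (isOpen_qball m r).measure_pos _ ⟨0, ?_⟩
  simp only [mem_qball, Pi.zero_apply]
  simp
  positivity

theorem qball_subset {m : ℕ} {r R : ℝ} (hr : 0 ≤ r) (h : r ≤ R) : qball m r ⊆ qball m R := by
  intro x hx
  exact lt_of_lt_of_le (mem_qball.1 hx) (by gcongr)

theorem slice_qball (d : ℕ) (r : ℝ) (y : Fin d → ℝ) :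
    slice (qball (d + 1) r) y = Set.Ioo (-√(r ^ 2 - ∑ i, y i ^ 2)) (√(r ^ 2 - ∑ i, y i ^ 2)) := by
  ext s
  simp only [slice, Set.mem_ofPred_eq, mem_qball, Fin.sum_univ_succ, glue_zero, glue_succ, Set.mem_Ioo]
  rw [← Real.sq_lt]
  constructor <;> intro h <;> linarith

theorem slice_mono {d : ℕ} {K L : Set (Fin (d + 1) → ℝ)} (h : K ⊆ L) (y : Fin d → ℝ) :
    slice K y ⊆ slice L y := fun _ hs => h hs

theorem slice_finite {d : ℕ} {K : Set (Fin (d + 1) → ℝ)} {R : ℝ} (h : K ⊆ qball (d + 1) R)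
    (y : Fin d → ℝ) : volume (slice K y) ≠ ∞ := by
  refine ((measure_mono (slice_mono h y)).trans_lt ?_).ne
  rw [slice_qball]; simp

theorem steiner_subset {d : ℕ} {K : Set (Fin (d + 1) → ℝ)} {R : ℝ} (h : K ⊆ qball (d + 1) R) :
    steiner K ⊆ qball (d + 1) R := by
  intro x hx
  set y : Fin d → ℝ := fun i => x i.succ with hy
  have h1 : |x 0| < (volume (slice K y)).toReal / 2 := hx
  have h2 : (volume (slice K y)).toReal ≤ 2 * √(R ^ 2 - ∑ i, y i ^ 2) := by
    have := measure_mono (μ := volume) (slice_mono h y)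
    rw [slice_qball, Real.volume_Ioo] at this
    refine (ENNReal.toReal_le_of_le_ofReal ?_ this).trans (by linarith)
    have := Real.sqrt_nonneg (R ^ 2 - ∑ i, y i ^ 2)
    linarith
  have h3 : x 0 ∈ slice (qball (d + 1) R) y := by
    rw [slice_qball, Set.mem_Ioo, ← abs_lt]; linarith
  have h4 : glue (x 0) y ∈ qball (d + 1) R := h3
  rwa [glue_self] at h4

/-- slice-wise gain of Steiner symmetrization -/
theorem slice_gain {d : ℕ} {K : Set (Fin (d + 1) → ℝ)} (hK : MeasurableSet K) {R r : ℝ}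
    (h : K ⊆ qball (d + 1) R) (l : ℝ) (y : Fin d → ℝ) :
    volume (slice (qball (d + 1) r \ steiner K) y) +
      volume (slice ((K \ qball (d + 1) r) ∩ {x | x + glue l 0 ∈ qball (d + 1) r \ K}) y)
      ≤ volume (slice (qball (d + 1) r \ K) y) := by
  set S := slice K y with hS
  have hSm : MeasurableSet S := measurableSet_slice hK y
  set ρ := √(r ^ 2 - ∑ i, y i ^ 2) with hρ
  have hρ0 : 0 ≤ ρ := Real.sqrt_nonneg _
  set I := Set.Ioo (-ρ) ρ with hI
  have hIe : slice (qball (d + 1) r) y = I := slice_qball d r y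
  have hSfin : volume S ≠ ∞ := slice_finite h y
  have hIfin : volume I ≠ ∞ := by simp [hI]
  have e1 : slice (qball (d + 1) r \ K) y = I \ S := by rw [← hIe]; rfl
  have e2 : slice (qball (d + 1) r \ steiner K) y = I \ slice (steiner K) y := by rw [← hIe]; rfl
  rw [e1, e2, slice_steiner, ← hS]
  set h1 := volume (slice ((K \ qball (d + 1) r) ∩ {x | x + glue l 0 ∈ qball (d + 1) r \ K}) y) with hh1
  have b1 : h1 ≤ volume (S \ I) := by
    apply measure_mono
    rw [← hIe]
    rintro s ⟨hs, -⟩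
    exact hs
  have b2 : h1 ≤ volume (I \ S) := by
    have : volume (I \ S) = volume ((fun s => s + l) ⁻¹' (I \ S)) := by
      rw [measure_preimage_add_right]
    rw [this]
    apply measure_mono
    rintro s ⟨-, hs⟩
    rw [← e1]
    have : glue (s + l) y = glue s y + glue l 0 := by
      ext i; refine Fin.cases ?_ (fun i => ?_) i <;> simp
    show glue (s + l) y ∈ qball (d + 1) r \ K
    rw [this]; exact hs
  have c1 : volume (I \ S) + volume (I ∩ S) = volume I := by
    rw [add_comm]; exact measure_inter_add_sdiff I hSm
  have c2 : volume (S \ I) + volume (I ∩ S) = volume S := by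
    rw [add_comm, Set.inter_comm]; exact measure_inter_add_sdiff S measurableSet_Ioo
  rcases le_total ρ ((volume S).toReal / 2) with hc | hc
  · have : I \ Set.Ioo (-((volume S).toReal / 2)) ((volume S).toReal / 2) = ∅ := by
      rw [Set.sdiff_eq_empty]
      exact Set.Ioo_subset_Ioo (by linarith) hc
    rw [this, measure_empty, zero_add]
    exact b2
  · have d1 : volume (I \ Set.Ioo (-((volume S).toReal / 2)) ((volume S).toReal / 2)) + volume S = volume I := by
      have hsub : Set.Ioo (-((volume S).toReal / 2)) ((volume S).toReal / 2) ⊆ I :=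
        Set.Ioo_subset_Ioo (by linarith) hc
      have := measure_sdiff_add_inter (μ := volume) I
        (measurableSet_Ioo (a := -((volume S).toReal / 2)) (b := (volume S).toReal / 2))
      rw [Set.inter_eq_self_of_subset_right hsub, Real.volume_Ioo] at this
      convert this using 2
      ring_nf
      exact (ENNReal.ofReal_toReal hSfin).symm
    have hfi : volume (I ∩ S) ≠ ∞ := ne_top_of_le_ne_top hIfin (measure_mono Set.inter_subset_left)
    generalize volume (I \ Set.Ioo (-((volume S).toReal / 2)) ((volume S).toReal / 2)) = v at d1 ⊢
    rw [← c2, ← c1, ← add_assoc] at d1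
    have := (ENNReal.add_left_inj hfi).1 d1
    rw [← this]
    gcongr

theorem volume_gain {d : ℕ} {K : Set (Fin (d + 1) → ℝ)} (hK : MeasurableSet K) {R r : ℝ}
    (h : K ⊆ qball (d + 1) R) (l : ℝ) :
    volume (qball (d + 1) r \ steiner K) +
      volume ((K \ qball (d + 1) r) ∩ {x | x + glue l 0 ∈ qball (d + 1) r \ K})
      ≤ volume (qball (d + 1) r \ K) := by
  have hB := measurableSet_qball (d + 1) r
  have m1 : MeasurableSet (qball (d + 1) r \ steiner K) := hB.diff (measurableSet_steiner hK)
  have m2 : MeasurableSet (qball (d + 1) r \ K) := hB.diff hK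
  have m3 : MeasurableSet ((K \ qball (d + 1) r) ∩ {x | x + glue l 0 ∈ qball (d + 1) r \ K}) :=
    (hK.diff hB).inter ((measurable_id.add_const _) m2)
  rw [volume_eq_slice m1, volume_eq_slice m2, volume_eq_slice m3,
    ← lintegral_add_left (measurable_slice m1)]
  exact lintegral_mono fun y => slice_gain hK h l y

/-- Householder reflections. -/
theorem exists_rot {d : ℕ} (w : Fin (d + 1) → ℝ) : ∃ M : Matrix (Fin (d + 1)) (Fin (d + 1)) ℝ,
    M * M = 1 ∧ (∀ x, ∑ i, (M.mulVec x) i ^ 2 = ∑ i, x i ^ 2) ∧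
    M.mulVec w = glue (√(∑ i, w i ^ 2)) 0 := by
  classical
  set l := √(∑ i, w i ^ 2) with hl
  have hl2 : l ^ 2 = ∑ i, w i ^ 2 := Real.sq_sqrt (Finset.sum_nonneg fun i _ => sq_nonneg _)
  set e : Fin (d + 1) → ℝ := glue l 0 with he
  obtain ⟨v, hv⟩ : ∃ v, v = w - e := ⟨_, rfl⟩
  have hself : ∀ x : Fin (d + 1) → ℝ, ∑ i, x i ^ 2 = x ⬝ᵥ x := fun x => by
    simp [dotProduct, sq]
  have hee : e ⬝ᵥ e = w ⬝ᵥ w := by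
    rw [← hself, ← hself, ← hl2, Fin.sum_univ_succ]
    simp [he]
  have hvw : 2 * (v ⬝ᵥ w) = v ⬝ᵥ v := by
    simp only [hv, sub_dotProduct, dotProduct_sub]
    rw [hee, dotProduct_comm w e]; ring
  set M : Matrix (Fin (d + 1)) (Fin (d + 1)) ℝ := 1 - (2 / (v ⬝ᵥ v)) • Matrix.vecMulVec v v with hM
  have hmul : ∀ x, M.mulVec x = x - (2 / (v ⬝ᵥ v) * (v ⬝ᵥ x)) • v := by
    intro x
    rw [hM, Matrix.sub_mulVec, Matrix.one_mulVec, Matrix.smul_mulVec, Matrix.vecMulVec_mulVec]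
    ext i
    simp
    ring
  have hMM : ∀ x, M.mulVec (M.mulVec x) = x := by
    intro x
    rw [hmul, hmul, dotProduct_sub, dotProduct_smul, sub_sub, ← add_smul]
    by_cases h0 : v ⬝ᵥ v = 0
    · simp [h0]
    · have : 2 / v ⬝ᵥ v * v ⬝ᵥ x +
        2 / v ⬝ᵥ v * (v ⬝ᵥ x - (2 / v ⬝ᵥ v * v ⬝ᵥ x) • (v ⬝ᵥ v)) = 0 := by
        simp only [smul_eq_mul]
        field_simp
        ring
      rw [this]; simp
  refine ⟨M, ?_, ?_, ?_⟩
  · apply Matrix.ext_of_mulVec_single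
    intro i
    rw [← Matrix.mulVec_mulVec, hMM, Matrix.one_mulVec]
  · intro x
    rw [hself, hself, hmul]
    simp only [sub_dotProduct, dotProduct_sub, smul_dotProduct, dotProduct_smul, smul_eq_mul]
    rw [dotProduct_comm x v]
    by_cases h0 : v ⬝ᵥ v = 0
    · simp [h0]
    · field_simp
      ring
  · rw [hmul]
    by_cases h0 : v ⬝ᵥ v = 0
    · have : v = 0 := by simpa using h0
      rw [this] at hv
      rw [this, smul_zero, sub_zero]
      exact sub_eq_zero.1 hv.symm
    · have : 2 / v ⬝ᵥ v * v ⬝ᵥ w = 1 := by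
        rw [div_mul_eq_mul_div, hvw, div_self h0]
      rw [this, hv]; simp

theorem mp_rot {m : ℕ} {M : Matrix (Fin m) (Fin m) ℝ} (h : M * M = 1) :
    |M.det| = 1 ∧ MeasurePreserving (fun x : Fin m → ℝ => M.mulVec x) := by
  have hd : M.det * M.det = 1 := by rw [← Matrix.det_mul, h, Matrix.det_one]
  have habs : |M.det| = 1 := by
    have : |M.det| * |M.det| = 1 := by rw [← abs_mul, hd, abs_one]
    nlinarith [abs_nonneg M.det]
  have hne : M.det ≠ 0 := by intro h0; simp [h0] at hd
  refine ⟨habs, ?_, ?_⟩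
  · exact (Matrix.mulVecLin M).continuous_of_finiteDimensional.measurable
  · have := Real.map_matrix_volume_pi_eq_smul_volume_pi hne
    rw [abs_inv, habs, inv_one, ENNReal.ofReal_one, one_smul] at this
    exact this

theorem phi_rot {m : ℕ} {M : Matrix (Fin m) (Fin m) ℝ} (h : M * M = 1) {K : Set (Fin m → ℝ)}
    (hK : MeasurableSet K) : phi m ((fun x : Fin m → ℝ => M.mulVec x) ⁻¹' K) = phi m K := by
  obtain ⟨habs, hmp⟩ := mp_rot h
  have h1 := hmp.restrict_preimage hK
  have h2 := measurePreserving_pi (fun _ : Fin m => volume.restrict ((fun x : Fin m → ℝ => M.mulVec x) ⁻¹' K))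
    (fun _ : Fin m => volume.restrict K) (fun _ => h1)
  unfold phi phiM
  rw [← h2.lintegral_comp measurable_det]
  congr 1
  ext x
  have : Matrix.of (fun i => M.mulVec (x i)) = Matrix.of x * M.transpose := by
    ext i j
    simp [Matrix.mul_apply, Matrix.mulVec, dotProduct, mul_comm]
  rw [this, Matrix.det_mul, Matrix.det_transpose, enorm_mul]
  rw [Real.enorm_eq_ofReal_abs (M.det), habs]
  simp

theorem exists_shift {d : ℕ} {X Y : Set (Fin (d + 1) → ℝ)} (hX : MeasurableSet X)
    (hY : MeasurableSet Y) {R : ℝ} (hR : 0 < R) (hXR : X ⊆ qball (d + 1) R)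
    (hYR : Y ⊆ qball (d + 1) R) :
    ∃ w, volume X * volume Y / volume (qball (d + 1) (2 * R)) ≤ volume (X ∩ {x | x + w ∈ Y}) := by
  have hms : MeasurableSet {p : (Fin (d + 1) → ℝ) × (Fin (d + 1) → ℝ) | p.2 ∈ X ∧ p.2 + p.1 ∈ Y} :=
    (measurable_snd hX).inter ((measurable_snd.add measurable_fst) hY)
  have h_integ : ∫⁻ w, volume (X ∩ {x | x + w ∈ Y}) = volume X * volume Y := by
    have h1 := Measure.prod_apply (μ := (volume : Measure (Fin (d + 1) → ℝ)))
      (ν := (volume : Measure (Fin (d + 1) → ℝ))) hms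
    have h2 := Measure.prod_apply_symm (μ := (volume : Measure (Fin (d + 1) → ℝ)))
      (ν := (volume : Measure (Fin (d + 1) → ℝ))) hms
    have h3 : ∫⁻ w, volume (X ∩ {x | x + w ∈ Y}) = ∫⁻ w : Fin (d + 1) → ℝ, volume (Prod.mk w ⁻¹'
      {p : (Fin (d + 1) → ℝ) × (Fin (d + 1) → ℝ) | p.2 ∈ X ∧ p.2 + p.1 ∈ Y}) := rfl
    rw [h3, ← h1, h2]
    have h4 : ∀ x : Fin (d + 1) → ℝ, volume ((fun w => (w, x)) ⁻¹' {p : (Fin (d + 1) → ℝ) × (Fin (d + 1) → ℝ) | p.2 ∈ X ∧ p.2 + p.1 ∈ Y})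
        = X.indicator (fun _ => volume Y) x := by
      intro x
      by_cases hx : x ∈ X
      · rw [Set.indicator_of_mem hx]
        have : (fun w => (w, x)) ⁻¹' {p : (Fin (d + 1) → ℝ) × (Fin (d + 1) → ℝ) | p.2 ∈ X ∧ p.2 + p.1 ∈ Y}
          = (fun w => x + w) ⁻¹' Y := by ext w; simp [hx]
        rw [this, measure_preimage_add]
      · rw [Set.indicator_of_notMem hx]
        have : (fun w => (w, x)) ⁻¹' {p : (Fin (d + 1) → ℝ) × (Fin (d + 1) → ℝ) | p.2 ∈ X ∧ p.2 + p.1 ∈ Y}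
          = ∅ := by ext w; simp [hx]
        rw [this, measure_empty]
    simp_rw [h4]
    rw [lintegral_indicator hX, setLIntegral_const, mul_comm]
  have hsupp : ∀ w, w ∉ qball (d + 1) (2 * R) → volume (X ∩ {x | x + w ∈ Y}) = 0 := by
    intro w hw
    have : X ∩ {x | x + w ∈ Y} = ∅ := by
      rw [Set.eq_empty_iff_forall_notMem]
      rintro x ⟨hx, hxw⟩
      apply hw
      have a1 := mem_qball.1 (hXR hx)
      have a2 : ∑ i, (x i + w i) ^ 2 < R ^ 2 := mem_qball.1 (hYR hxw)
      rw [mem_qball]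
      have a3 : ∑ i, w i ^ 2 ≤ ∑ i, (2 * (x i + w i) ^ 2 + 2 * x i ^ 2) := by
        refine Finset.sum_le_sum fun i _ => ?_
        nlinarith [sq_nonneg (x i + w i + x i)]
      rw [Finset.sum_add_distrib, ← Finset.mul_sum, ← Finset.mul_sum] at a3
      nlinarith
    rw [this, measure_empty]
  have hset : ∫⁻ w in qball (d + 1) (2 * R), volume (X ∩ {x | x + w ∈ Y}) = volume X * volume Y := by
    rw [← h_integ]
    refine setLIntegral_eq_of_support_subset ?_
    intro w hw
    by_contra hc
    exact hw (hsupp w hc)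
  have hfin : volume X * volume Y ≠ ∞ := ENNReal.mul_ne_top
    ((measure_mono hXR).trans_lt (volume_qball_lt_top _ _ hR.le)).ne
    ((measure_mono hYR).trans_lt (volume_qball_lt_top _ _ hR.le)).ne
  obtain ⟨w, -, hw⟩ := exists_setLAverage_le (μ := volume) (s := qball (d + 1) (2 * R))
    (f := fun w => volume (X ∩ {x | x + w ∈ Y})) (volume_qball_pos _ _ (by linarith)).ne'
    (measurableSet_qball _ _).nullMeasurableSet (by rw [hset]; exact hfin)
  refine ⟨w, ?_⟩
  rwa [setLAverage_eq, hset] at hw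

/-- Sets competing with `K`. -/
structure Comp (d : ℕ) (R : ℝ) (K K' : Set (Fin (d + 1) → ℝ)) : Prop where
  meas : MeasurableSet K'
  sub : K' ⊆ qball (d + 1) R
  vol : volume K' = volume K
  le : phi (d + 1) K' ≤ phi (d + 1) K

theorem comp_step {d : ℕ} {R r : ℝ} (hr : 0 < r) (hrR : r ≤ R) {K K' : Set (Fin (d + 1) → ℝ)}
    (hv : volume K = volume (qball (d + 1) r)) (h : Comp d R K K') :
    ∃ K'', Comp d R K K'' ∧ volume (qball (d + 1) r \ K'') +
      volume (qball (d + 1) r \ K') ^ 2 / volume (qball (d + 1) (2 * R)) ≤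
      volume (qball (d + 1) r \ K') := by
  set B := qball (d + 1) r with hB
  have hBm : MeasurableSet B := measurableSet_qball _ _
  have hBR : B ⊆ qball (d + 1) R := qball_subset hr.le hrR
  obtain ⟨w, hw⟩ := exists_shift (X := K' \ B) (Y := B \ K') (h.meas.diff hBm) (hBm.diff h.meas)
    (hr.trans_le hrR) (Set.sdiff_subset.trans h.sub) (Set.sdiff_subset.trans hBR)
  have hBfin : volume B ≠ ∞ := (volume_qball_lt_top _ _ hr.le).ne
  have hXY : volume (K' \ B) = volume (B \ K') := by
    have c1 := measure_inter_add_sdiff (μ := volume) K' hBm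
    have c2 := measure_inter_add_sdiff (μ := volume) B h.meas
    rw [h.vol, hv, ← c2, Set.inter_comm B K'] at c1
    exact (ENNReal.add_right_inj (ne_top_of_le_ne_top hBfin (measure_mono Set.inter_subset_right))).1 c1
  obtain ⟨M, hMM, hN, hMw⟩ := exists_rot w
  obtain ⟨-, hmp⟩ := mp_rot hMM
  set T : (Fin (d + 1) → ℝ) → (Fin (d + 1) → ℝ) := fun x => M.mulVec x with hT
  have hTB : ∀ ρ, T ⁻¹' (qball (d + 1) ρ) = qball (d + 1) ρ := by
    intro ρ; ext x; simp only [hT, Set.mem_preimage, mem_qball, hN]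
  have hK1m : MeasurableSet (T ⁻¹' K') := hmp.measurable h.meas
  have hK1s : T ⁻¹' K' ⊆ qball (d + 1) R := by
    rw [← hTB R]; exact Set.preimage_mono h.sub
  refine ⟨steiner (T ⁻¹' K'), ⟨measurableSet_steiner hK1m, steiner_subset hK1s, ?_, ?_⟩, ?_⟩
  · rw [volume_steiner hK1m (slice_finite hK1s), hmp.measure_preimage h.meas.nullMeasurableSet, h.vol]
  · refine (phi_steiner hK1m (slice_finite hK1s)).trans ?_
    rw [hT, phi_rot hMM h.meas]; exact h.le
  · have g := volume_gain hK1m (r := r) hK1s (√(∑ i, w i ^ 2))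
    rw [← hMw] at g
    have e1 : volume (B \ T ⁻¹' K') = volume (B \ K') := by
      have : B \ T ⁻¹' K' = T ⁻¹' (B \ K') := by
        rw [Set.preimage_sdiff, hB, hTB]
      rw [this, hmp.measure_preimage (hBm.diff h.meas).nullMeasurableSet]
    have e2 : volume (T ⁻¹' K' \ B ∩ {x | x + M.mulVec w ∈ B \ T ⁻¹' K'}) =
        volume ((K' \ B) ∩ {x | x + w ∈ B \ K'}) := by
      have : T ⁻¹' K' \ B ∩ {x | x + M.mulVec w ∈ B \ T ⁻¹' K'} =
          T ⁻¹' ((K' \ B) ∩ {x | x + w ∈ B \ K'}) := by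
        have hTB' := hTB r
        have : ∀ x, T (x + M.mulVec w) = T x + w := by
          intro x
          simp only [hT, Matrix.mulVec_add, Matrix.mulVec_mulVec, hMM, Matrix.one_mulVec]
        have hmemB : ∀ x, x ∈ B ↔ T x ∈ B := fun x => by
          conv_lhs => rw [hB, ← hTB']
          rfl
        ext x
        simp only [Set.mem_inter_iff, Set.mem_sdiff, Set.mem_preimage, Set.mem_ofPred_eq, this,
          hmemB x, hmemB (x + M.mulVec w)]
      rw [this, hmp.measure_preimage]
      exact ((h.meas.diff hBm).inter ((measurable_id.add_const _) (hBm.diff h.meas))).nullMeasurableSet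
    rw [e1, e2] at g
    refine le_trans ?_ g
    gcongr
    rw [hXY, ← sq] at hw
    exact hw

theorem comp_small {d : ℕ} {R r : ℝ} (hr : 0 < r) (hrR : r ≤ R) {K : Set (Fin (d + 1) → ℝ)}
    (hK : MeasurableSet K) (hKR : K ⊆ qball (d + 1) R)
    (hv : volume K = volume (qball (d + 1) r)) (ε : ℝ≥0∞) (hε : 0 < ε) :
    ∃ K', Comp d R K K' ∧ volume (qball (d + 1) r \ K') < ε := by
  set B := qball (d + 1) r with hB
  set α := sInf {v | ∃ K', Comp d R K K' ∧ v = volume (B \ K')} with hα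
  have hlow : ∀ K', Comp d R K K' → α ≤ volume (B \ K') := fun K' h => sInf_le ⟨K', h, rfl⟩
  have hα0 : α = 0 := by
    by_contra hne
    have hfin : volume (qball (d + 1) (2 * R)) ≠ ∞ := (volume_qball_lt_top _ _ (by linarith)).ne
    have hαfin : α ≠ ∞ := ne_top_of_le_ne_top (volume_qball_lt_top (d + 1) r hr.le).ne
      ((hlow K ⟨hK, hKR, rfl, le_rfl⟩).trans (measure_mono Set.sdiff_subset))
    have hpos : α ^ 2 / volume (qball (d + 1) (2 * R)) ≠ 0 := by
      simp [ENNReal.div_eq_zero_iff, hne, hfin]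
    obtain ⟨v, ⟨K', hK', rfl⟩, hlt⟩ := sInf_lt_iff.1 (ENNReal.lt_add_right hαfin hpos)
    obtain ⟨K'', hK'', hle⟩ := comp_step hr hrR hv hK'
    have : α + α ^ 2 / volume (qball (d + 1) (2 * R)) ≤ volume (B \ K') := by
      refine le_trans ?_ hle
      gcongr
      · exact hlow _ hK''
      · exact hlow _ hK'
    exact absurd hlt (not_lt.2 this)
  have : α < ε := hα0 ▸ hε
  obtain ⟨v, ⟨K', hK', rfl⟩, hlt⟩ := sInf_lt_iff.1 this
  exact ⟨K', hK', hlt⟩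

section
open scoped Pointwise

theorem phi_eq_set (m : ℕ) (K : Set (Fin m → ℝ)) :
    phi m K = ∫⁻ x in Set.univ.pi (fun _ : Fin m => K), ‖(Matrix.of x).det‖ₑ := by
  unfold phi phiM
  rw [← Measure.restrict_pi_pi]
  rfl

theorem phi_mono {m : ℕ} {K L : Set (Fin m → ℝ)} (h : K ⊆ L) : phi m K ≤ phi m L := by
  rw [phi_eq_set, phi_eq_set]
  exact lintegral_mono_set (Set.pi_mono fun _ _ => h)

theorem det_bound {m : ℕ} {r : ℝ} (hr : 0 ≤ r) {x : Fin m → Fin m → ℝ} (hx : ∀ i, x i ∈ qball m r) :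
    ‖(Matrix.of x).det‖ₑ ≤ ENNReal.ofReal (m.factorial * r ^ m) := by
  rw [Real.enorm_eq_ofReal_abs]
  apply ENNReal.ofReal_le_ofReal
  have := Matrix.det_le (A := Matrix.of x) (abv := AbsoluteValue.abs) (x := r)
    (fun i j => abs_le_of_mem_qball hr (hx i) j)
  simpa [nsmul_eq_mul] using this

theorem phi_qball_lt_top {m : ℕ} {r : ℝ} (hr : 0 ≤ r) : phi m (qball m r) < ∞ := by
  rw [phi_eq_set]
  have : ∫⁻ x in Set.univ.pi (fun _ : Fin m => qball m r), ‖(Matrix.of x).det‖ₑ ≤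
      ∫⁻ x in Set.univ.pi (fun _ : Fin m => qball m r), ENNReal.ofReal (m.factorial * r ^ m) := by
    refine setLIntegral_mono measurable_const fun x hx => ?_
    exact det_bound hr fun i => hx i (Set.mem_univ _)
  refine this.trans_lt ?_
  rw [setLIntegral_const, volume_pi_pi]
  exact ENNReal.mul_lt_top ENNReal.ofReal_lt_top
    (ENNReal.prod_lt_top fun i _ => volume_qball_lt_top m r hr)

theorem phi_ball_le {d : ℕ} {r : ℝ} (hr : 0 ≤ r) (K : Set (Fin (d + 1) → ℝ)) :
    phi (d + 1) (qball (d + 1) r) ≤ phi (d + 1) K +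
      ((d + 1 : ℕ) * ENNReal.ofReal ((d + 1).factorial * r ^ (d + 1)) *
        volume (qball (d + 1) r) ^ d) * volume (qball (d + 1) r \ K) := by
  classical
  set B := qball (d + 1) r with hB
  set D := ENNReal.ofReal ((d + 1).factorial * r ^ (d + 1)) with hD
  rw [phi_eq_set, phi_eq_set]
  set E : Fin (d + 1) → Set (Fin (d + 1) → Fin (d + 1) → ℝ) := fun i =>
    Set.univ.pi (fun j => if j = i then B \ K else B) with hE
  have hsub : Set.univ.pi (fun _ : Fin (d + 1) => B) ⊆ Set.univ.pi (fun _ : Fin (d + 1) => K) ∪ ⋃ i, E i := by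
    intro x hx
    by_cases h : ∀ i, x i ∈ K
    · exact Or.inl fun i _ => h i
    · push Not at h
      obtain ⟨i, hi⟩ := h
      refine Or.inr (Set.mem_iUnion.2 ⟨i, fun j _ => ?_⟩)
      by_cases hj : j = i
      · subst hj
        simp only [if_true]
        exact ⟨hx j (Set.mem_univ _), hi⟩
      · simp only [hj, if_false]
        exact hx j (Set.mem_univ _)
  refine (lintegral_mono_set hsub).trans ((lintegral_union_le _ _ _).trans ?_)
  gcongr
  refine (lintegral_iUnion_le _ _).trans ?_
  rw [tsum_fintype]
  have hEi : ∀ i, ∫⁻ x in E i, ‖(Matrix.of x).det‖ₑ ≤ D * (volume B ^ d * volume (B \ K)) := by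
    intro i
    calc ∫⁻ x in E i, ‖(Matrix.of x).det‖ₑ ≤ ∫⁻ x in E i, D := by
          refine setLIntegral_mono measurable_const fun x hx => det_bound hr fun j => ?_
          have := hx j (Set.mem_univ _)
          by_cases hj : j = i
          · simp only [hj, if_true] at this; rw [hj]; exact this.1
          · simpa only [hj, if_false] using this
      _ = D * (volume B ^ d * volume (B \ K)) := by
          rw [setLIntegral_const, hE, volume_pi_pi]
          congr 1
          rw [← Finset.mul_prod_erase _ _ (Finset.mem_univ i), if_pos rfl, mul_comm]
          congr 1
          rw [Finset.prod_congr rfl (g := fun _ => volume B)]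
          · rw [Finset.prod_const, Finset.card_erase_of_mem (Finset.mem_univ i)]
            simp
          · intro j hj
            rw [if_neg (Finset.ne_of_mem_erase hj)]
  refine (Finset.sum_le_sum fun i _ => hEi i).trans ?_
  rw [Finset.sum_const, nsmul_eq_mul, Finset.card_univ, Fintype.card_fin]
  apply le_of_eq
  ring

theorem phi_ball_le_phi {d : ℕ} {R r : ℝ} (hr : 0 < r) (hrR : r ≤ R) {K : Set (Fin (d + 1) → ℝ)}
    (hK : MeasurableSet K) (hKR : K ⊆ qball (d + 1) R)
    (hv : volume K = volume (qball (d + 1) r)) :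
    phi (d + 1) (qball (d + 1) r) ≤ phi (d + 1) K := by
  set C : ℝ≥0∞ := ((d + 1 : ℕ) * ENNReal.ofReal ((d + 1).factorial * r ^ (d + 1)) *
        volume (qball (d + 1) r) ^ d) with hC
  have hCfin : C ≠ ∞ := by
    refine ENNReal.mul_ne_top (ENNReal.mul_ne_top (by simp) ENNReal.ofReal_ne_top) ?_
    exact ENNReal.pow_ne_top (volume_qball_lt_top _ _ hr.le).ne
  refine ENNReal.le_of_forall_pos_le_add fun ε hε _ => ?_
  obtain ⟨δ, hδ, hδC⟩ : ∃ δ : ℝ≥0∞, 0 < δ ∧ C * δ ≤ ε := by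
    refine ⟨ε / (C + 1), ?_, ?_⟩
    · exact ENNReal.div_pos (by simpa using hε.ne') (by simp [hCfin])
    · rw [← mul_div_assoc]
      refine ENNReal.div_le_of_le_mul ?_
      rw [mul_comm]
      gcongr
      exact le_self_add
  obtain ⟨K', hK', hlt⟩ := comp_small hr hrR hK hKR hv δ hδ
  calc phi (d + 1) (qball (d + 1) r) ≤ phi (d + 1) K' + C * volume (qball (d + 1) r \ K') :=
        phi_ball_le hr.le K'
    _ ≤ phi (d + 1) K + ε := by
        gcongr
        · exact hK'.le
        · exact le_trans (by gcongr) hδC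

theorem volume_qball {m : ℕ} {r : ℝ} (hr : 0 < r) :
    volume (qball m r) = ENNReal.ofReal r ^ m * volume (qball m 1) := by
  have : qball m r = r • qball m 1 := by
    ext x
    rw [Set.mem_smul_set_iff_inv_smul_mem₀ hr.ne']
    simp only [mem_qball, Pi.smul_apply, smul_eq_mul, mul_pow, ← Finset.mul_sum, inv_pow]
    rw [inv_mul_lt_iff₀ (by positivity)]
    simp
  rw [this, Measure.addHaar_smul]
  simp [abs_of_pos hr, ENNReal.ofReal_pow hr.le]

theorem phi_qball {m : ℕ} {r : ℝ} (hr : 0 < r) :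
    phi m (qball m r) = ENNReal.ofReal r ^ (m * (m + 1)) * phi m (qball m 1) := by
  rw [phi_eq_set, phi_eq_set]
  have hm : ∀ r, MeasurableSet (Set.univ.pi (fun _ : Fin m => qball m r)) := fun r =>
    MeasurableSet.univ_pi fun _ => measurableSet_qball m r
  rw [← lintegral_indicator (hm _), ← lintegral_indicator (hm _)]
  have h1 := Measure.map_addHaar_smul (volume : Measure (Fin m → Fin m → ℝ)) hr.ne'
  have h2 := lintegral_map (μ := (volume : Measure (Fin m → Fin m → ℝ)))
    (measurable_det.indicator (hm r)) (measurable_const_smul (α := Fin m → Fin m → ℝ) r)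
  rw [h1, lintegral_smul_measure] at h2
  have h3 : ∀ x : Fin m → Fin m → ℝ, (Set.univ.pi (fun _ : Fin m => qball m r)).indicator
      (fun x => ‖(Matrix.of x).det‖ₑ) (r • x) = ENNReal.ofReal r ^ m *
      (Set.univ.pi (fun _ : Fin m => qball m 1)).indicator (fun x => ‖(Matrix.of x).det‖ₑ) x := by
    intro x
    have hiff : r • x ∈ (Set.univ.pi (fun _ : Fin m => qball m r)) ↔
        x ∈ (Set.univ.pi (fun _ : Fin m => qball m 1)) := by
      simp only [Set.mem_univ_pi, mem_qball, Pi.smul_apply, smul_eq_mul, mul_pow, ← Finset.mul_sum]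
      refine forall_congr' fun i => ?_
      rw [mul_lt_iff_lt_one_right (by positivity)]
      simp
    by_cases hx : x ∈ (Set.univ.pi (fun _ : Fin m => qball m 1))
    · rw [Set.indicator_of_mem hx, Set.indicator_of_mem (hiff.2 hx)]
      have : Matrix.of (r • x) = r • Matrix.of x := rfl
      rw [this, Matrix.det_smul, enorm_mul, Fintype.card_fin, enorm_pow, Real.enorm_eq_ofReal hr.le]
    · rw [Set.indicator_of_notMem hx, Set.indicator_of_notMem (fun h => hx (hiff.1 h)), mul_zero]
  simp_rw [h3] at h2
  rw [lintegral_const_mul _ (measurable_det.indicator (hm 1))] at h2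
  have hfr : Module.finrank ℝ (Fin m → Fin m → ℝ) = m * m := by
    simp [Module.finrank_pi_fintype]
  rw [hfr, abs_inv, abs_of_pos (by positivity), ENNReal.ofReal_inv_of_pos (by positivity),
    ENNReal.ofReal_pow hr.le, smul_eq_mul] at h2
  set J := ∫⁻ x, (Set.univ.pi (fun _ : Fin m => qball m r)).indicator
      (fun x => ‖(Matrix.of x).det‖ₑ) x
  have hne : ENNReal.ofReal r ^ (m * m) ≠ 0 := by simp [hr]
  have hnt : ENNReal.ofReal r ^ (m * m) ≠ ∞ := by simp
  calc J = ENNReal.ofReal r ^ (m * m) * ((ENNReal.ofReal r ^ (m * m))⁻¹ * J) := by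
        rw [← mul_assoc, ENNReal.mul_inv_cancel hne hnt, one_mul]
    _ = _ := by rw [h2, ← mul_assoc, ← pow_add]; congr 2

/-- Busemann random simplex type inequality. -/
theorem phi_ineq_bdd {d : ℕ} {K : Set (Fin (d + 1) → ℝ)} (hK : MeasurableSet K) {R : ℝ}
    (hR : 0 < R) (hKR : K ⊆ qball (d + 1) R) :
    phi (d + 1) (qball (d + 1) 1) * volume K ^ (d + 2) ≤
      volume (qball (d + 1) 1) ^ (d + 2) * phi (d + 1) K := by
  have hfin : volume K ≠ ∞ := ((measure_mono hKR).trans_lt (volume_qball_lt_top _ _ hR.le)).ne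
  rcases eq_or_ne (volume K) 0 with h0 | h0
  · rw [h0]; simp
  set κ := volume (qball (d + 1) 1) with hκ
  have hκ0 : κ ≠ 0 := (volume_qball_pos _ _ one_pos).ne'
  have hκt : κ ≠ ∞ := (volume_qball_lt_top _ _ zero_le_one).ne
  have hvt : volume K / κ ≠ ∞ := ENNReal.div_ne_top hfin hκ0
  have hv0 : volume K / κ ≠ 0 := by simp [ENNReal.div_eq_zero_iff, h0, hκt]
  set r := (volume K / κ).toReal ^ (1 / ((d : ℝ) + 1)) with hr
  have hpos : 0 < (volume K / κ).toReal := ENNReal.toReal_pos hv0 hvt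
  have hr0 : 0 < r := Real.rpow_pos_of_pos hpos _
  have hrp : r ^ (d + 1) = (volume K / κ).toReal := by
    rw [hr, ← Real.rpow_natCast, ← Real.rpow_mul hpos.le]
    push_cast
    rw [one_div, inv_mul_cancel₀ (by positivity), Real.rpow_one]
  have hvol : volume K = volume (qball (d + 1) r) := by
    rw [volume_qball hr0, ← ENNReal.ofReal_pow hr0.le, hrp, ENNReal.ofReal_toReal hvt]
    exact (ENNReal.div_mul_cancel hκ0 hκt).symm
  have key := phi_ball_le_phi hr0 (le_max_right R r) hK
    (hKR.trans (qball_subset hR.le (le_max_left R r))) hvol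
  calc phi (d + 1) (qball (d + 1) 1) * volume K ^ (d + 2)
      = κ ^ (d + 2) * phi (d + 1) (qball (d + 1) r) := by
        rw [phi_qball hr0, hvol, volume_qball hr0]
        ring
    _ ≤ _ := by gcongr

theorem phi_ineq {d : ℕ} {K : Set (Fin (d + 1) → ℝ)} (hK : MeasurableSet K) :
    phi (d + 1) (qball (d + 1) 1) * volume K ^ (d + 2) ≤
      volume (qball (d + 1) 1) ^ (d + 2) * phi (d + 1) K := by
  set s : ℕ → Set (Fin (d + 1) → ℝ) := fun k => K ∩ qball (d + 1) ((k : ℝ) + 1) with hs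
  have hmono : Monotone s := fun a b hab => Set.inter_subset_inter_right _
    (qball_subset (by positivity) (by gcongr))
  have hU : ⋃ k, s k = K := by
    rw [hs, ← Set.inter_iUnion]
    apply Set.inter_eq_self_of_subset_left
    intro x _
    obtain ⟨k, hk⟩ := exists_nat_gt (∑ i, x i ^ 2)
    refine Set.mem_iUnion.2 ⟨k, ?_⟩
    rw [mem_qball]
    have : (0:ℝ) ≤ k := by positivity
    nlinarith
  have ht := tendsto_measure_iUnion_atTop (μ := volume) hmono
  rw [hU] at ht
  have ht2 := ENNReal.Tendsto.const_mul ((ENNReal.continuous_pow (d + 2)).continuousAt.tendsto.comp ht)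
    (Or.inr (phi_qball_lt_top (m := d + 1) zero_le_one).ne)
  refine le_of_tendsto' ht2 fun k => ?_
  refine (phi_ineq_bdd (hK.inter (measurableSet_qball _ _)) (R := (k : ℝ) + 1) (by positivity)
    Set.inter_subset_right).trans ?_
  gcongr
  exact phi_mono Set.inter_subset_left

end

/-- Gaussian density. -/
def gd {m : ℕ} (x : Fin m → ℝ) : ℝ≥0∞ := ENNReal.ofReal (Real.exp (-∑ i, x i ^ 2))

theorem measurable_gd {m : ℕ} : Measurable (gd (m := m)) := by
  unfold gd; fun_prop

theorem lintegral_scale {E : Type*} [NormedAddCommGroup E] [NormedSpace ℝ E] [MeasurableSpace E]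
    [BorelSpace E] [FiniteDimensional ℝ E] (μ : Measure E) [μ.IsAddHaarMeasure]
    {F : E → ℝ≥0∞} (hF : Measurable F) {r : ℝ} (hr : 0 < r) :
    ∫⁻ x, F x ∂μ = ENNReal.ofReal r ^ (Module.finrank ℝ E) * ∫⁻ x, F (r • x) ∂μ := by
  have h1 := Measure.map_addHaar_smul μ hr.ne'
  have h2 := lintegral_map (μ := μ) hF (measurable_const_smul (α := E) r)
  rw [h1, lintegral_smul_measure, abs_inv, abs_of_pos (by positivity),
    ENNReal.ofReal_inv_of_pos (by positivity), ENNReal.ofReal_pow hr.le, smul_eq_mul] at h2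
  have hne : ENNReal.ofReal r ^ (Module.finrank ℝ E) ≠ 0 := by simp [hr]
  have hnt : ENNReal.ofReal r ^ (Module.finrank ℝ E) ≠ ∞ := by simp
  rw [← h2, ← mul_assoc, ENNReal.mul_inv_cancel hne hnt, one_mul]

theorem lintegral_qball_scale {m p : ℕ} {F : (Fin m → ℝ) → ℝ≥0∞} (hF : Measurable F)
    (hom : ∀ (t : ℝ) x, 0 < t → F (t • x) = ENNReal.ofReal t ^ p * F x) {r : ℝ} (hr : 0 < r) :
    ∫⁻ x in qball m r, F x = ENNReal.ofReal r ^ (m + p) * ∫⁻ x in qball m 1, F x := by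
  rw [← lintegral_indicator (measurableSet_qball m r), ← lintegral_indicator (measurableSet_qball m 1),
    lintegral_scale volume (hF.indicator (measurableSet_qball m r)) hr, pow_add, mul_assoc,
    Module.finrank_fin_fun, ← lintegral_const_mul _ (hF.indicator (measurableSet_qball m 1))]
  congr 2
  ext x
  have hiff : r • x ∈ qball m r ↔ x ∈ qball m 1 := by
    simp only [mem_qball, Pi.smul_apply, smul_eq_mul, mul_pow, ← Finset.mul_sum]
    rw [mul_lt_iff_lt_one_right (by positivity)]
    simp
  by_cases hx : x ∈ qball m 1
  · rw [Set.indicator_of_mem hx, Set.indicator_of_mem (hiff.2 hx), hom r x hr]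
  · rw [Set.indicator_of_notMem hx, Set.indicator_of_notMem (fun h => hx (hiff.1 h)), mul_zero]

theorem layer_exp {a : ℝ} (ha : 0 ≤ a) :
    ∫⁻ r in Set.Ioi a, ENNReal.ofReal (2 * r * Real.exp (-r ^ 2)) = ENNReal.ofReal (Real.exp (-a ^ 2)) := by
  have hd : ∀ x ∈ Set.Ici a, HasDerivAt (fun r : ℝ => -Real.exp (-r ^ 2)) (2 * x * Real.exp (-x ^ 2)) x := by
    intro x _
    have := (((hasDerivAt_pow 2 x).neg).exp).neg
    refine this.congr_deriv ?_
    simp only [Pi.neg_apply, Pi.pow_apply, id, Nat.cast_ofNat, Nat.add_one_sub_one, pow_one]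
    ring
  have hpos : ∀ x ∈ Set.Ioi a, 0 ≤ 2 * x * Real.exp (-x ^ 2) := by
    intro x hx
    have : 0 < x := lt_of_le_of_lt ha hx
    positivity
  have hlim : Filter.Tendsto (fun r : ℝ => -Real.exp (-r ^ 2)) Filter.atTop (nhds 0) := by
    rw [← neg_zero]
    refine Filter.Tendsto.neg ?_
    refine Real.tendsto_exp_neg_atTop_nhds_zero.comp (Filter.tendsto_pow_atTop (by norm_num))
  have h_integ := integrableOn_Ioi_deriv_of_nonneg' hd hpos hlim
  have hval := integral_Ioi_of_hasDerivAt_of_nonneg' hd hpos hlim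
  rw [← ofReal_integral_eq_lintegral_ofReal h_integ, hval]
  · simp
  · exact (ae_restrict_iff' measurableSet_Ioi).2 (Filter.Eventually.of_forall hpos)

theorem gamma_lint (q : ℕ) : ∫⁻ r in Set.Ioi (0 : ℝ), ENNReal.ofReal (2 * r * Real.exp (-r ^ 2)) *
    ENNReal.ofReal r ^ q = ENNReal.ofReal (Real.Gamma ((q : ℝ) / 2 + 1)) := by
  have h1 : ∫⁻ r in Set.Ioi (0 : ℝ), ENNReal.ofReal (2 * r * Real.exp (-r ^ 2)) *
      ENNReal.ofReal r ^ q = ∫⁻ r in Set.Ioi (0 : ℝ), ENNReal.ofReal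
        (2 * (r ^ ((q : ℝ) + 1) * Real.exp (-r ^ (2 : ℝ)))) := by
    refine setLIntegral_congr_fun measurableSet_Ioi fun r hr => ?_
    have hr' : 0 < r := hr
    rw [← ENNReal.ofReal_pow hr'.le, ← ENNReal.ofReal_mul (by positivity),
      Real.rpow_add_one hr'.ne', Real.rpow_natCast, Real.rpow_two]
    congr 1; ring
  have hq : (-1 : ℝ) < (q : ℝ) + 1 := by
    have : (0 : ℝ) ≤ q := by positivity
    linarith
  have h_integ := (integrableOn_rpow_mul_exp_neg_rpow hq two_pos).const_mul 2
  rw [h1, ← ofReal_integral_eq_lintegral_ofReal h_integ, integral_const_mul,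
    integral_rpow_mul_exp_neg_rpow two_pos hq]
  · congr 1
    rw [← mul_assoc]
    norm_num
    congr 1; ring
  · refine (ae_restrict_iff' measurableSet_Ioi).2 (Filter.Eventually.of_forall fun r hr => ?_)
    have hr' : 0 < r := hr
    simp only [Pi.zero_apply]
    positivity

theorem gd_eq {m : ℕ} (x : Fin m → ℝ) : gd x = ∫⁻ r in Set.Ioi (0 : ℝ),
    ENNReal.ofReal (2 * r * Real.exp (-r ^ 2)) * (qball m r).indicator 1 x := by
  have hs : 0 ≤ ∑ i, x i ^ 2 := Finset.sum_nonneg fun i _ => sq_nonneg _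
  have h := layer_exp (Real.sqrt_nonneg (∑ i, x i ^ 2))
  rw [Real.sq_sqrt hs] at h
  rw [gd, ← h, ← lintegral_indicator measurableSet_Ioi, ← lintegral_indicator measurableSet_Ioi]
  congr 1
  ext r
  by_cases h1 : √(∑ i, x i ^ 2) < r
  · have h0 : 0 < r := lt_of_le_of_lt (Real.sqrt_nonneg _) h1
    have h2 : x ∈ qball m r := (Real.sqrt_lt' h0).1 h1
    simp [Set.indicator_apply, h1, h0, h2]
  · by_cases h0 : 0 < r
    · have h2 : x ∉ qball m r := fun h => h1 ((Real.sqrt_lt' h0).2 h)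
      simp [Set.indicator_apply, h1, h2]
    · simp [Set.indicator_apply, h1, h0]

theorem gauss_hom {m p : ℕ} {F : (Fin m → ℝ) → ℝ≥0∞} (hF : Measurable F)
    (hom : ∀ (t : ℝ) x, 0 < t → F (t • x) = ENNReal.ofReal t ^ p * F x) :
    ∫⁻ x, gd x * F x = ENNReal.ofReal (Real.Gamma (((m + p : ℕ) : ℝ) / 2 + 1)) *
      ∫⁻ x in qball m 1, F x := by
  have hms : MeasurableSet {q : (Fin m → ℝ) × ℝ | q.1 ∈ qball m q.2} := by
    show MeasurableSet {q : (Fin m → ℝ) × ℝ | ∑ i, q.1 i ^ 2 < q.2 ^ 2}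
    exact measurableSet_lt (by fun_prop) (by fun_prop)
  have hmi : Measurable (fun q : (Fin m → ℝ) × ℝ => (qball m q.2).indicator (1 : (Fin m → ℝ) → ℝ≥0∞) q.1) := by
    have : (fun q : (Fin m → ℝ) × ℝ => (qball m q.2).indicator (1 : (Fin m → ℝ) → ℝ≥0∞) q.1) =
      {q : (Fin m → ℝ) × ℝ | q.1 ∈ qball m q.2}.indicator 1 := by
      ext q; rfl
    rw [this]; exact measurable_one.indicator hms
  have hm2 : Measurable (fun q : (Fin m → ℝ) × ℝ => ENNReal.ofReal (2 * q.2 * Real.exp (-q.2 ^ 2)) *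
      (qball m q.2).indicator (1 : (Fin m → ℝ) → ℝ≥0∞) q.1) := by
    exact Measurable.mul (by fun_prop) hmi
  calc ∫⁻ x, gd x * F x = ∫⁻ x, ∫⁻ r in Set.Ioi (0 : ℝ), ENNReal.ofReal (2 * r * Real.exp (-r ^ 2)) *
        (qball m r).indicator 1 x * F x := by
        congr 1; ext x
        rw [gd_eq, lintegral_mul_const]
        exact hm2.comp (measurable_const.prodMk measurable_id)
    _ = ∫⁻ r in Set.Ioi (0 : ℝ), ∫⁻ x, ENNReal.ofReal (2 * r * Real.exp (-r ^ 2)) *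
        (qball m r).indicator 1 x * F x := by
        rw [lintegral_lintegral_swap]
        exact (hm2.mul (hF.comp measurable_fst)).aemeasurable
    _ = ∫⁻ r in Set.Ioi (0 : ℝ), (ENNReal.ofReal (2 * r * Real.exp (-r ^ 2)) * ENNReal.ofReal r ^ (m + p)) *
        ∫⁻ x in qball m 1, F x := by
        refine setLIntegral_congr_fun measurableSet_Ioi fun r hr => ?_
        rw [mul_assoc (ENNReal.ofReal (2 * r * Real.exp (-r ^ 2))) (ENNReal.ofReal r ^ (m + p)),
          ← lintegral_qball_scale hF hom hr, ← lintegral_indicator (measurableSet_qball m r),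
          ← lintegral_const_mul _ (hF.indicator (measurableSet_qball m r))]
        congr 1; ext x
        by_cases hx : x ∈ qball m r <;> simp [hx]
    _ = _ := by
        rw [lintegral_mul_const _ (by fun_prop), gamma_lint]

theorem gauss_one : ∫⁻ s : ℝ, ENNReal.ofReal (Real.exp (-s ^ 2)) = ENNReal.ofReal √π := by
  have h := integral_gaussian 1
  have h2 := integrable_exp_neg_mul_sq one_pos
  simp only [neg_mul, one_mul, div_one] at h h2
  rw [← ofReal_integral_eq_lintegral_ofReal h2, h]
  exact Filter.Eventually.of_forall fun x => (Real.exp_pos _).le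

theorem gd_glue {d : ℕ} (s : ℝ) (y : Fin d → ℝ) :
    gd (glue s y) = ENNReal.ofReal (Real.exp (-s ^ 2)) * gd y := by
  unfold gd
  rw [← ENNReal.ofReal_mul (Real.exp_pos _).le, ← Real.exp_add, Fin.sum_univ_succ]
  simp only [glue_zero, glue_succ]
  congr 2; ring

theorem gauss_total (m : ℕ) : ∫⁻ x : Fin m → ℝ, gd x = ENNReal.ofReal √π ^ m := by
  induction m with
  | zero => simp [gd, volume_pi, Measure.pi_of_empty]
  | succ d ih =>
    have hm : Measurable (fun a : ℝ × (Fin d → ℝ) => gd (glue a.1 a.2)) :=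
      measurable_gd.comp (mp_glue d).measurable
    rw [← (mp_glue d).lintegral_comp measurable_gd, Measure.volume_eq_prod,
      lintegral_prod _ hm.aemeasurable]
    simp only [gd_glue]
    simp_rw [lintegral_const_mul _ measurable_gd, ih]
    rw [lintegral_mul_const _ (by fun_prop), gauss_one, pow_succ, mul_comm]

theorem volume_qball_one (m : ℕ) : ENNReal.ofReal (Real.Gamma ((m : ℝ) / 2 + 1)) * volume (qball m 1) =
    ENNReal.ofReal √π ^ m := by
  have h := gauss_hom (m := m) (p := 0) (F := fun _ => 1) measurable_const (by simp)
  simp only [mul_one, add_zero, lintegral_one, Measure.restrict_apply_univ] at h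
  rw [gauss_total] at h
  exact h.symm

/-- first moment of the unit ball -/
theorem moment_qball (m : ℕ) : ((m : ℝ≥0∞) + 1) * ∫⁻ x in qball m 1, ENNReal.ofReal √(∑ i, x i ^ 2) =
    m * volume (qball m 1) := by
  set κ := volume (qball m 1) with hκ
  have hκt : κ ≠ ∞ := (volume_qball_lt_top _ _ zero_le_one).ne
  set T := ∫⁻ x in qball m 1, ENNReal.ofReal √(∑ i, x i ^ 2) with hT
  have hmeasT : Measurable (fun x : Fin m → ℝ => ENNReal.ofReal √(∑ i, x i ^ 2)) := by fun_prop
  have h1 : ∫⁻ x in qball m 1, ENNReal.ofReal (1 - √(∑ i, x i ^ 2)) =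
      ∫⁻ x in qball m 1, ∫⁻ s in Set.Ioo (0 : ℝ) 1, (qball m s).indicator 1 x := by
    refine setLIntegral_congr_fun (measurableSet_qball m 1) fun x hx => ?_
    have hs := Real.sqrt_nonneg (∑ i, x i ^ 2)
    rw [← Real.volume_Ioo, ← lintegral_indicator measurableSet_Ioo, ← setLIntegral_one,
      ← lintegral_indicator measurableSet_Ioo]
    congr 1; ext s
    by_cases h1 : √(∑ i, x i ^ 2) < s
    · have h0 : 0 < s := lt_of_le_of_lt (Real.sqrt_nonneg _) h1
      have h2 : x ∈ qball m s := (Real.sqrt_lt' h0).1 h1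
      simp [Set.indicator_apply, h1, h0, h2]
    · by_cases h0 : 0 < s
      · have h2 : x ∉ qball m s := fun h => h1 ((Real.sqrt_lt' h0).2 h)
        simp [Set.indicator_apply, h1, h2]
      · simp [Set.indicator_apply, h1, h0]
  have hms : MeasurableSet {q : (Fin m → ℝ) × ℝ | q.1 ∈ qball m q.2} := by
    show MeasurableSet {q : (Fin m → ℝ) × ℝ | ∑ i, q.1 i ^ 2 < q.2 ^ 2}
    exact measurableSet_lt (by fun_prop) (by fun_prop)
  have hmi : Measurable (fun q : (Fin m → ℝ) × ℝ => (qball m q.2).indicator (1 : (Fin m → ℝ) → ℝ≥0∞) q.1) := by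
    have : (fun q : (Fin m → ℝ) × ℝ => (qball m q.2).indicator (1 : (Fin m → ℝ) → ℝ≥0∞) q.1) =
      {q : (Fin m → ℝ) × ℝ | q.1 ∈ qball m q.2}.indicator 1 := by
      ext q; rfl
    rw [this]; exact measurable_one.indicator hms
  have h2 : ∫⁻ x in qball m 1, ∫⁻ s in Set.Ioo (0 : ℝ) 1, (qball m s).indicator (1 : (Fin m → ℝ) → ℝ≥0∞) x =
      ∫⁻ s in Set.Ioo (0 : ℝ) 1, ENNReal.ofReal (s ^ m) * κ := by
    rw [lintegral_lintegral_swap hmi.aemeasurable]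
    refine setLIntegral_congr_fun measurableSet_Ioo fun s hs => ?_
    rw [lintegral_indicator_one (measurableSet_qball m s), Measure.restrict_apply (measurableSet_qball m s),
      Set.inter_eq_self_of_subset_left (qball_subset hs.1.le hs.2.le), volume_qball hs.1,
      ENNReal.ofReal_pow hs.1.le]
  have h3 : ∫⁻ s in Set.Ioo (0 : ℝ) 1, ENNReal.ofReal (s ^ m) = ((m : ℝ≥0∞) + 1)⁻¹ := by
    rw [← ofReal_integral_eq_lintegral_ofReal]
    · rw [← integral_Ioc_eq_integral_Ioo, ← intervalIntegral.integral_of_le zero_le_one, integral_pow]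
      simp only [one_pow, ne_eq, Nat.add_eq_zero_iff, one_ne_zero, and_false, not_false_eq_true,
        zero_pow, sub_zero, one_div]
      rw [ENNReal.ofReal_inv_of_pos (by positivity)]
      congr 1
      rw [ENNReal.ofReal_add (by positivity) (by positivity)]
      simp
    · exact ((continuous_pow m).integrableOn_Icc (a := 0) (b := 1)).mono_set Set.Ioo_subset_Icc_self
    · refine (ae_restrict_iff' measurableSet_Ioo).2 (Filter.Eventually.of_forall fun r hr => ?_)
      have : 0 < r := hr.1
      simp only [Pi.zero_apply]
      positivity
  have h4 : T + ((m : ℝ≥0∞) + 1)⁻¹ * κ = κ := by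
    rw [← h3, ← lintegral_mul_const _ (by fun_prop), ← h2, ← h1, hT, ← lintegral_add_left hmeasT]
    rw [hκ, ← setLIntegral_one]
    refine setLIntegral_congr_fun (measurableSet_qball m 1) fun x hx => ?_
    have hx' := mem_qball.1 hx
    have : √(∑ i, x i ^ 2) ≤ 1 := by
      rw [Real.sqrt_le_left zero_le_one]; linarith
    rw [← ENNReal.ofReal_add (Real.sqrt_nonneg _) (by linarith)]
    simp
  have h5 : ((m : ℝ≥0∞) + 1) * T + κ = m * κ + κ := by
    calc ((m : ℝ≥0∞) + 1) * T + κ = ((m : ℝ≥0∞) + 1) * (T + ((m : ℝ≥0∞) + 1)⁻¹ * κ) := by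
          rw [mul_add, ← mul_assoc, ENNReal.mul_inv_cancel (by simp)
            (by exact ENNReal.add_ne_top.2 ⟨ENNReal.natCast_ne_top m, ENNReal.one_ne_top⟩), one_mul]
      _ = _ := by rw [h4]; ring
  exact (ENNReal.add_left_inj hκt).1 h5

theorem mp_cons {E : Type*} [MeasureSpace E] [SigmaFinite (volume : Measure E)] (k : ℕ) :
    MeasurePreserving (fun p : E × (Fin k → E) => (Fin.cons p.1 p.2 : Fin (k + 1) → E)) := by
  have h := (volume_preserving_piFinSuccAbove (fun _ : Fin (k + 1) => E) 0).symm
  convert h using 1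
  ext p i
  simp [MeasurableEquiv.piFinSuccAbove_symm_apply, Fin.insertNthEquiv]

theorem lint_split {E : Type*} [MeasureSpace E] [SigmaFinite (volume : Measure E)] (k : ℕ)
    {w : E → ℝ≥0∞} (hw : Measurable w) {F : (Fin (k + 1) → E) → ℝ≥0∞} (hF : Measurable F) :
    ∫⁻ x : Fin (k + 1) → E, (∏ i, w (x i)) * F x =
      ∫⁻ x0, w x0 * ∫⁻ xs : Fin k → E, (∏ i, w (xs i)) * F (Fin.cons x0 xs) := by
  have hc := (mp_cons (E := E) k).measurable
  have hm : Measurable (fun x : Fin (k + 1) → E => (∏ i, w (x i)) * F x) := by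
    refine Measurable.mul ?_ hF
    exact Finset.measurable_prod _ fun i _ => hw.comp (measurable_pi_apply i)
  have hm2 : Measurable (fun p : E × (Fin k → E) => (∏ i, w ((Fin.cons p.1 p.2 : Fin (k + 1) → E) i)) *
      F (Fin.cons p.1 p.2)) := hm.comp hc
  have hF2 : Measurable (fun p : E × (Fin k → E) => F (Fin.cons p.1 p.2)) := hF.comp hc
  rw [← (mp_cons (E := E) k).lintegral_comp hm, Measure.volume_eq_prod, lintegral_prod _ hm2.aemeasurable]
  congr 1; ext x0
  rw [← lintegral_const_mul]
  · congr 1; ext xs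
    rw [Fin.prod_univ_succ]
    simp only [Fin.cons_zero, Fin.cons_succ, mul_assoc]
  · refine Measurable.mul ?_ (hF2.comp (measurable_const.prodMk measurable_id))
    exact Finset.measurable_prod _ fun i _ => hw.comp (measurable_pi_apply i)

theorem measurable_inner_split {E : Type*} [MeasureSpace E] [SigmaFinite (volume : Measure E)] (k : ℕ)
    {w : E → ℝ≥0∞} (hw : Measurable w) {F : (Fin (k + 1) → E) → ℝ≥0∞} (hF : Measurable F) :
    Measurable (fun x0 => ∫⁻ xs : Fin k → E, (∏ i, w (xs i)) * F (Fin.cons x0 xs)) := by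
  have hc := (mp_cons (E := E) k).measurable
  have hF2 : Measurable (fun p : E × (Fin k → E) => F (Fin.cons p.1 p.2)) := hF.comp hc
  refine Measurable.lintegral_prod_right' (f := fun p : E × (Fin k → E) =>
    (∏ i, w (p.2 i)) * F (Fin.cons p.1 p.2)) ?_
  refine Measurable.mul ?_ hF2
  exact Finset.measurable_prod _ fun i _ => hw.comp ((measurable_pi_apply i).comp measurable_snd)

/-- change of variables in each factor -/
theorem lift_pi {E E' : Type*} [MeasureSpace E] [SigmaFinite (volume : Measure E)]
    [MeasureSpace E'] [SigmaFinite (volume : Measure E')] {T : E' → E} (hT : Measurable T)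
    {w : E → ℝ≥0∞} (hw : Measurable w) {v : E' → ℝ≥0∞} (hv : Measurable v)
    (h : ∀ F : E → ℝ≥0∞, Measurable F → ∫⁻ x, w x * F x = ∫⁻ z, v z * F (T z)) (k : ℕ) :
    ∀ F : (Fin k → E) → ℝ≥0∞, Measurable F →
      ∫⁻ x, (∏ i, w (x i)) * F x = ∫⁻ z : Fin k → E', (∏ i, v (z i)) * F (fun i => T (z i)) := by
  induction k with
  | zero =>
    intro F hF
    simp only [volume_pi, Finset.univ_eq_empty, Finset.prod_empty, one_mul]
    rw [Measure.pi_of_empty, Measure.pi_of_empty, lintegral_dirac, lintegral_dirac]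
    exact congrArg F (Subsingleton.elim _ _)
  | succ k ih =>
    intro F hF
    have hT2 : Measurable (fun z : Fin (k + 1) → E' => F (fun i => T (z i))) :=
      hF.comp (measurable_pi_lambda _ fun i => hT.comp (measurable_pi_apply i))
    rw [lint_split k hw hF, lint_split k hv hT2, h _ (measurable_inner_split k hw hF)]
    congr 1; ext z0
    congr 1
    rw [ih (fun xs => F (Fin.cons (T z0) xs)) (hF.comp ((mp_cons k).measurable.comp
      (measurable_const.prodMk measurable_id)))]
    congr 1; ext zs
    congr 2; ext i
    refine Fin.cases ?_ (fun j => ?_) i <;> simp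

theorem gauss_pi (m k : ℕ) : ∀ F : (Fin k → Fin m → ℝ) → ℝ≥0∞, Measurable F →
    (∀ (i : Fin k) (t : ℝ) (x : Fin k → Fin m → ℝ), 0 < t →
      F (Function.update x i (t • x i)) = ENNReal.ofReal t * F x) →
    ∫⁻ x, (∏ i, gd (x i)) * F x = ENNReal.ofReal (Real.Gamma (((m + 1 : ℕ) : ℝ) / 2 + 1)) ^ k *
      ∫⁻ x, (∏ i, (qball m 1).indicator 1 (x i)) * F x := by
  have hB : Measurable ((qball m 1).indicator (1 : (Fin m → ℝ) → ℝ≥0∞)) :=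
    measurable_one.indicator (measurableSet_qball m 1)
  induction k with
  | zero =>
    intro F hF _
    simp
  | succ k ih =>
    intro F hF hom
    have hin := measurable_inner_split k hB hF
    rw [lint_split k measurable_gd hF, lint_split k hB hF]
    have h1 : ∀ x0, ∫⁻ xs : Fin k → Fin m → ℝ, (∏ i, gd (xs i)) * F (Fin.cons x0 xs) =
        ENNReal.ofReal (Real.Gamma (((m + 1 : ℕ) : ℝ) / 2 + 1)) ^ k *
          ∫⁻ x : Fin k → Fin m → ℝ, (∏ i, (qball m 1).indicator 1 (x i)) * F (Fin.cons x0 x) := by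
      intro x0
      refine ih (fun xs => F (Fin.cons x0 xs)) (hF.comp ((mp_cons k).measurable.comp
        (measurable_const.prodMk measurable_id))) ?_
      intro i t x ht
      rw [← hom i.succ t _ ht, Fin.cons_succ, Fin.cons_update]
    simp_rw [h1, mul_left_comm (gd _)]
    have hmm : Measurable (fun x0 => gd x0 * ∫⁻ xs : Fin k → Fin m → ℝ,
      (∏ i, (qball m 1).indicator 1 (xs i)) * F (Fin.cons x0 xs)) := measurable_gd.mul hin
    rw [lintegral_const_mul _ hmm, gauss_hom (p := 1) hin, pow_succ, mul_assoc]
    · congr 2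
      rw [← lintegral_indicator (measurableSet_qball m 1)]
      congr 1; ext x
      by_cases hx : x ∈ qball m 1 <;> simp [hx]
    · intro t x ht
      rw [pow_one, ← lintegral_const_mul]
      · congr 1; ext xs
        have := hom 0 t (Fin.cons x xs) ht
        rw [Fin.cons_zero, Fin.update_cons_zero] at this
        rw [this, mul_left_comm]
      · refine Measurable.mul ?_ ((hF.comp (mp_cons k).measurable).comp (measurable_const.prodMk measurable_id))
        exact Finset.measurable_prod _ fun i _ => hB.comp (measurable_pi_apply i)

/-- Gaussian determinant moment -/
def gm (m : ℕ) : ℝ≥0∞ := ∫⁻ x : Fin m → Fin m → ℝ, (∏ i, gd (x i)) * ‖(Matrix.of x).det‖ₑ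

theorem gm_phi (m : ℕ) : gm m = ENNReal.ofReal (Real.Gamma (((m + 1 : ℕ) : ℝ) / 2 + 1)) ^ m *
    phi m (qball m 1) := by
  rw [gm, gauss_pi m m _ measurable_det, phi_eq_set, ← lintegral_indicator
    (MeasurableSet.univ_pi fun _ => measurableSet_qball m 1)]
  · congr 2; ext x
    by_cases hx : x ∈ Set.univ.pi (fun _ : Fin m => qball m 1)
    · rw [Set.indicator_of_mem hx]
      have : ∏ i, (qball m 1).indicator (1 : (Fin m → ℝ) → ℝ≥0∞) (x i) = 1 :=
        Finset.prod_eq_one fun i _ => by rw [Set.indicator_of_mem (hx i (Set.mem_univ i))]; rfl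
      rw [this, one_mul]
    · rw [Set.indicator_of_notMem hx]
      simp only [Set.mem_univ_pi, not_forall] at hx
      obtain ⟨i, hi⟩ := hx
      rw [Finset.prod_eq_zero (Finset.mem_univ i) (Set.indicator_of_notMem hi _), zero_mul]
  · intro i t x ht
    have := Matrix.det_updateRow_smul (Matrix.of x) i t (x i)
    have h2 : (Matrix.of x).updateRow i (x i) = Matrix.of x := Matrix.updateRow_eq_self _ i
    rw [h2] at this
    have h3 : Matrix.of (Function.update x i (t • x i)) = (Matrix.of x).updateRow i (t • x i) := rfl
    rw [h3, this, enorm_mul, Real.enorm_eq_ofReal_abs, abs_of_pos ht]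

theorem gm_zero : gm 0 = 1 := by simp [gm, volume_pi]

theorem prod_gauss (d : ℕ) : ∫⁻ s : Fin d → ℝ, ∏ i, ENNReal.ofReal (Real.exp (-s i ^ 2)) =
    ENNReal.ofReal √π ^ d := by
  rw [← gauss_total]
  congr 1; ext s
  rw [gd, ← Finset.sum_neg_distrib, Real.exp_sum, ENNReal.ofReal_prod_of_nonneg]
  intro i _; positivity

theorem inner_rec {d : ℕ} (x0 : Fin (d + 1) → ℝ) :
    ∫⁻ xs : Fin d → Fin (d + 1) → ℝ, (∏ i, gd (xs i)) *
      ‖(Matrix.of (Fin.cons x0 xs : Fin (d + 1) → Fin (d + 1) → ℝ)).det‖ₑ =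
    ENNReal.ofReal √(∑ i, x0 i ^ 2) * (ENNReal.ofReal √π ^ d * gm d) := by
  obtain ⟨M, hM, hs, hw⟩ := exists_rot x0
  obtain ⟨hdet, hmp⟩ := mp_rot hM
  have hmpi : MeasurePreserving (fun (z : Fin d → Fin (d + 1) → ℝ) i => M.mulVec (z i)) :=
    measurePreserving_pi (fun _ => volume) (fun _ => volume) (fun _ => hmp)
  have hm1 : Measurable (fun xs : Fin d → Fin (d + 1) → ℝ => (∏ i, gd (xs i)) *
      ‖(Matrix.of (Fin.cons x0 xs : Fin (d + 1) → Fin (d + 1) → ℝ)).det‖ₑ) := by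
    refine Measurable.mul ?_ ?_
    · exact Finset.measurable_prod _ fun i _ => measurable_gd.comp (measurable_pi_apply i)
    · exact measurable_det.comp ((mp_cons d).measurable.comp (measurable_const.prodMk measurable_id))
  have key : ∀ z : Fin d → Fin (d + 1) → ℝ,
      ‖(Matrix.of (Fin.cons x0 (fun i => M.mulVec (z i)) : Fin (d + 1) → Fin (d + 1) → ℝ)).det‖ₑ =
      ENNReal.ofReal √(∑ i, x0 i ^ 2) * ‖(Matrix.of (fun (i j : Fin d) => z i j.succ)).det‖ₑ := by
    intro z
    set l := √(∑ i, x0 i ^ 2)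
    have h1 : Matrix.of (Fin.cons x0 (fun i => M.mulVec (z i)) : Fin (d + 1) → Fin (d + 1) → ℝ) =
        Matrix.of (Fin.cons (glue l 0) z : Fin (d + 1) → Fin (d + 1) → ℝ) * M.transpose := by
      have h0 : x0 = M.mulVec (glue l 0) := by
        rw [← hw, Matrix.mulVec_mulVec, hM, Matrix.one_mulVec]
      ext i j
      rw [Matrix.mul_apply]
      refine Fin.cases ?_ (fun i => ?_) i
      · simp only [Matrix.of_apply, Fin.cons_zero, Matrix.transpose_apply]
        conv_lhs => rw [h0]
        rw [Matrix.mulVec, dotProduct]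
        exact Finset.sum_congr rfl fun _ _ => mul_comm _ _
      · simp only [Matrix.of_apply, Fin.cons_succ, Matrix.transpose_apply]
        rw [Matrix.mulVec, dotProduct]
        exact Finset.sum_congr rfl fun _ _ => mul_comm _ _
    have h2 : (Matrix.of (Fin.cons (glue l 0) z : Fin (d + 1) → Fin (d + 1) → ℝ)).det =
        l * (Matrix.of (fun (i j : Fin d) => z i j.succ)).det := by
      rw [Matrix.det_succ_row_zero, Fin.sum_univ_succ]
      simp
      left
      congr 1
    rw [h1, Matrix.det_mul, Matrix.det_transpose, enorm_mul, h2, enorm_mul,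
      Real.enorm_eq_ofReal_abs l, Real.enorm_eq_ofReal_abs M.det, hdet, abs_of_nonneg (Real.sqrt_nonneg _),
      ENNReal.ofReal_one, mul_one]
  have hgd : ∀ y, gd (M.mulVec y) = gd y := fun y => by rw [gd, hs, gd]
  rw [← hmpi.lintegral_comp hm1]
  simp only [key, hgd]
  have hm3 : Measurable (fun z : Fin d → Fin (d + 1) → ℝ => ‖(Matrix.of (fun (i j : Fin d) => z i j.succ)).det‖ₑ) := by
    refine measurable_det.comp (f := fun (z : Fin d → Fin (d + 1) → ℝ) (i j : Fin d) => z i j.succ) ?_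
    fun_prop
  have hm4 : Measurable (fun z : Fin d → Fin (d + 1) → ℝ => (∏ i, gd (z i)) *
      ‖(Matrix.of (fun (i j : Fin d) => z i j.succ)).det‖ₑ) := by
    refine Measurable.mul ?_ hm3
    exact Finset.measurable_prod _ fun i _ => measurable_gd.comp (measurable_pi_apply i)
  simp_rw [mul_left_comm _ (ENNReal.ofReal √(∑ i, x0 i ^ 2))]
  rw [lintegral_const_mul _ hm4]
  congr 1
  rw [← (mp_glue_pi d d).lintegral_comp hm4, Measure.volume_eq_prod]
  have hA : Measurable (fun s : Fin d → ℝ => ∏ i, ENNReal.ofReal (Real.exp (-s i ^ 2))) := by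
    exact Finset.measurable_prod _ fun i _ => by fun_prop
  have hB : Measurable (fun y : Fin d → Fin d → ℝ => (∏ i, gd (y i)) * ‖(Matrix.of y).det‖ₑ) := by
    refine Measurable.mul ?_ measurable_det
    exact Finset.measurable_prod _ fun i _ => measurable_gd.comp (measurable_pi_apply i)
  rw [← prod_gauss, gm, ← lintegral_prod_mul hA.aemeasurable hB.aemeasurable]
  congr 1; ext p
  simp only [gd_glue, Finset.prod_mul_distrib, glue_succ, mul_assoc]

theorem gm_succ (d : ℕ) : gm (d + 1) = (∫⁻ x : Fin (d + 1) → ℝ, gd x * ENNReal.ofReal √(∑ i, x i ^ 2)) *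
    (ENNReal.ofReal √π ^ d * gm d) := by
  rw [gm, lint_split d measurable_gd measurable_det]
  simp_rw [inner_rec, ← mul_assoc]
  rw [lintegral_mul_const _, lintegral_mul_const]
  · exact measurable_gd.mul (by fun_prop)
  · exact (measurable_gd.mul (by fun_prop)).mul_const _

theorem Gamma_half_pos (m : ℕ) (hm : 0 < m) : 0 < Real.Gamma ((m : ℝ) / 2) :=
  Real.Gamma_pos_of_pos (by positivity)

theorem ofReal_Gamma_succ (m : ℕ) (hm : 0 < m) : ENNReal.ofReal (Real.Gamma ((m : ℝ) / 2 + 1)) =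
    ENNReal.ofReal ((m : ℝ) / 2) * ENNReal.ofReal (Real.Gamma ((m : ℝ) / 2)) := by
  rw [Real.Gamma_add_one (by positivity), ENNReal.ofReal_mul (by positivity)]

theorem gauss_norm (d : ℕ) : ENNReal.ofReal (Real.Gamma (((d + 1 : ℕ) : ℝ) / 2)) *
    ∫⁻ x : Fin (d + 1) → ℝ, gd x * ENNReal.ofReal √(∑ i, x i ^ 2) =
    ENNReal.ofReal √π ^ (d + 1) * ENNReal.ofReal (Real.Gamma (((d + 2 : ℕ) : ℝ) / 2)) := by
  have h1 := gauss_hom (m := d + 1) (p := 1) (F := fun x => ENNReal.ofReal √(∑ i, x i ^ 2)) (by fun_prop) (by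
    intro t x ht
    simp only [Pi.smul_apply, smul_eq_mul, mul_pow, ← Finset.mul_sum, pow_one]
    rw [Real.sqrt_mul (by positivity), Real.sqrt_sq ht.le, ENNReal.ofReal_mul ht.le])
  have h2 := moment_qball (d + 1)
  have h3 := volume_qball_one (d + 1)
  rw [ofReal_Gamma_succ _ (by omega)] at h1 h3
  set T := ∫⁻ x in qball (d + 1) 1, ENNReal.ofReal √(∑ i, x i ^ 2)
  set g1 := ENNReal.ofReal (Real.Gamma (((d + 1 : ℕ) : ℝ) / 2))
  set g2 := ENNReal.ofReal (Real.Gamma (((d + 2 : ℕ) : ℝ) / 2))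
  have e1 : ENNReal.ofReal (((d + 1 + 1 : ℕ) : ℝ) / 2) * 2 = ((d + 1 : ℕ) : ℝ≥0∞) + 1 := by
    rw [show (2 : ℝ≥0∞) = ENNReal.ofReal 2 by simp, ← ENNReal.ofReal_mul (by positivity),
      div_mul_cancel₀ _ two_ne_zero, ENNReal.ofReal_natCast]
    push_cast; rfl
  have e2 : ENNReal.ofReal (((d + 1 : ℕ) : ℝ) / 2) * 2 = ((d + 1 : ℕ) : ℝ≥0∞) := by
    rw [show (2 : ℝ≥0∞) = ENNReal.ofReal 2 by simp, ← ENNReal.ofReal_mul (by positivity),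
      div_mul_cancel₀ _ two_ne_zero, ENNReal.ofReal_natCast]
  rw [← (ENNReal.mul_right_inj (a := 2) (by simp) (by simp)), h1, ← h3]
  rw [← e1, ← e2] at h2
  calc 2 * (g1 * (ENNReal.ofReal (((d + 1 + 1 : ℕ) : ℝ) / 2) * g2 * T)) =
      g1 * g2 * (ENNReal.ofReal (((d + 1 + 1 : ℕ) : ℝ) / 2) * 2 * T) := by ring
    _ = _ := by rw [h2]; ring

theorem gm_eq (d : ℕ) : gm (d + 1) = ENNReal.ofReal √π ^ (d ^ 2 + 2 * d) *
    ENNReal.ofReal (Real.Gamma (((d + 2 : ℕ) : ℝ) / 2)) := by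
  have hpos : ∀ d : ℕ, ENNReal.ofReal (Real.Gamma (((d + 1 : ℕ) : ℝ) / 2)) ≠ 0 := fun d => by
    simpa using Gamma_half_pos (d + 1) (by omega)
  induction d with
  | zero =>
    have h := gauss_norm 0
    rw [← (ENNReal.mul_right_inj (hpos 0) ENNReal.ofReal_ne_top), gm_succ, gm_zero]
    rw [pow_zero, one_mul, mul_one, h]
    have hg := Real.Gamma_one_half_eq
    rw [one_div] at hg
    simp [hg]
  | succ d ih =>
    have h := gauss_norm (d + 1)
    rw [← (ENNReal.mul_right_inj (hpos (d + 1)) ENNReal.ofReal_ne_top), gm_succ, ih, ← mul_assoc, h]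
    ring

theorem phi_final {d : ℕ} {K : Set (Fin (d + 1) → ℝ)} (hK : MeasurableSet K) :
    ENNReal.ofReal (Real.Gamma (((d + 1 : ℕ) : ℝ) / 2)) ^ (d + 2) *
      (ENNReal.ofReal (((d + 1 : ℕ) : ℝ) / 2) * volume K) ^ (d + 2) ≤
    ENNReal.ofReal √π ^ (d + 2) * ENNReal.ofReal (Real.Gamma (((d + 2 : ℕ) : ℝ) / 2)) ^ d *
      (ENNReal.ofReal (((d + 2 : ℕ) : ℝ) / 2) ^ (d + 1) * phi (d + 1) K) := by
  have h := phi_ineq hK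
  have h1 := gm_eq d
  have h2 := volume_qball_one (d + 1)
  rw [gm_phi, ofReal_Gamma_succ _ (by omega)] at h1
  rw [ofReal_Gamma_succ _ (by omega)] at h2
  set κ := volume (qball (d + 1) 1)
  set b := phi (d + 1) (qball (d + 1) 1)
  have hg : ENNReal.ofReal (Real.Gamma (((d + 2 : ℕ) : ℝ) / 2)) ≠ 0 := by
    simpa using Gamma_half_pos (d + 2) (by omega)
  have hgt : ENNReal.ofReal (Real.Gamma (((d + 2 : ℕ) : ℝ) / 2)) ≠ ∞ := ENNReal.ofReal_ne_top
  have hp : ENNReal.ofReal √π ≠ 0 := by simp [Real.pi_pos]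
  have hpt : ENNReal.ofReal √π ≠ ∞ := ENNReal.ofReal_ne_top
  set g1 := ENNReal.ofReal (Real.Gamma (((d + 1 : ℕ) : ℝ) / 2))
  set g2 := ENNReal.ofReal (Real.Gamma (((d + 2 : ℕ) : ℝ) / 2))
  set c1 := ENNReal.ofReal (((d + 1 : ℕ) : ℝ) / 2)
  set c2 := ENNReal.ofReal (((d + 2 : ℕ) : ℝ) / 2)
  set p := ENNReal.ofReal √π
  change (c2 * g2) ^ (d + 1) * b = p ^ (d ^ 2 + 2 * d) * g2 at h1
  have hne : p ^ (d ^ 2 + 2 * d) * g2 ≠ 0 := mul_ne_zero (pow_ne_zero _ hp) hg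
  have hnt : p ^ (d ^ 2 + 2 * d) * g2 ≠ ∞ := ENNReal.mul_ne_top (ENNReal.pow_ne_top hpt) hgt
  rw [← ENNReal.mul_le_mul_iff_right hne hnt]
  calc p ^ (d ^ 2 + 2 * d) * g2 * (g1 ^ (d + 2) * (c1 * volume K) ^ (d + 2))
      = ((c2 * g2) ^ (d + 1) * (c1 * g1) ^ (d + 2)) * (b * volume K ^ (d + 2)) := by
        rw [← h1]; ring
    _ ≤ ((c2 * g2) ^ (d + 1) * (c1 * g1) ^ (d + 2)) * (κ ^ (d + 2) * phi (d + 1) K) := by gcongr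
    _ = (c2 * g2) ^ (d + 1) * (c1 * g1 * κ) ^ (d + 2) * phi (d + 1) K := by ring
    _ = _ := by rw [h2]; ring

theorem lint_even (F : ℝ → ℝ≥0∞) (hF : Measurable F) (he : ∀ r, F (-r) = F r) :
    ∫⁻ r, F r = 2 * ∫⁻ r in Set.Ioi (0 : ℝ), F r := by
  have h1 : ∫⁻ r in Set.Iio (0 : ℝ), F r = ∫⁻ r in Set.Ioi (0 : ℝ), F r := by
    rw [← lintegral_indicator measurableSet_Iio, ← lintegral_indicator measurableSet_Ioi,
      ← (Measure.measurePreserving_neg (volume : Measure ℝ)).lintegral_comp (hF.indicator measurableSet_Iio)]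
    congr 1; ext r
    by_cases hr : 0 < r <;> simp [Set.indicator_apply, hr, he]
  rw [← lintegral_add_compl F measurableSet_Iio (A := Set.Iio (0 : ℝ)), h1, two_mul, Set.compl_Iio,
    setLIntegral_congr (Ioi_ae_eq_Ici (a := (0 : ℝ)))]

theorem radial_int (p q : ℕ) (hq : 0 < q) (H : ℝ≥0∞) :
    ∫⁻ r : ℝ, ENNReal.ofReal |r| ^ p * (if ENNReal.ofReal |r| ^ q < H then 1 else 0) =
      (2 * ((p + 1 : ℕ) : ℝ≥0∞)⁻¹) * H ^ (((p + 1 : ℕ) : ℝ) / q) := by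
  have hs : MeasurableSet {r : ℝ | ENNReal.ofReal |r| ^ q < H} := measurableSet_lt (by fun_prop) measurable_const
  have hq' : (0 : ℝ) < q := by exact_mod_cast hq
  have hm0 : Measurable (fun r : ℝ => ENNReal.ofReal |r| ^ p *
      (if ENNReal.ofReal |r| ^ q < H then (1 : ℝ≥0∞) else 0)) :=
    Measurable.mul (by fun_prop) (Measurable.ite hs measurable_const measurable_const)
  rw [lint_even _ hm0 (fun r => by simp), mul_assoc]
  congr 1
  have h1 : ∫⁻ r in Set.Ioi (0 : ℝ), ENNReal.ofReal |r| ^ p * (if ENNReal.ofReal |r| ^ q < H then 1 else 0) =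
      ∫⁻ r in Set.Ioi (0 : ℝ) ∩ {r : ℝ | ENNReal.ofReal |r| ^ q < H}, ENNReal.ofReal (r ^ p) := by
    rw [Set.inter_comm, ← setLIntegral_indicator hs]
    refine setLIntegral_congr_fun measurableSet_Ioi fun r hr => ?_
    have hr' : 0 < r := hr
    by_cases h : ENNReal.ofReal |r| ^ q < H
    · rw [Set.indicator_of_mem (by exact h), if_pos h, mul_one, abs_of_pos hr', ENNReal.ofReal_pow hr'.le]
    · rw [Set.indicator_of_notMem (by exact h), if_neg h, mul_zero]
  rw [h1]
  rcases eq_or_ne H ∞ with rfl | hH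
  · rw [ENNReal.top_rpow_of_pos (by positivity), ENNReal.mul_top (by simp)]
    rw [eq_top_iff]
    calc (∞ : ℝ≥0∞) = ∫⁻ r in Set.Ioi (1 : ℝ), 1 := by simp
      _ ≤ ∫⁻ r in Set.Ioi (1 : ℝ), ENNReal.ofReal (r ^ p) := by
        refine setLIntegral_mono (by fun_prop) fun r hr => ?_
        have hr' : 1 < r := hr
        rw [ENNReal.one_le_ofReal]
        exact one_le_pow₀ hr'.le
      _ ≤ _ := by
        refine lintegral_mono_set fun r hr => ⟨?_, ?_⟩
        · exact zero_lt_one.trans (show (1 : ℝ) < r from hr)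
        · exact ENNReal.pow_lt_top ENNReal.ofReal_lt_top
  · set ρ := H.toReal ^ (1 / (q : ℝ)) with hρ
    have hρ0 : 0 ≤ ρ := by positivity
    have hHρ : H = ENNReal.ofReal (ρ ^ q) := by
      rw [hρ, ← Real.rpow_natCast, ← Real.rpow_mul ENNReal.toReal_nonneg, one_div,
        inv_mul_cancel₀ hq'.ne', Real.rpow_one, ENNReal.ofReal_toReal hH]
    have hset : Set.Ioi (0 : ℝ) ∩ {r : ℝ | ENNReal.ofReal |r| ^ q < H} = Set.Ioo 0 ρ := by
      ext r
      simp only [Set.mem_inter_iff, Set.mem_Ioi, Set.mem_ofPred_eq, Set.mem_Ioo]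
      refine and_congr_right fun hr => ?_
      rw [hHρ, abs_of_pos hr, ← ENNReal.ofReal_pow hr.le, ENNReal.ofReal_lt_ofReal_iff_of_nonneg (by positivity)]
      exact pow_lt_pow_iff_left₀ hr.le hρ0 hq.ne'
    rw [hset, ← ofReal_integral_eq_lintegral_ofReal]
    · rw [← integral_Ioc_eq_integral_Ioo, ← intervalIntegral.integral_of_le hρ0, integral_pow]
      rw [zero_pow (by omega), sub_zero, div_eq_inv_mul, ENNReal.ofReal_mul (by positivity),
        ENNReal.ofReal_inv_of_pos (by positivity)]
      congr 1
      · congr 1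
        rw [← Nat.cast_add_one, ENNReal.ofReal_natCast]
      · rw [hHρ, ENNReal.ofReal_rpow_of_nonneg (by positivity) (by positivity)]
        congr 1
        rw [← Real.rpow_natCast ρ q, ← Real.rpow_mul hρ0, mul_div_cancel₀ _ hq'.ne', Real.rpow_natCast]
    · exact ((continuous_pow p).integrableOn_Icc (a := 0) (b := ρ)).mono_set Set.Ioo_subset_Icc_self
    · refine (ae_restrict_iff' measurableSet_Ioo).2 (Filter.Eventually.of_forall fun r hr => ?_)
      have : 0 < r := hr.1
      simp only [Pi.zero_apply]
      positivity

theorem lintegral_scale_ne {d : ℕ} {F : (Fin d → ℝ) → ℝ≥0∞} (hF : Measurable F) {r : ℝ} (hr : r ≠ 0) :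
    ∫⁻ x, F x = ENNReal.ofReal |r| ^ d * ∫⁻ x, F (r • x) := by
  have h1 := Measure.map_addHaar_smul (volume : Measure (Fin d → ℝ)) hr
  have h2 := lintegral_map (μ := (volume : Measure (Fin d → ℝ))) hF (measurable_const_smul (α := Fin d → ℝ) r)
  rw [h1, lintegral_smul_measure, abs_inv, abs_pow, ENNReal.ofReal_inv_of_pos (by positivity),
    ENNReal.ofReal_pow (abs_nonneg _), smul_eq_mul, Module.finrank_fin_fun] at h2
  have hne : ENNReal.ofReal |r| ^ d ≠ 0 := by simp [hr]
  have hnt : ENNReal.ofReal |r| ^ d ≠ ∞ := by simp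
  rw [← h2, ← mul_assoc, ENNReal.mul_inv_cancel hne hnt, one_mul]

/-- perspective change of variables -/
theorem lint_persp {d : ℕ} {F : (Fin (d + 1) → ℝ) → ℝ≥0∞} (hF : Measurable F) :
    ∫⁻ x, F x = ∫⁻ z : ℝ × (Fin d → ℝ), ENNReal.ofReal |z.1| ^ d * F (glue z.1 (z.1 • z.2)) := by
  have hm : Measurable (fun p : ℝ × (Fin d → ℝ) => F (glue p.1 p.2)) := hF.comp (mp_glue d).measurable
  have hm2 : Measurable (fun z : ℝ × (Fin d → ℝ) => F (glue z.1 (z.1 • z.2))) :=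
    hF.comp (measurable_glue measurable_fst (measurable_fst.smul measurable_snd))
  have hm3 : Measurable (fun z : ℝ × (Fin d → ℝ) => ENNReal.ofReal |z.1| ^ d * F (glue z.1 (z.1 • z.2))) :=
    Measurable.mul (by fun_prop) hm2
  rw [← (mp_glue d).lintegral_comp hF, Measure.volume_eq_prod, lintegral_prod _ hm.aemeasurable,
    lintegral_prod _ hm3.aemeasurable]
  refine lintegral_congr_ae ?_
  have h0 : ∀ᵐ r : ℝ, r ≠ 0 := Measure.ae_ne volume 0
  filter_upwards [h0] with r hr
  have hm4 : Measurable (fun y : Fin d → ℝ => F (glue r (r • y))) :=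
    hm2.comp (measurable_const.prodMk measurable_id)
  have hm5 : Measurable (fun y : Fin d → ℝ => F (glue r y)) :=
    hm.comp (measurable_const.prodMk measurable_id)
  rw [lintegral_const_mul _ hm4, lintegral_scale_ne hm5 hr]

theorem phi_eq_ind {m : ℕ} {K : Set (Fin m → ℝ)} (hK : MeasurableSet K) :
    phi m K = ∫⁻ x : Fin m → Fin m → ℝ, (∏ i, K.indicator 1 (x i)) * ‖(Matrix.of x).det‖ₑ := by
  rw [phi_eq_set, ← lintegral_indicator (MeasurableSet.univ_pi fun _ => hK)]
  congr 1; ext x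
  by_cases hx : x ∈ Set.univ.pi (fun _ : Fin m => K)
  · rw [Set.indicator_of_mem hx]
    have : ∏ i, K.indicator (1 : (Fin m → ℝ) → ℝ≥0∞) (x i) = 1 :=
      Finset.prod_eq_one fun i _ => by rw [Set.indicator_of_mem (hx i (Set.mem_univ i))]; rfl
    rw [this, one_mul]
  · rw [Set.indicator_of_notMem hx]
    simp only [Set.mem_univ_pi, not_forall] at hx
    obtain ⟨i, hi⟩ := hx
    rw [Finset.prod_eq_zero (Finset.mem_univ i) (Set.indicator_of_notMem hi _), zero_mul]

theorem drury {d : ℕ} {h : (Fin d → ℝ) → ℝ≥0∞} (hh : Measurable h) :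
    ENNReal.ofReal (Real.Gamma (((d + 1 : ℕ) : ℝ) / 2)) ^ (d + 2) *
      (∫⁻ y, h y ^ (((d + 1 : ℕ) : ℝ) / ((d + 2 : ℕ) : ℝ))) ^ (d + 2) ≤
    ENNReal.ofReal √π ^ (d + 2) * ENNReal.ofReal (Real.Gamma (((d + 2 : ℕ) : ℝ) / 2)) ^ d *
      ∫⁻ y : Fin (d + 1) → Fin d → ℝ, (∏ i, h (y i)) * ‖(Matrix.of fun i => glue 1 (y i)).det‖ₑ := by
  set K : Set (Fin (d + 1) → ℝ) := {x | ENNReal.ofReal |x 0| ^ (d + 2) < h ((x 0)⁻¹ • fun i => x i.succ)} with hKd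
  have hK : MeasurableSet K := by
    refine measurableSet_lt (by fun_prop) (hh.comp ?_)
    fun_prop
  set c : (ℝ × (Fin d → ℝ)) → ℝ≥0∞ := fun z => if ENNReal.ofReal |z.1| ^ (d + 2) < h z.2 then 1 else 0 with hc
  have hcm : Measurable c := Measurable.ite (measurableSet_lt (by fun_prop) (hh.comp measurable_snd))
    measurable_const measurable_const
  set v : (ℝ × (Fin d → ℝ)) → ℝ≥0∞ := fun z => ENNReal.ofReal |z.1| ^ d * c z with hv
  have hvm : Measurable v := Measurable.mul (by fun_prop) hcm
  have hT : Measurable (fun z : ℝ × (Fin d → ℝ) => glue z.1 (z.1 • z.2)) :=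
    measurable_glue measurable_fst (measurable_fst.smul measurable_snd)
  have hKm : Measurable (K.indicator (1 : (Fin (d + 1) → ℝ) → ℝ≥0∞)) := measurable_one.indicator hK
  have hz : ∀ᵐ z : ℝ × (Fin d → ℝ), z.1 ≠ 0 := by
    have : ∀ᵐ r : ℝ, r ≠ 0 := Measure.ae_ne volume 0
    exact Measure.quasiMeasurePreserving_fst.ae this
  have hchange : ∀ F : (Fin (d + 1) → ℝ) → ℝ≥0∞, Measurable F →
      ∫⁻ x, K.indicator 1 x * F x = ∫⁻ z, v z * F (glue z.1 (z.1 • z.2)) := by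
    intro F hF
    have hm : Measurable (fun x => K.indicator 1 x * F x) := hKm.mul hF
    rw [lint_persp hm]
    refine lintegral_congr_ae ?_
    filter_upwards [hz] with z hz
    rw [hv, mul_assoc]
    congr 2
    have : (glue z.1 (z.1 • z.2)) ∈ K ↔ ENNReal.ofReal |z.1| ^ (d + 2) < h z.2 := by
      rw [hKd, Set.mem_ofPred_eq]
      have : (fun i : Fin d => glue z.1 (z.1 • z.2) i.succ) = z.1 • z.2 := by ext i; simp
      rw [this, glue_zero, inv_smul_smul₀ hz]
    rw [hc, Set.indicator_apply]
    simp only [this, Pi.one_apply]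
  have hvol : ENNReal.ofReal (((d + 1 : ℕ) : ℝ) / 2) * volume K =
      ∫⁻ y, h y ^ (((d + 1 : ℕ) : ℝ) / ((d + 2 : ℕ) : ℝ)) := by
    have h1 := hchange (fun _ => 1) measurable_const
    simp only [mul_one] at h1
    rw [lintegral_indicator_one hK] at h1
    rw [h1, Measure.volume_eq_prod, lintegral_prod_symm' _ hvm]
    simp only [hv, hc]
    simp_rw [radial_int d (d + 2) (by omega)]
    rw [lintegral_const_mul _ (hh.pow_const _), ← mul_assoc]
    have : ENNReal.ofReal (((d + 1 : ℕ) : ℝ) / 2) * (2 * ((d + 1 : ℕ) : ℝ≥0∞)⁻¹) = 1 := by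
      rw [ENNReal.ofReal_div_of_pos two_pos, ENNReal.ofReal_natCast, ENNReal.ofReal_ofNat, ENNReal.div_eq_inv_mul]
      calc _ = ((2 : ℝ≥0∞)⁻¹ * 2) * (((d + 1 : ℕ) : ℝ≥0∞) * ((d + 1 : ℕ) : ℝ≥0∞)⁻¹) := by ring
        _ = 1 := by
          rw [ENNReal.inv_mul_cancel (by simp) (by simp), ENNReal.mul_inv_cancel (by simp) (by simp), one_mul]
    rw [this, one_mul]
  have hphi : ENNReal.ofReal (((d + 2 : ℕ) : ℝ) / 2) ^ (d + 1) * phi (d + 1) K =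
      ∫⁻ y : Fin (d + 1) → Fin d → ℝ, (∏ i, h (y i)) * ‖(Matrix.of fun i => glue 1 (y i)).det‖ₑ := by
    have hD : Measurable (fun y : Fin (d + 1) → Fin d → ℝ => ‖(Matrix.of fun i => glue 1 (y i)).det‖ₑ) :=
      measurable_det.comp (measurable_pi_lambda _ fun i =>
        measurable_glue measurable_const (measurable_pi_apply i))
    rw [phi_eq_ind hK, lift_pi hT hKm hvm hchange (d + 1) _ measurable_det]
    have hdet : ∀ z : Fin (d + 1) → ℝ × (Fin d → ℝ),
        ‖(Matrix.of fun i => glue (z i).1 ((z i).1 • (z i).2)).det‖ₑ =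
        (∏ i, ENNReal.ofReal |(z i).1|) * ‖(Matrix.of fun i => glue 1 (z i).2).det‖ₑ := by
      intro z
      have := Matrix.det_mul_column (fun i => (z i).1) (Matrix.of fun i => glue 1 (z i).2)
      have h2 : (Matrix.of fun i => glue (z i).1 ((z i).1 • (z i).2)) =
          Matrix.of fun i j => (z i).1 * (Matrix.of fun i => glue 1 (z i).2) i j := by
        ext i j
        refine Fin.cases ?_ (fun j => ?_) j <;> simp
      rw [h2, this, enorm_mul, Real.enorm_eq_ofReal_abs (∏ i, (z i).1), Finset.abs_prod,
        ENNReal.ofReal_prod_of_nonneg fun i _ => abs_nonneg _]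
    simp_rw [hdet, ← mul_assoc, ← Finset.prod_mul_distrib]
    set u : (ℝ × (Fin d → ℝ)) → ℝ≥0∞ := fun z => ENNReal.ofReal |z.1| ^ (d + 1) * c z with hu
    have hum : Measurable u := Measurable.mul (by fun_prop) hcm
    have huv : ∀ z : ℝ × (Fin d → ℝ), v z * ENNReal.ofReal |z.1| = u z := by
      intro z; simp only [hu, hv]; ring
    simp_rw [huv]
    set C : ℝ≥0∞ := 2 * ((d + 2 : ℕ) : ℝ≥0∞)⁻¹ with hC
    have hU : ∀ F : (Fin d → ℝ) → ℝ≥0∞, Measurable F →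
        ∫⁻ y, (C * h y) * F y = ∫⁻ z, u z * F z.2 := by
      intro F hF
      have hm : Measurable (fun z : ℝ × (Fin d → ℝ) => u z * F z.2) := hum.mul (hF.comp measurable_snd)
      rw [Measure.volume_eq_prod, lintegral_prod_symm' _ hm]
      congr 1; ext y
      have hm4 : Measurable (fun x : ℝ => u (x, y)) := hum.comp (measurable_id.prodMk measurable_const)
      show _ = ∫⁻ x : ℝ, u (x, y) * F y
      rw [lintegral_mul_const _ hm4]
      congr 1
      simp only [hu, hc]
      rw [radial_int (d + 1) (d + 2) (by omega), div_self (by positivity), ENNReal.rpow_one]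
    rw [← lift_pi measurable_snd (hh.const_mul C) hum hU (d + 1) _ hD]
    simp_rw [Finset.prod_mul_distrib, mul_assoc]
    rw [lintegral_const_mul]
    · rw [← mul_assoc, Finset.prod_const, Finset.card_univ, Fintype.card_fin, ← mul_pow]
      have : ENNReal.ofReal (((d + 2 : ℕ) : ℝ) / 2) * C = 1 := by
        rw [hC, ENNReal.ofReal_div_of_pos two_pos, ENNReal.ofReal_natCast, ENNReal.ofReal_ofNat, ENNReal.div_eq_inv_mul]
        calc _ = ((2 : ℝ≥0∞)⁻¹ * 2) * (((d + 2 : ℕ) : ℝ≥0∞) * ((d + 2 : ℕ) : ℝ≥0∞)⁻¹) := by ring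
          _ = 1 := by
            rw [ENNReal.inv_mul_cancel (by simp) (by simp), ENNReal.mul_inv_cancel (by simp) (by simp), one_mul]
      rw [this, one_pow, one_mul]
    · refine Measurable.mul ?_ hD
      exact Finset.measurable_prod _ fun i _ => hh.comp (measurable_pi_apply i)
  have := phi_final hK
  rw [hvol, hphi] at this
  exact this

theorem lint_prod_pow {E : Type*} [MeasureSpace E] [SigmaFinite (volume : Measure E)]
    {w : E → ℝ≥0∞} (hw : Measurable w) (k : ℕ) :
    ∫⁻ x : Fin k → E, ∏ i, w (x i) = (∫⁻ x, w x) ^ k := by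
  induction k with
  | zero => simp [volume_pi]
  | succ k ih =>
    have h := lint_split k hw (F := fun _ => 1) measurable_const
    simp only [mul_one] at h
    rw [h, ih, lintegral_mul_const _ hw, pow_succ, mul_comm]

/-- graph version of the Radon transform -/
def Rg {d : ℕ} (f : (Fin (d + 1) → ℝ) → ℝ≥0∞) (c : Fin (d + 1) → ℝ) : ℝ≥0∞ :=
  ∫⁻ y : Fin d → ℝ, f (glue (∑ j, glue 1 y j * c j) y)

theorem lint_matrix {m : ℕ} (M : Matrix (Fin m) (Fin m) ℝ) {G : (Fin m → ℝ) → ℝ≥0∞} (hG : Measurable G) :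
    ‖M.det‖ₑ * ∫⁻ c, G (M.mulVec c) ≤ ∫⁻ s, G s := by
  by_cases h0 : M.det = 0
  · simp [h0]
  have h1 := Real.map_matrix_volume_pi_eq_smul_volume_pi h0
  have hm : Measurable (Matrix.toLin' M) := (LinearMap.continuous_of_finiteDimensional _).measurable
  have h2 := lintegral_map (μ := volume) hG hm
  rw [h1, lintegral_smul_measure, smul_eq_mul] at h2
  simp only [Matrix.toLin'_apply] at h2
  rw [← h2, ← mul_assoc, Real.enorm_eq_ofReal_abs, ← ENNReal.ofReal_mul (abs_nonneg _), ← abs_mul,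
    mul_inv_cancel₀ h0]
  simp

theorem graph_ineq {d : ℕ} {f : (Fin (d + 1) → ℝ) → ℝ≥0∞} (hf : Measurable f) :
    ENNReal.ofReal (Real.Gamma (((d + 1 : ℕ) : ℝ) / 2)) ^ (d + 2) * ∫⁻ c, Rg f c ^ (d + 2) ≤
    ENNReal.ofReal √π ^ (d + 2) * ENNReal.ofReal (Real.Gamma (((d + 2 : ℕ) : ℝ) / 2)) ^ d *
      (∫⁻ x, f x ^ (((d + 2 : ℕ) : ℝ) / ((d + 1 : ℕ) : ℝ))) ^ (d + 1) := by
  set H : (Fin (d + 1) → ℝ) → ℝ≥0∞ := fun x => f x ^ (((d + 2 : ℕ) : ℝ) / ((d + 1 : ℕ) : ℝ)) with hH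
  have hHm : Measurable H := hf.pow_const _
  have hL : Measurable (fun p : (Fin (d + 1) → ℝ) × (Fin d → ℝ) =>
      glue (∑ j, glue 1 p.2 j * p.1 j) p.2) := by
    refine measurable_glue (Finset.measurable_sum _ fun j _ => ?_) measurable_snd
    refine Measurable.mul ?_ ((measurable_pi_apply j).comp measurable_fst)
    exact (measurable_pi_apply j).comp (measurable_glue measurable_const measurable_snd)
  have hpt : ∀ c : Fin (d + 1) → ℝ,
      ENNReal.ofReal (Real.Gamma (((d + 1 : ℕ) : ℝ) / 2)) ^ (d + 2) * Rg f c ^ (d + 2) ≤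
      ENNReal.ofReal √π ^ (d + 2) * ENNReal.ofReal (Real.Gamma (((d + 2 : ℕ) : ℝ) / 2)) ^ d *
      ∫⁻ y : Fin (d + 1) → Fin d → ℝ, (∏ i, H (glue (∑ j, glue 1 (y i) j * c j) (y i))) *
        ‖(Matrix.of fun i => glue 1 (y i)).det‖ₑ := by
    intro c
    have hh : Measurable (fun y : Fin d → ℝ => H (glue (∑ j, glue 1 y j * c j) y)) :=
      hHm.comp (hL.comp (measurable_const.prodMk measurable_id))
    have := drury hh
    have e : ∀ y : Fin d → ℝ, H (glue (∑ j, glue 1 y j * c j) y) ^ (((d + 1 : ℕ) : ℝ) / ((d + 2 : ℕ) : ℝ)) =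
        f (glue (∑ j, glue 1 y j * c j) y) := by
      intro y
      simp only [hH]
      rw [← ENNReal.rpow_mul]
      have : (((d + 2 : ℕ) : ℝ) / ((d + 1 : ℕ) : ℝ)) * (((d + 1 : ℕ) : ℝ) / ((d + 2 : ℕ) : ℝ)) = 1 := by
        field_simp
      rw [this, ENNReal.rpow_one]
    simp_rw [e] at this
    exact this
  have hD : Measurable (fun y : Fin (d + 1) → Fin d → ℝ => ‖(Matrix.of fun i => glue 1 (y i)).det‖ₑ) :=
    measurable_det.comp (measurable_pi_lambda _ fun i =>
      measurable_glue measurable_const (measurable_pi_apply i))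
  have hJ : Measurable (fun q : (Fin (d + 1) → ℝ) × (Fin (d + 1) → Fin d → ℝ) =>
      (∏ i, H (glue (∑ j, glue 1 (q.2 i) j * q.1 j) (q.2 i))) *
        ‖(Matrix.of fun i => glue 1 (q.2 i)).det‖ₑ) := by
    refine Measurable.mul ?_ (hD.comp measurable_snd)
    refine Finset.measurable_prod _ fun i _ => ?_
    exact hHm.comp (hL.comp (measurable_fst.prodMk ((measurable_pi_apply i).comp measurable_snd)))
  have hRg : Measurable (fun c => Rg f c ^ (d + 2)) := by
    refine Measurable.pow_const ?_ _
    exact Measurable.lintegral_prod_right' (hf.comp hL)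
  rw [← lintegral_const_mul _ hRg]
  refine (lintegral_mono hpt).trans ?_
  rw [lintegral_const_mul _ (Measurable.lintegral_prod_right' hJ)]
  gcongr
  rw [lintegral_lintegral_swap hJ.aemeasurable]
  have hprod : Measurable (fun x : Fin (d + 1) → Fin (d + 1) → ℝ => ∏ i, H (x i)) :=
    Finset.measurable_prod _ fun i _ => hHm.comp (measurable_pi_apply i)
  have hprod2 : Measurable (fun p : (Fin (d + 1) → ℝ) × (Fin (d + 1) → Fin d → ℝ) =>
      ∏ i, H (glue (p.1 i) (p.2 i))) := hprod.comp (mp_glue_pi (d + 1) d).measurable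
  rw [← lint_prod_pow hHm, ← (mp_glue_pi (d + 1) d).lintegral_comp hprod, Measure.volume_eq_prod,
    lintegral_prod_symm' _ hprod2]
  refine lintegral_mono fun y => ?_
  have hG : Measurable (fun s : Fin (d + 1) → ℝ => ∏ i, H (glue (s i) (y i))) :=
    hprod2.comp (measurable_id.prodMk measurable_const)
  refine le_trans (le_of_eq ?_) (lint_matrix (Matrix.of fun i => glue 1 (y i)) hG)
  show ∫⁻ x : Fin (d + 1) → ℝ, (∏ i, H (glue (∑ j, glue 1 (y i) j * x j) (y i))) *
    ‖(Matrix.of fun i => glue 1 (y i)).det‖ₑ = _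
  rw [lintegral_mul_const, mul_comm]
  · rfl
  · exact Finset.measurable_prod _ fun i _ => hHm.comp (hL.comp (measurable_id.prodMk measurable_const))

theorem mp_orth {n : ℕ} (θ : EuclideanSpace ℝ (Fin n)) (hθ : ‖θ‖ = 1) :
    MeasurePreserving (fun p : ℝ × ((ℝ ∙ θ)ᗮ : Submodule ℝ (EuclideanSpace ℝ (Fin n))) =>
      p.1 • θ + (p.2 : EuclideanSpace ℝ (Fin n))) := by
  have h1 := (LinearIsometryEquiv.toSpanUnitSingleton (𝕜 := ℝ) θ hθ).measurePreserving
  have h2 := (Submodule.orthogonalDecomposition (ℝ ∙ θ)).symm.measurePreserving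
  have h3 := WithLp.volume_preserving_toLp (ℝ ∙ θ) ((ℝ ∙ θ)ᗮ : Submodule ℝ (EuclideanSpace ℝ (Fin n)))
  have h4 := h1.prod (MeasurePreserving.id (volume : Measure ((ℝ ∙ θ)ᗮ : Submodule ℝ (EuclideanSpace ℝ (Fin n)))))
  have h5 := (h2.comp h3).comp h4
  convert h5 using 1
  · funext p
    simp [Submodule.orthogonalDecomposition_symm_apply, LinearIsometryEquiv.toSpanUnitSingleton_apply]
  · exact Measure.volume_eq_prod _ _

theorem radon_slice {n : ℕ} {f : EuclideanSpace ℝ (Fin n) → ℝ≥0∞} (hf : Measurable f)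
    (θ : sphere (0 : EuclideanSpace ℝ (Fin n)) 1) : Measurable (Radon n f θ) ∧
    ∀ S : Set ℝ, MeasurableSet S → ∫⁻ t in S, Radon n f θ t =
      ∫⁻ x, S.indicator 1 (inner ℝ (θ : EuclideanSpace ℝ (Fin n)) x) * f x := by
  have hθ : ‖(θ : EuclideanSpace ℝ (Fin n))‖ = 1 := by simp
  have hmp := mp_orth _ hθ
  have hm : Measurable (fun p : ℝ × ((ℝ ∙ (θ : EuclideanSpace ℝ (Fin n)))ᗮ :
      Submodule ℝ (EuclideanSpace ℝ (Fin n))) => f (p.1 • (θ : EuclideanSpace ℝ (Fin n)) + (p.2 : EuclideanSpace ℝ (Fin n)))) :=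
    hf.comp hmp.measurable
  refine ⟨hm.lintegral_prod_right', fun S hS => ?_⟩
  have hmS : Measurable (fun x : EuclideanSpace ℝ (Fin n) =>
      S.indicator (1 : ℝ → ℝ≥0∞) (inner ℝ (θ : EuclideanSpace ℝ (Fin n)) x) * f x) := by
    refine Measurable.mul ?_ hf
    exact (measurable_one.indicator hS).comp (by fun_prop)
  have hmS2 := hmS.comp hmp.measurable
  rw [← hmp.lintegral_comp hmS, Measure.volume_eq_prod]
  rw [lintegral_prod _ (by exact hmS2.aemeasurable), ← lintegral_indicator hS]
  congr 1; ext t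
  have hin : ∀ y : ((ℝ ∙ (θ : EuclideanSpace ℝ (Fin n)))ᗮ : Submodule ℝ (EuclideanSpace ℝ (Fin n))),
      inner ℝ (θ : EuclideanSpace ℝ (Fin n)) (t • (θ : EuclideanSpace ℝ (Fin n)) + (y : EuclideanSpace ℝ (Fin n))) = t := by
    intro y
    rw [inner_add_right, inner_smul_right, real_inner_self_eq_norm_sq, hθ,
      Submodule.mem_orthogonal_singleton_iff_inner_right.1 y.2]
    simp
  simp only [hin]
  by_cases ht : t ∈ S
  · simp [ht, Radon]
  · simp [ht]

theorem graph_slice {d : ℕ} {g : (Fin (d + 1) → ℝ) → ℝ≥0∞} (hg : Measurable g) {w : Fin (d + 1) → ℝ}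
    (hw : w 0 ≠ 0) : Measurable (fun t : ℝ => ENNReal.ofReal |(w 0)⁻¹| *
      Rg g (glue ((w 0)⁻¹ * t) (fun i => -((w 0)⁻¹ * w i.succ)))) ∧
    ∀ S : Set ℝ, MeasurableSet S → ∫⁻ t in S, ENNReal.ofReal |(w 0)⁻¹| *
      Rg g (glue ((w 0)⁻¹ * t) (fun i => -((w 0)⁻¹ * w i.succ))) =
      ∫⁻ x, S.indicator 1 (∑ i, w i * x i) * g x := by
  have e : ∀ (t : ℝ) (y : Fin d → ℝ), ∑ j, glue 1 y j * (glue ((w 0)⁻¹ * t) (fun i => -((w 0)⁻¹ * w i.succ))) j =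
      (w 0)⁻¹ * (t - ∑ i : Fin d, w i.succ * y i) := by
    intro t y
    rw [Fin.sum_univ_succ]
    simp only [glue_zero, glue_succ, one_mul, mul_neg, Finset.sum_neg_distrib, mul_sub, Finset.mul_sum]
    rw [sub_eq_add_neg]
    congr 2
    exact Finset.sum_congr rfl fun i _ => by ring
  have hm : Measurable (fun p : ℝ × (Fin d → ℝ) => g (glue ((w 0)⁻¹ * (p.1 - ∑ i : Fin d, w i.succ * p.2 i)) p.2)) :=
    hg.comp (measurable_glue (by fun_prop) measurable_snd)
  have hR : ∀ t, Rg g (glue ((w 0)⁻¹ * t) (fun i => -((w 0)⁻¹ * w i.succ))) =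
      ∫⁻ y : Fin d → ℝ, g (glue ((w 0)⁻¹ * (t - ∑ i : Fin d, w i.succ * y i)) y) := by
    intro t; simp only [Rg, e]
  simp_rw [hR]
  refine ⟨(hm.lintegral_prod_right').const_mul _, fun S hS => ?_⟩
  have hI : Measurable (S.indicator (1 : ℝ → ℝ≥0∞)) := measurable_one.indicator hS
  have hmS : Measurable (fun x : Fin (d + 1) → ℝ => S.indicator (1 : ℝ → ℝ≥0∞) (∑ i, w i * x i) * g x) :=
    Measurable.mul (hI.comp (by fun_prop)) hg
  have hmS2 : Measurable (fun p : ℝ × (Fin d → ℝ) => S.indicator (1 : ℝ → ℝ≥0∞) (∑ i, w i * glue p.1 p.2 i) * g (glue p.1 p.2)) :=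
    hmS.comp (mp_glue d).measurable
  have hm2 : Measurable (fun p : ℝ × (Fin d → ℝ) => S.indicator (1 : ℝ → ℝ≥0∞) p.1 *
      g (glue ((w 0)⁻¹ * (p.1 - ∑ i : Fin d, w i.succ * p.2 i)) p.2)) := (hI.comp measurable_fst).mul hm
  rw [lintegral_const_mul _ hm.lintegral_prod_right', ← lintegral_indicator hS]
  have h1 : ∫⁻ t, S.indicator (fun t => ∫⁻ y : Fin d → ℝ, g (glue ((w 0)⁻¹ * (t - ∑ i : Fin d, w i.succ * y i)) y)) t =
      ∫⁻ y : Fin d → ℝ, ∫⁻ t, S.indicator (1 : ℝ → ℝ≥0∞) t * g (glue ((w 0)⁻¹ * (t - ∑ i : Fin d, w i.succ * y i)) y) := by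
    rw [← lintegral_lintegral_swap hm2.aemeasurable]
    congr 1; ext t
    by_cases ht : t ∈ S <;> simp [ht]
  rw [h1, ← lintegral_const_mul _ hm2.lintegral_prod_left', ← (mp_glue d).lintegral_comp hmS,
    Measure.volume_eq_prod, lintegral_prod_symm' _ hmS2]
  congr 1; ext y
  set b := ∑ i : Fin d, w i.succ * y i
  have hG : Measurable (fun t : ℝ => S.indicator (1 : ℝ → ℝ≥0∞) t * g (glue ((w 0)⁻¹ * (t - b)) y)) :=
    hm2.comp (measurable_id.prodMk measurable_const)
  have hG2 : Measurable (fun t : ℝ => S.indicator (1 : ℝ → ℝ≥0∞) (t + b) * g (glue ((w 0)⁻¹ * (t + b - b)) y)) :=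
    hG.comp (measurable_id.add_const b)
  rw [← lintegral_add_right_eq_self _ b]
  have h2 := lintegral_map (μ := volume) hG2 (measurable_const_mul (w 0))
  rw [Real.map_volume_mul_left hw, lintegral_smul_measure, smul_eq_mul] at h2
  rw [h2]
  congr 1; ext s
  rw [Fin.sum_univ_succ]
  simp only [glue_zero, glue_succ, add_sub_cancel_right, inv_mul_cancel_left₀ hw]
  rfl

theorem radon_eq {d : ℕ} {f : EuclideanSpace ℝ (Fin (d + 1)) → ℝ≥0∞} (hf : Measurable f)
    (θ : sphere (0 : EuclideanSpace ℝ (Fin (d + 1))) 1) (h0 : (θ : EuclideanSpace ℝ (Fin (d + 1))) 0 ≠ 0) :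
    (Radon (d + 1) f θ) =ᵐ[volume] fun t : ℝ => ENNReal.ofReal |((θ : EuclideanSpace ℝ (Fin (d + 1))) 0)⁻¹| *
      Rg (fun x => f (WithLp.toLp 2 x)) (glue (((θ : EuclideanSpace ℝ (Fin (d + 1))) 0)⁻¹ * t)
        (fun i => -(((θ : EuclideanSpace ℝ (Fin (d + 1))) 0)⁻¹ * (θ : EuclideanSpace ℝ (Fin (d + 1))) i.succ))) := by
  obtain ⟨m1, h1⟩ := radon_slice hf θ
  have hg : Measurable (fun x : Fin (d + 1) → ℝ => f (WithLp.toLp 2 x)) :=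
    hf.comp (PiLp.volume_preserving_toLp (Fin (d + 1))).measurable
  obtain ⟨m2, h2⟩ := graph_slice hg (w := fun i => (θ : EuclideanSpace ℝ (Fin (d + 1))) i) h0
  refine ae_eq_of_forall_setLIntegral_eq_of_sigmaFinite m1 m2 fun S hS _ => ?_
  rw [h1 S hS, h2 S hS]
  have hmS : Measurable (fun x : EuclideanSpace ℝ (Fin (d + 1)) =>
      S.indicator (1 : ℝ → ℝ≥0∞) (inner ℝ (θ : EuclideanSpace ℝ (Fin (d + 1))) x) * f x) := by
    refine Measurable.mul ?_ hf
    exact (measurable_one.indicator hS).comp (by fun_prop)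
  rw [← (PiLp.volume_preserving_toLp (Fin (d + 1))).lintegral_comp hmS]
  congr 1; ext x
  congr 2
  rw [PiLp.inner_apply]
  simp [mul_comm]

/-- integral over intercepts -/
def Hg {d : ℕ} (g : (Fin (d + 1) → ℝ) → ℝ≥0∞) (a : Fin d → ℝ) : ℝ≥0∞ := ∫⁻ b : ℝ, Rg g (glue b a) ^ (d + 2)

theorem measurable_Rg {d : ℕ} {g : (Fin (d + 1) → ℝ) → ℝ≥0∞} (hg : Measurable g) : Measurable (Rg g) := by
  have hL : Measurable (fun p : (Fin (d + 1) → ℝ) × (Fin d → ℝ) =>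
      glue (∑ j, glue 1 p.2 j * p.1 j) p.2) := by
    refine measurable_glue (Finset.measurable_sum _ fun j _ => ?_) measurable_snd
    refine Measurable.mul ?_ ((measurable_pi_apply j).comp measurable_fst)
    exact (measurable_pi_apply j).comp (measurable_glue measurable_const measurable_snd)
  exact Measurable.lintegral_prod_right' (hg.comp hL)

theorem measurable_Hg {d : ℕ} {g : (Fin (d + 1) → ℝ) → ℝ≥0∞} (hg : Measurable g) : Measurable (Hg g) := by
  have h : Measurable (fun p : ℝ × (Fin d → ℝ) => Rg g (glue p.1 p.2) ^ (d + 2)) :=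
    ((measurable_Rg hg).comp (mp_glue d).measurable).pow_const _
  exact h.lintegral_prod_left'

theorem lint_Hg {d : ℕ} {g : (Fin (d + 1) → ℝ) → ℝ≥0∞} (hg : Measurable g) :
    ∫⁻ a, Hg g a = ∫⁻ c, Rg g c ^ (d + 2) := by
  have h : Measurable (fun p : ℝ × (Fin d → ℝ) => Rg g (glue p.1 p.2) ^ (d + 2)) :=
    ((measurable_Rg hg).comp (mp_glue d).measurable).pow_const _
  rw [← (mp_glue d).lintegral_comp ((measurable_Rg hg).pow_const _), Measure.volume_eq_prod,
    lintegral_prod_symm' _ h]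
  rfl

theorem radon_int {d : ℕ} {f : EuclideanSpace ℝ (Fin (d + 1)) → ℝ≥0∞} (hf : Measurable f)
    (θ : sphere (0 : EuclideanSpace ℝ (Fin (d + 1))) 1) (h0 : (θ : EuclideanSpace ℝ (Fin (d + 1))) 0 ≠ 0) :
    ∫⁻ t, Radon (d + 1) f θ t ^ (d + 2) =
      ENNReal.ofReal |((θ : EuclideanSpace ℝ (Fin (d + 1))) 0)⁻¹| ^ (d + 1) *
      Hg (fun x => f (WithLp.toLp 2 x))
        (fun i => -(((θ : EuclideanSpace ℝ (Fin (d + 1))) 0)⁻¹ * (θ : EuclideanSpace ℝ (Fin (d + 1))) i.succ)) := by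
  have hg : Measurable (fun x : Fin (d + 1) → ℝ => f (WithLp.toLp 2 x)) :=
    hf.comp (PiLp.volume_preserving_toLp (Fin (d + 1))).measurable
  set g : (Fin (d + 1) → ℝ) → ℝ≥0∞ := fun x => f (WithLp.toLp 2 x)
  set u := (θ : EuclideanSpace ℝ (Fin (d + 1))) 0 with hu
  set a : Fin d → ℝ := fun i => -(u⁻¹ * (θ : EuclideanSpace ℝ (Fin (d + 1))) i.succ)
  have hG : Measurable (fun b : ℝ => Rg g (glue b a) ^ (d + 2)) :=
    ((measurable_Rg hg).comp (measurable_glue measurable_id measurable_const)).pow_const _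
  have hG2 : Measurable (fun t : ℝ => Rg g (glue (u⁻¹ * t) a) ^ (d + 2)) :=
    hG.comp (measurable_const_mul u⁻¹)
  calc ∫⁻ t, Radon (d + 1) f θ t ^ (d + 2) =
      ∫⁻ t, ENNReal.ofReal |u⁻¹| ^ (d + 2) * Rg g (glue (u⁻¹ * t) a) ^ (d + 2) := by
        refine lintegral_congr_ae ?_
        filter_upwards [radon_eq hf θ h0] with t ht
        rw [ht, mul_pow]
    _ = _ := by
        rw [lintegral_const_mul _ hG2]
        have h2 := lintegral_map (μ := volume) hG (measurable_const_mul u⁻¹)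
        rw [Real.map_volume_mul_left (inv_ne_zero h0), lintegral_smul_measure, smul_eq_mul, inv_inv] at h2
        rw [← h2, pow_succ, mul_assoc, ← mul_assoc (ENNReal.ofReal |u⁻¹|), ← ENNReal.ofReal_mul (abs_nonneg _),
          ← abs_mul, inv_mul_cancel₀ h0]
        simp [Hg]

theorem lint_polar {d : ℕ} {F : EuclideanSpace ℝ (Fin (d + 1)) → ℝ≥0∞} (hF : Measurable F) :
    ∫⁻ x, F x = ∫⁻ θ : sphere (0 : EuclideanSpace ℝ (Fin (d + 1))) 1, ∫⁻ r in Set.Ioi (0 : ℝ),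
      ENNReal.ofReal (r ^ d) * F (r • (θ : EuclideanSpace ℝ (Fin (d + 1)))) ∂volume ∂(volume.toSphere) := by
  have hmp := (volume : Measure (EuclideanSpace ℝ (Fin (d + 1)))).measurePreserving_homeomorphUnitSphereProd
  have e1 : ∫⁻ x, F x = ∫⁻ x : ({(0 : EuclideanSpace ℝ (Fin (d + 1)))}ᶜ : Set (EuclideanSpace ℝ (Fin (d + 1)))),
      F x ∂(Measure.comap Subtype.val volume) := by
    rw [lintegral_subtype_comap (measurableSet_singleton _).compl, ← setLIntegral_univ]
    exact (setLIntegral_congr (by simp [ae_eq_univ])).symm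
  have hG : Measurable (fun p : sphere (0 : EuclideanSpace ℝ (Fin (d + 1))) 1 × Set.Ioi (0 : ℝ) =>
      F ((p.2 : ℝ) • (p.1 : EuclideanSpace ℝ (Fin (d + 1))))) := by
    refine hF.comp ?_
    fun_prop
  have e2 := hmp.lintegral_comp hG
  rw [e1]
  have e3 : ∀ x : ({(0 : EuclideanSpace ℝ (Fin (d + 1)))}ᶜ : Set (EuclideanSpace ℝ (Fin (d + 1)))),
      ((homeomorphUnitSphereProd (EuclideanSpace ℝ (Fin (d + 1))) x).2 : ℝ) •
      ((homeomorphUnitSphereProd (EuclideanSpace ℝ (Fin (d + 1))) x).1 : EuclideanSpace ℝ (Fin (d + 1))) = x := by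
    intro x
    rw [← homeomorphUnitSphereProd_symm_apply_coe]; simp
  simp only [e3] at e2
  rw [e2, lintegral_prod _ hG.aemeasurable]
  congr 1; ext θ
  have hd : Module.finrank ℝ (EuclideanSpace ℝ (Fin (d + 1))) - 1 = d := by simp
  rw [hd, Measure.volumeIoiPow]
  have hm1 : Measurable (fun r : Set.Ioi (0 : ℝ) => ENNReal.ofReal ((r : ℝ) ^ d)) := by fun_prop
  have hm2 : Measurable (fun r : Set.Ioi (0 : ℝ) => F ((r : ℝ) • (θ : EuclideanSpace ℝ (Fin (d + 1))))) :=
    hG.comp (measurable_const.prodMk measurable_id)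
  rw [lintegral_withDensity_eq_lintegral_mul _ hm1 hm2]
  simp only [Pi.mul_apply]
  rw [lintegral_subtype_comap measurableSet_Ioi
    (fun r : ℝ => ENNReal.ofReal (r ^ d) * F (r • (θ : EuclideanSpace ℝ (Fin (d + 1)))))]

/-- the cone density -/
def Phi {d : ℕ} (H : (Fin d → ℝ) → ℝ≥0∞) (x : Fin (d + 1) → ℝ) : ℝ≥0∞ :=
  ENNReal.ofReal |(x 0)⁻¹| ^ (d + 1) * H (fun i => -((x 0)⁻¹ * x i.succ))

theorem measurable_Phi {d : ℕ} {H : (Fin d → ℝ) → ℝ≥0∞} (hH : Measurable H) : Measurable (Phi H) := by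
  unfold Phi
  refine Measurable.mul (by fun_prop) (hH.comp (by fun_prop))

theorem sphere_int {d : ℕ} {H : (Fin d → ℝ) → ℝ≥0∞} (hH : Measurable H) :
    ∫⁻ θ : sphere (0 : EuclideanSpace ℝ (Fin (d + 1))) 1, Phi H (fun i => (θ : EuclideanSpace ℝ (Fin (d + 1))) i)
      ∂(volume.toSphere) = 2 * ∫⁻ a, H a := by
  set N : (Fin (d + 1) → ℝ) → ℝ≥0∞ := fun x => (Set.Iio (1 : ℝ)).indicator (fun r => ENNReal.ofReal r)
    ‖WithLp.toLp 2 x‖ with hN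
  have hNm : Measurable N := by
    refine (ENNReal.measurable_ofReal.indicator measurableSet_Iio).comp ?_
    exact measurable_norm.comp (PiLp.volume_preserving_toLp (Fin (d + 1))).measurable
  have hofm : Measurable (fun x : EuclideanSpace ℝ (Fin (d + 1)) => fun i => x i) := by fun_prop
  have hΨ : Measurable (fun x : Fin (d + 1) → ℝ => Phi H x * N x) := (measurable_Phi hH).mul hNm
  have hΨ2 : Measurable (fun x : EuclideanSpace ℝ (Fin (d + 1)) => Phi H (fun i => x i) * N (fun i => x i)) :=
    hΨ.comp hofm
  have key1 : ∫⁻ x : EuclideanSpace ℝ (Fin (d + 1)), Phi H (fun i => x i) * N (fun i => x i) =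
      ∫⁻ θ : sphere (0 : EuclideanSpace ℝ (Fin (d + 1))) 1, Phi H (fun i => (θ : EuclideanSpace ℝ (Fin (d + 1))) i)
      ∂(volume.toSphere) := by
    rw [lint_polar hΨ2]
    congr 1; ext θ
    have : ∀ r ∈ Set.Ioi (0 : ℝ), ENNReal.ofReal (r ^ d) *
        (Phi H (fun i => (r • (θ : EuclideanSpace ℝ (Fin (d + 1)))) i) *
          N (fun i => (r • (θ : EuclideanSpace ℝ (Fin (d + 1)))) i)) =
        (Set.Iio (1 : ℝ)).indicator (fun _ => Phi H (fun i => (θ : EuclideanSpace ℝ (Fin (d + 1))) i)) r := by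
      intro r hr
      have hr : 0 < r := hr
      have n1 : ‖WithLp.toLp 2 (fun i => (r • (θ : EuclideanSpace ℝ (Fin (d + 1)))) i)‖ = r := by
        have : WithLp.toLp 2 (fun i => (r • (θ : EuclideanSpace ℝ (Fin (d + 1)))) i) =
          r • (θ : EuclideanSpace ℝ (Fin (d + 1))) := rfl
        rw [this, norm_smul]; simp [abs_of_pos hr]
      simp only [hN, n1]
      by_cases h1 : r ∈ Set.Iio (1 : ℝ)
      · simp only [Set.indicator_of_mem h1, Phi, PiLp.smul_apply, smul_eq_mul, mul_inv, abs_mul]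
        have e : ∀ i : Fin d, r⁻¹ * ((θ : EuclideanSpace ℝ (Fin (d + 1))) 0)⁻¹ * (r * (θ : EuclideanSpace ℝ (Fin (d + 1))) i.succ)
          = ((θ : EuclideanSpace ℝ (Fin (d + 1))) 0)⁻¹ * (θ : EuclideanSpace ℝ (Fin (d + 1))) i.succ := by
          intro i; field_simp
        simp only [e, abs_of_pos (inv_pos.2 hr)]
        rw [ENNReal.ofReal_mul (inv_pos.2 hr).le, mul_pow]
        have : ENNReal.ofReal (r ^ d) * ENNReal.ofReal r⁻¹ ^ (d + 1) * ENNReal.ofReal r = 1 := by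
          rw [← ENNReal.ofReal_pow (inv_pos.2 hr).le, ← ENNReal.ofReal_mul (by positivity),
            ← ENNReal.ofReal_mul (by positivity)]
          rw [← ENNReal.ofReal_one]; congr 1
          rw [inv_pow, pow_succ]; field_simp
        calc _ = (ENNReal.ofReal (r ^ d) * ENNReal.ofReal r⁻¹ ^ (d + 1) * ENNReal.ofReal r) *
              (ENNReal.ofReal |((θ : EuclideanSpace ℝ (Fin (d + 1))) 0)⁻¹| ^ (d + 1) *
              H fun i => -(((θ : EuclideanSpace ℝ (Fin (d + 1))) 0)⁻¹ * (θ : EuclideanSpace ℝ (Fin (d + 1))) i.succ)) := by ring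
          _ = _ := by rw [this, one_mul]
      · simp [Set.indicator_of_notMem h1]
    rw [setLIntegral_congr_fun measurableSet_Ioi this, lintegral_indicator measurableSet_Iio,
      Measure.restrict_restrict measurableSet_Iio]
    simp [Set.Iio_inter_Ioi]
  have key2 : ∫⁻ x : EuclideanSpace ℝ (Fin (d + 1)), Phi H (fun i => x i) * N (fun i => x i) =
      2 * ∫⁻ a, H a := by
    rw [← (PiLp.volume_preserving_toLp (Fin (d + 1))).lintegral_comp hΨ2]
    show ∫⁻ x : Fin (d + 1) → ℝ, Phi H x * N x = _
    have hP : Measurable (fun z : ℝ × (Fin d → ℝ) => ENNReal.ofReal |z.1| ^ d *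
        (Phi H (glue z.1 (z.1 • z.2)) * N (glue z.1 (z.1 • z.2)))) := by
      refine Measurable.mul (by fun_prop) (hΨ.comp (measurable_glue measurable_fst (by fun_prop)))
    rw [lint_persp hΨ, Measure.volume_eq_prod, lintegral_prod_symm' _ hP]
    have hneg : ∫⁻ a, H a = ∫⁻ a, H (-a) := (lintegral_neg_eq_self H).symm
    have hHn : Measurable (fun a : Fin d → ℝ => H (-a)) := hH.comp measurable_neg
    rw [hneg, ← lintegral_const_mul _ hHn]
    congr 1; ext y
    set s := ‖WithLp.toLp 2 (glue 1 y)‖ with hs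
    have hs0 : 0 < s := by
      rw [hs, norm_pos_iff]; intro h
      have := congrArg (fun v : EuclideanSpace ℝ (Fin (d + 1)) => v 0) h
      simp [glue_zero] at this
    have hn : ∀ r : ℝ, ‖WithLp.toLp 2 (glue r (r • y))‖ = |r| * s := by
      intro r
      have : WithLp.toLp 2 (glue r (r • y)) = r • WithLp.toLp 2 (glue 1 y) := by
        ext i
        refine Fin.cases ?_ (fun j => ?_) i <;> simp [glue_zero, glue_succ]
      rw [this, norm_smul, Real.norm_eq_abs]
    have hpt : ∀ r : ℝ, r ≠ 0 → ENNReal.ofReal |r| ^ d * (Phi H (glue r (r • y)) * N (glue r (r • y))) =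
        (Set.Ioo (-s⁻¹) s⁻¹).indicator (fun _ => ENNReal.ofReal s * H (-y)) r := by
      intro r hr
      have hr' : 0 < |r| := abs_pos.2 hr
      simp only [hN, hn, Phi, glue_zero, glue_succ, Pi.smul_apply, smul_eq_mul, inv_mul_cancel_left₀ hr]
      have hiff : |r| * s ∈ Set.Iio (1 : ℝ) ↔ r ∈ Set.Ioo (-s⁻¹) s⁻¹ := by
        rw [Set.mem_Iio, Set.mem_Ioo, ← abs_lt, ← lt_div_iff₀ hs0, one_div]
      by_cases h1 : r ∈ Set.Ioo (-s⁻¹) s⁻¹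
      · rw [Set.indicator_of_mem h1, Set.indicator_of_mem (hiff.2 h1), ENNReal.ofReal_mul hr'.le, abs_inv]
        have : ENNReal.ofReal |r| ^ d * ENNReal.ofReal |r|⁻¹ ^ (d + 1) * ENNReal.ofReal |r| = 1 := by
          rw [← ENNReal.ofReal_pow (inv_pos.2 hr').le, ← ENNReal.ofReal_pow hr'.le, ← ENNReal.ofReal_mul (by positivity),
            ← ENNReal.ofReal_mul (by positivity)]
          rw [← ENNReal.ofReal_one]; congr 1
          rw [inv_pow, pow_succ]; field_simp
        calc _ = (ENNReal.ofReal |r| ^ d * ENNReal.ofReal |r|⁻¹ ^ (d + 1) * ENNReal.ofReal |r|) *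
              (ENNReal.ofReal s * H (fun i => - y i)) := by ring
          _ = _ := by rw [this, one_mul]; rfl
      · rw [Set.indicator_of_notMem h1, Set.indicator_of_notMem (fun h => h1 (hiff.1 h))]; simp
    have hae : ∀ᵐ r : ℝ, r ≠ 0 := by simp [ae_iff]
    rw [lintegral_congr_ae (hae.mono hpt), lintegral_indicator measurableSet_Ioo, setLIntegral_const,
      Real.volume_Ioo]
    rw [mul_right_comm, ← ENNReal.ofReal_mul hs0.le]
    congr 1
    rw [show s * (s⁻¹ - -s⁻¹) = 2 by field_simp; norm_num]; simp
  rw [← key1, key2]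

theorem sphere_null {d : ℕ} : ∀ᵐ θ : sphere (0 : EuclideanSpace ℝ (Fin (d + 1))) 1 ∂(volume.toSphere),
    (θ : EuclideanSpace ℝ (Fin (d + 1))) 0 ≠ 0 := by
  have hms : MeasurableSet {θ : sphere (0 : EuclideanSpace ℝ (Fin (d + 1))) 1 | (θ : EuclideanSpace ℝ (Fin (d + 1))) 0 = 0} := by
    have : Measurable (fun θ : sphere (0 : EuclideanSpace ℝ (Fin (d + 1))) 1 => (θ : EuclideanSpace ℝ (Fin (d + 1))) 0) := by fun_prop
    exact this (measurableSet_singleton 0)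
  rw [ae_iff]
  simp only [not_not]
  rw [Measure.toSphere_apply' _ hms]
  refine mul_eq_zero.2 (Or.inr ?_)
  let S : Submodule ℝ (EuclideanSpace ℝ (Fin (d + 1))) := LinearMap.ker
    (EuclideanSpace.proj (𝕜 := ℝ) (0 : Fin (d + 1)) : EuclideanSpace ℝ (Fin (d + 1)) →L[ℝ] ℝ).toLinearMap
  refine measure_mono_null ?_ (Measure.addHaar_submodule volume S ?_)
  · rintro _ ⟨r, _, _, ⟨θ, hθ, rfl⟩, rfl⟩
    have hθ : (θ : EuclideanSpace ℝ (Fin (d + 1))) 0 = 0 := hθ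
    simp [S, hθ]
  · intro h
    have : EuclideanSpace.single (0 : Fin (d + 1)) (1 : ℝ) ∈ S := h ▸ Submodule.mem_top
    simp [S] at this

theorem sphere_mass {d : ℕ} : (volume : Measure (EuclideanSpace ℝ (Fin (d + 1)))).toSphere Set.univ =
    ENNReal.ofReal (sphereArea d) := by
  rw [Measure.toSphere_apply_univ, EuclideanSpace.volume_ball]
  simp only [finrank_euclideanSpace, Fintype.card_fin, sphereArea]
  rw [ENNReal.ofReal_one, one_pow, one_mul, ← ENNReal.ofReal_natCast, ← ENNReal.ofReal_mul (by positivity)]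
  congr 1
  have h : 0 < ((d + 1 : ℕ) : ℝ) / 2 := by positivity
  rw [Real.Gamma_add_one h.ne', Real.sqrt_eq_rpow, ← Real.rpow_natCast, ← Real.rpow_mul Real.pi_pos.le]
  have := Real.Gamma_pos_of_pos h
  push_cast at *
  rw [show 1 / 2 * ((d : ℝ) + 1) = ((d : ℝ) + 1) / 2 by ring]
  field_simp

theorem sphereArea_sqrt (m : ℕ) :
    sphereArea m = 2 * √π ^ (m + 1) / Real.Gamma (((m + 1 : ℕ) : ℝ) / 2) := by
  rw [sphereArea, Real.sqrt_eq_rpow, ← Real.rpow_natCast, ← Real.rpow_mul Real.pi_pos.le]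
  push_cast
  rw [show 1 / 2 * ((m : ℝ) + 1) = ((m : ℝ) + 1) / 2 by ring]

theorem const_eq (d : ℕ) : (sphereArea d)⁻¹ * (2 * ((Real.Gamma (((d + 1 : ℕ) : ℝ) / 2) ^ (d + 2))⁻¹ *
      (√π ^ (d + 2) * Real.Gamma (((d + 2 : ℕ) : ℝ) / 2) ^ d))) =
    sphereArea d ^ (d + 1) / (2 * sphereArea (d + 1) ^ d) := by
  rw [sphereArea_sqrt, sphereArea_sqrt]
  have hA : 0 < Real.Gamma (((d + 1 : ℕ) : ℝ) / 2) := Real.Gamma_pos_of_pos (by positivity)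
  have hB : 0 < Real.Gamma (((d + 1 + 1 : ℕ) : ℝ) / 2) := Real.Gamma_pos_of_pos (by positivity)
  have hp : 0 < √π := Real.sqrt_pos.2 Real.pi_pos
  rw [show d + 2 = d + 1 + 1 from rfl]
  generalize Real.Gamma (((d + 1 : ℕ) : ℝ) / 2) = A at *
  generalize Real.Gamma (((d + 1 + 1 : ℕ) : ℝ) / 2) = B at *
  generalize √π = p at *
  simp only [div_pow, mul_pow, ← pow_mul]
  rw [inv_div, show (d + 1) * (d + 1) = (d + 1 + 1) * d + 1 by ring, pow_succ p ((d + 1 + 1) * d)]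
  field_simp
  ring

theorem lint_main {d : ℕ} {f : EuclideanSpace ℝ (Fin (d + 1)) → ℝ≥0∞} (hf : Measurable f) :
    ∫⁻ θ, ∫⁻ t : ℝ, Radon (d + 1) f θ t ^ (d + 2) ∂volume ∂(sphMeasure (d + 1)) ≤
    ENNReal.ofReal (sphereArea d ^ (d + 1) / (2 * sphereArea (d + 1) ^ d)) *
      (∫⁻ x, f x ^ (((d + 2 : ℕ) : ℝ) / ((d + 1 : ℕ) : ℝ))) ^ (d + 1) := by
  have hg : Measurable (fun x : Fin (d + 1) → ℝ => f (WithLp.toLp 2 x)) :=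
    hf.comp (PiLp.volume_preserving_toLp (Fin (d + 1))).measurable
  set g : (Fin (d + 1) → ℝ) → ℝ≥0∞ := fun x => f (WithLp.toLp 2 x) with hgdef
  have hJ : ∫⁻ x, f x ^ (((d + 2 : ℕ) : ℝ) / ((d + 1 : ℕ) : ℝ)) = ∫⁻ x, g x ^ (((d + 2 : ℕ) : ℝ) / ((d + 1 : ℕ) : ℝ)) :=
    ((PiLp.volume_preserving_toLp (Fin (d + 1))).lintegral_comp (hf.pow_const _)).symm
  have hσ : 0 < sphereArea d := by
    rw [sphereArea_sqrt]
    have hA : 0 < Real.Gamma (((d + 1 : ℕ) : ℝ) / 2) := Real.Gamma_pos_of_pos (by positivity)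
    have hp : 0 < √π := Real.sqrt_pos.2 Real.pi_pos
    positivity
  have hA : 0 < Real.Gamma (((d + 1 : ℕ) : ℝ) / 2) := Real.Gamma_pos_of_pos (by positivity)
  have hB : 0 < Real.Gamma (((d + 2 : ℕ) : ℝ) / 2) := Real.Gamma_pos_of_pos (by positivity)
  have h1 : ∫⁻ θ, ∫⁻ t : ℝ, Radon (d + 1) f θ t ^ (d + 2) ∂volume ∂(sphMeasure (d + 1)) =
      ENNReal.ofReal (sphereArea d)⁻¹ * (2 * ∫⁻ c, Rg g c ^ (d + 2)) := by
    rw [sphMeasure, lintegral_smul_measure, sphere_mass, smul_eq_mul, ENNReal.ofReal_inv_of_pos hσ,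
      ← lint_Hg hg, ← sphere_int (measurable_Hg hg)]
    congr 1
    exact lintegral_congr_ae (sphere_null.mono fun θ h => radon_int hf θ h)
  have h2 := graph_ineq hg
  rw [h1, hJ, ← const_eq, ENNReal.ofReal_mul (by positivity), mul_assoc]
  refine mul_le_mul_right ?_ _
  rw [ENNReal.ofReal_mul (by norm_num), mul_assoc, ENNReal.ofReal_ofNat]
  refine mul_le_mul_right ?_ _
  rw [ENNReal.ofReal_mul (by positivity), mul_assoc, ENNReal.ofReal_mul (by positivity),
    ENNReal.ofReal_pow (by positivity), ENNReal.ofReal_pow hB.le]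
  refine le_trans (le_of_eq ?_) (mul_le_mul_right h2 _)
  rw [← mul_assoc, ← ENNReal.ofReal_pow hA.le, ← ENNReal.ofReal_mul (by positivity),
    inv_mul_cancel₀ (by positivity)]
  simp

/-- The sharp `L^{(n+1)/n} → L^{n+1}` estimate of Oberlin–Stein, Christ, Drury and Drouot for
the hyperplane Radon transform, with the sharp constant
`Ω = (σ_{n-1}^n / (2 σ_n^{n-1}))^{1/(n+1)}`. -/
theorem stmt5 (n : ℕ) (hn : 2 ≤ n) (Ω : ℝ)
    (hΩ : Ω = (sphereArea (n - 1) ^ n / (2 * sphereArea n ^ (n - 1))) ^ (1 / ((n : ℝ) + 1)))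
    (f : EuclideanSpace ℝ (Fin n) → ℝ≥0∞) (hf : Measurable f) :
    (∫⁻ θ, ∫⁻ t : ℝ, Radon n f θ t ^ ((n : ℝ) + 1) ∂volume ∂(sphMeasure n)) ^
        (1 / ((n : ℝ) + 1)) ≤
      ENNReal.ofReal Ω *
        (∫⁻ x, f x ^ (((n : ℝ) + 1) / n)) ^ ((n : ℝ) / ((n : ℝ) + 1)) := by
  obtain ⟨d, rfl⟩ : ∃ d, n = d + 1 := ⟨n - 1, by omega⟩
  have e1 : (((d + 1 : ℕ) : ℝ) + 1) = ((d + 2 : ℕ) : ℝ) := by push_cast; ring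
  have hC : 0 ≤ sphereArea d ^ (d + 1) / (2 * sphereArea (d + 1) ^ d) := by
    rw [sphereArea_sqrt, sphereArea_sqrt]
    have hA : 0 < Real.Gamma (((d + 1 : ℕ) : ℝ) / 2) := Real.Gamma_pos_of_pos (by positivity)
    have hB : 0 < Real.Gamma (((d + 1 + 1 : ℕ) : ℝ) / 2) := Real.Gamma_pos_of_pos (by positivity)
    positivity
  have h := lint_main hf
  rw [hΩ, e1]
  simp only [ENNReal.rpow_natCast, Nat.add_sub_cancel]
  rw [← ENNReal.ofReal_rpow_of_nonneg hC (by positivity)]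
  have h2 := ENNReal.rpow_le_rpow h (show 0 ≤ 1 / ((d + 2 : ℕ) : ℝ) by positivity)
  rw [ENNReal.mul_rpow_of_nonneg _ _ (by positivity), ← ENNReal.rpow_natCast _ (d + 1),
    ← ENNReal.rpow_mul, mul_one_div] at h2
  exact h2
end
end

section
/- Let S ⊆ ℝ^n be a Borel measurable set, let 1 ≤ p < ∞ be real, let μ > (n−1) − n/p, and set ν = μ − (n−1)/p′ and ω = π^{(n−1)/(2p′)} · (Γ(n/2)/Γ(1/2))^{1/p} · Γ((μ + n/p − n + 1)/2) / Γ((μ + n/p)/2). Then ∫_{S^{n-1}} ∫_ℝ ( V_{n-1}(S ∩ (θ^⊥ + tθ)) )^p |t|^{νp} dt d*θ ≤ ω^p · ∫_S |x|^{μp} dx, the inequality holding in [0,∞]. (Case k = n−1 of the paper's weighted volume estimate for planar cross-sections of a measurable set.) -/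
open MeasureTheory Metric Real
open scoped ENNReal NNReal

noncomputable section

/-- `V_{n-1}(S ∩ (θ^⊥ + tθ))`: the (n-1)-dimensional Lebesgue measure, computed in `θ^⊥`,
of the section of `S` by the affine hyperplane `θ^⊥ + tθ`. -/
def sectVol (n : ℕ) (S : Set (EuclideanSpace ℝ (Fin n)))
    (θ : sphere (0 : EuclideanSpace ℝ (Fin n)) 1) (t : ℝ) : ℝ≥0∞ :=
  volume {y : ((ℝ ∙ (θ : EuclideanSpace ℝ (Fin n)))ᗮ) |
    t • (θ : EuclideanSpace ℝ (Fin n)) + (y : EuclideanSpace ℝ (Fin n)) ∈ S}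

theorem lint_of_integral {α : Type*} [MeasurableSpace α] {m : Measure α} {f : α → ℝ}
    (h0 : 0 ≤ᵐ[m] f) {c : ℝ} (hc : 0 < c) (h : ∫ x, f x ∂m = c) :
    ∫⁻ x, ENNReal.ofReal (f x) ∂m = ENNReal.ofReal c := by
  have hi : Integrable f m := .of_integral_ne_zero (by rw [h]; exact hc.ne')
  rw [← ofReal_integral_eq_lintegral_ofReal hi h0, h]

theorem lint_decomp {E : Type*} [NormedAddCommGroup E] [InnerProductSpace ℝ E]
    [FiniteDimensional ℝ E] [MeasurableSpace E] [BorelSpace E] (θ : E) (hθ : ‖θ‖ = 1)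
    (F : E → ℝ≥0∞) (hF : Measurable F) :
    ∫⁻ t : ℝ, ∫⁻ y : (ℝ ∙ θ)ᗮ, F (t • θ + y) = ∫⁻ x, F x := by
  have h1 := (LinearIsometryEquiv.toSpanUnitSingleton (𝕜 := ℝ) θ hθ).measurePreserving
  have h2 := (h1.prod (MeasurePreserving.id (volume : Measure (ℝ ∙ θ)ᗮ)))
  have h3 := (ℝ ∙ θ).orthogonalDecomposition.symm.measurePreserving.comp
    ((WithLp.volume_preserving_toLp (ℝ ∙ θ) (ℝ ∙ θ)ᗮ).comp h2)
  rw [← h3.lintegral_comp hF, lintegral_prod]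
  · simp
  · exact (hF.comp h3.measurable).aemeasurable

theorem lint_gauss {V : Type*} [NormedAddCommGroup V] [InnerProductSpace ℝ V]
    [FiniteDimensional ℝ V] [MeasurableSpace V] [BorelSpace V] {s : ℝ} (hs : 0 < s) :
    ∫⁻ y : V, ENNReal.ofReal (rexp (-s * ‖y‖ ^ 2)) =
      ENNReal.ofReal ((π / s) ^ (Module.finrank ℝ V / 2 : ℝ)) :=
  lint_of_integral (.of_forall fun _ => (exp_pos _).le) (by positivity)
    (GaussianFourier.integral_rexp_neg_mul_sq_norm hs)

theorem lint_gamma {c r : ℝ} (hc : 0 < c) (hr : 0 < r) :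
    ∫⁻ s in Set.Ioi (0:ℝ), ENNReal.ofReal (s ^ (c - 1) * rexp (-(r * s))) =
      ENNReal.ofReal ((1 / r) ^ c * Gamma c) := by
  refine lint_of_integral ?_ ?_ (integral_rpow_mul_exp_neg_mul_Ioi hc hr)
  · filter_upwards [ae_restrict_mem measurableSet_Ioi] with s hs
    have : 0 < s := hs
    simp only [Pi.zero_apply]; positivity
  · have := Gamma_pos_of_pos hc
    positivity

theorem lint_cauchy {V : Type*} [NormedAddCommGroup V] [InnerProductSpace ℝ V]
    [FiniteDimensional ℝ V] [MeasurableSpace V] [BorelSpace V] {a t : ℝ}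
    (ha : (Module.finrank ℝ V : ℝ) < a) (ht : t ≠ 0) :
    ∫⁻ y : V, ENNReal.ofReal ((t ^ 2 + ‖y‖ ^ 2) ^ (-a / 2)) =
      ENNReal.ofReal (|t| ^ (Module.finrank ℝ V - a) * (π ^ (Module.finrank ℝ V / 2 : ℝ) *
        Gamma ((a - Module.finrank ℝ V) / 2) / Gamma (a / 2))) := by
  set m : ℝ := (Module.finrank ℝ V : ℝ) with hm
  have hm0 : 0 ≤ m := Nat.cast_nonneg _
  have ha2 : 0 < a / 2 := by linarith
  have hG := Gamma_pos_of_pos ha2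
  have ht2 : 0 < t ^ 2 := by positivity
  have key : ∫⁻ y : V, ENNReal.ofReal (((1 / (t ^ 2 + ‖y‖ ^ 2)) ^ (a / 2)) * Gamma (a / 2)) =
      ENNReal.ofReal (π ^ (m / 2) * ((1 / t ^ 2) ^ ((a - m) / 2) * Gamma ((a - m) / 2))) := by
    have e1 : ∀ y : V, ENNReal.ofReal (((1 / (t ^ 2 + ‖y‖ ^ 2)) ^ (a / 2)) * Gamma (a / 2)) =
        ∫⁻ s in Set.Ioi (0:ℝ),
          ENNReal.ofReal (s ^ (a / 2 - 1) * rexp (-((t ^ 2 + ‖y‖ ^ 2) * s))) := fun y =>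
      (lint_gamma ha2 (by positivity)).symm
    simp_rw [e1]
    rw [lintegral_lintegral_swap (by fun_prop)]
    rw [ENNReal.ofReal_mul (by positivity), ← lint_gamma (by linarith) ht2,
      ← lintegral_const_mul _ (by fun_prop)]
    refine setLIntegral_congr_fun measurableSet_Ioi fun s hs => ?_
    have hs : 0 < s := hs
    have e2 : ∀ y : V, ENNReal.ofReal (s ^ (a / 2 - 1) * rexp (-((t ^ 2 + ‖y‖ ^ 2) * s))) =
        ENNReal.ofReal (s ^ (a / 2 - 1) * rexp (-(t ^ 2 * s))) *
          ENNReal.ofReal (rexp (-s * ‖y‖ ^ 2)) := fun y => by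
      rw [← ENNReal.ofReal_mul (by positivity), mul_assoc, ← exp_add]
      congr 3; ring
    simp_rw [e2]
    rw [lintegral_const_mul _ (by fun_prop), lint_gauss hs, ← hm,
      ← ENNReal.ofReal_mul (by positivity), ← ENNReal.ofReal_mul (by positivity)]
    congr 1
    rw [div_rpow pi_pos.le hs.le, show (a - m) / 2 - 1 = (a / 2 - 1) - m / 2 by ring,
      rpow_sub hs (a / 2 - 1) (m / 2)]
    ring
  simp_rw [ENNReal.ofReal_mul' hG.le] at key
  rw [lintegral_mul_const _ (by fun_prop)] at key
  have hGn : ENNReal.ofReal (Gamma (a / 2)) ≠ 0 := by simpa using hG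
  rw [mul_comm, ← ENNReal.eq_div_iff hGn ENNReal.ofReal_ne_top,
    ← ENNReal.ofReal_div_of_pos hG] at key
  have e3 : ∀ y : V, (t ^ 2 + ‖y‖ ^ 2) ^ (-a / 2) = (1 / (t ^ 2 + ‖y‖ ^ 2)) ^ (a / 2) := fun y => by
    rw [one_div, inv_rpow (by positivity), ← rpow_neg (by positivity)]
    congr 1; ring
  simp_rw [e3]
  rw [key]
  congr 1
  have e4 : (1 / t ^ 2) ^ ((a - m) / 2) = |t| ^ (m - a) := by
    rw [one_div, inv_rpow (by positivity), ← rpow_neg (by positivity), ← sq_abs,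
      ← rpow_natCast, ← rpow_mul (abs_nonneg _)]
    congr 1; push_cast; ring
  rw [e4]; ring

theorem lint_polar_s8 {E : Type*} [NormedAddCommGroup E] [InnerProductSpace ℝ E]
    [FiniteDimensional ℝ E] [Nontrivial E] [MeasurableSpace E] [BorelSpace E]
    (F : E → ℝ≥0∞) (hF : Measurable F) :
    ∫⁻ x, F x = ∫⁻ θ, ∫⁻ r in Set.Ioi (0:ℝ),
      ENNReal.ofReal (r ^ (Module.finrank ℝ E - 1)) * F (r • (θ : E))
        ∂volume ∂(volume : Measure E).toSphere := by
  have hmp := (volume : Measure E).measurePreserving_homeomorphUnitSphereProd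
  have hm1 : Measurable fun z : sphere (0 : E) 1 × Set.Ioi (0 : ℝ) => F (z.2.1 • (z.1 : E)) :=
    hF.comp (by fun_prop)
  calc ∫⁻ x, F x = ∫⁻ x : ({(0)}ᶜ : Set E), F x.1 ∂((volume : Measure E).comap Subtype.val) := by
        rw [lintegral_subtype_comap (measurableSet_singleton _).compl F,
          restrict_compl_singleton]
    _ = ∫⁻ z, F (z.2.1 • (z.1 : E)) ∂(volume : Measure E).toSphere.prod
          (.volumeIoiPow (Module.finrank ℝ E - 1)) := by
        rw [← hmp.lintegral_comp hm1]
        refine lintegral_congr fun x => ?_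
        congr 1
        have hx : ‖(x : E)‖ ≠ 0 := norm_ne_zero_iff.2 x.2
        simp [smul_smul, hx]
    _ = _ := by
        rw [lintegral_prod _ hm1.aemeasurable]
        refine lintegral_congr fun θ => ?_
        have hm2 : Measurable fun r : ℝ => F (r • (θ : E)) := hF.comp (by fun_prop)
        unfold Measure.volumeIoiPow
        dsimp only
        rw [lintegral_withDensity_eq_lintegral_mul _ (by fun_prop)
          (f := fun r : Set.Ioi (0:ℝ) => ENNReal.ofReal (r.1 ^ (Module.finrank ℝ E - 1)))
          (g := fun r : Set.Ioi (0:ℝ) => F (r.1 • (θ : E))) (hm2.comp measurable_subtype_coe)]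
        exact lintegral_subtype_comap measurableSet_Ioi
          (fun r : ℝ => ENNReal.ofReal (r ^ (Module.finrank ℝ E - 1)) * F (r • (θ : E)))

theorem lint_rpow_gauss {q : ℝ} (hq : -1 < q) :
    ∫⁻ r in Set.Ioi (0:ℝ), ENNReal.ofReal (r ^ q * rexp (-r ^ 2)) =
      ENNReal.ofReal (Gamma ((q + 1) / 2) / 2) := by
  have hG : 0 < Gamma ((q + 1) / 2) := Gamma_pos_of_pos (by linarith)
  refine lint_of_integral ?_ (by positivity) ?_
  · filter_upwards [ae_restrict_mem measurableSet_Ioi] with s hs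
    have : 0 < s := hs
    simp only [Pi.zero_apply]; positivity
  · have := integral_rpow_mul_exp_neg_mul_rpow (p := 2) (q := q) (b := 1) two_pos hq one_pos
    simp only [rpow_two, one_rpow, one_mul, neg_mul] at this
    rw [this]; ring

theorem lint_abs_rpow_gauss {q : ℝ} (hq : -1 < q) :
    ∫⁻ r : ℝ, ENNReal.ofReal (|r| ^ q * rexp (-r ^ 2)) =
      ENNReal.ofReal (Gamma ((q + 1) / 2)) := by
  have hG : 0 < Gamma ((q + 1) / 2) := Gamma_pos_of_pos (by linarith)
  refine lint_of_integral (.of_forall fun _ => by simp only [Pi.zero_apply]; positivity) hG ?_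
  have := integral_rpow_mul_exp_neg_mul_rpow (p := 2) (q := q) (b := 1) two_pos hq one_pos
  simp only [rpow_two, one_rpow, one_mul, neg_mul] at this
  have h2 := integral_comp_abs (f := fun r : ℝ => r ^ q * rexp (-r ^ 2))
  simp only [sq_abs] at h2
  rw [h2, this]; ring

theorem finrank_orth {n : ℕ} (u : EuclideanSpace ℝ (Fin n)) (hu : ‖u‖ = 1) :
    (Module.finrank ℝ (ℝ ∙ u)ᗮ : ℝ) = n - 1 := by
  have h1 : Module.finrank ℝ (ℝ ∙ u) = 1 :=
    finrank_span_singleton (by rintro rfl; simp at hu)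
  have h2 := (ℝ ∙ u).finrank_add_finrank_orthogonal
  rw [h1, finrank_euclideanSpace_fin] at h2
  have h3 : (1 : ℝ) + (Module.finrank ℝ (ℝ ∙ u)ᗮ : ℝ) = n := by exact_mod_cast h2
  linarith

theorem norm_sq_decomp {n : ℕ} (u : EuclideanSpace ℝ (Fin n)) (hu : ‖u‖ = 1) (t : ℝ)
    (y : (ℝ ∙ u)ᗮ) :
    ‖t • u + (y : EuclideanSpace ℝ (Fin n))‖ ^ 2 = t ^ 2 + ‖y‖ ^ 2 := by
  have hy : inner ℝ u (y : EuclideanSpace ℝ (Fin n)) = 0 :=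
    Submodule.mem_orthogonal_singleton_iff_inner_right.1 y.2
  rw [norm_add_sq_real, inner_smul_left, hy, norm_smul, hu]; simp

theorem inner_decomp {n : ℕ} (u : EuclideanSpace ℝ (Fin n)) (hu : ‖u‖ = 1) (t : ℝ)
    (y : (ℝ ∙ u)ᗮ) :
    inner ℝ u (t • u + (y : EuclideanSpace ℝ (Fin n))) = t := by
  have hy : inner ℝ u (y : EuclideanSpace ℝ (Fin n)) = 0 :=
    Submodule.mem_orthogonal_singleton_iff_inner_right.1 y.2
  rw [inner_add_right, inner_smul_right, hy, real_inner_self_eq_norm_sq, hu]; simp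

/-- Spherical moments, un-normalized, for a unit vector. -/
theorem lint_sphere_moment {n : ℕ} (hn : 2 ≤ n) {b : ℝ} (hb : -1 < b)
    (u : EuclideanSpace ℝ (Fin n)) (hu : ‖u‖ = 1) :
    ∫⁻ θ, ENNReal.ofReal (|inner ℝ u (θ : EuclideanSpace ℝ (Fin n))| ^ b)
        ∂(volume : Measure (EuclideanSpace ℝ (Fin n))).toSphere =
      ENNReal.ofReal (2 * π ^ (((n : ℝ) - 1) / 2) * Gamma ((b + 1) / 2) /
        Gamma ((b + n) / 2)) := by
  have hn' : (2 : ℝ) ≤ n := by exact_mod_cast hn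
  have : Nontrivial (EuclideanSpace ℝ (Fin n)) := ⟨⟨u, 0, by rintro rfl; simp at hu⟩⟩
  have hG1 : 0 < Gamma ((b + 1) / 2) := Gamma_pos_of_pos (by linarith)
  have hG2 : 0 < Gamma ((b + n) / 2) := Gamma_pos_of_pos (by linarith)
  have hfin := finrank_orth u hu
  set F : EuclideanSpace ℝ (Fin n) → ℝ≥0∞ :=
    fun x => ENNReal.ofReal (|inner ℝ u x| ^ b * rexp (-‖x‖ ^ 2)) with hFdef
  have hF : Measurable F := by fun_prop
  have A : ∫⁻ x, F x = ENNReal.ofReal (Gamma ((b + 1) / 2)) *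
      ENNReal.ofReal (π ^ (((n : ℝ) - 1) / 2)) := by
    rw [← lint_decomp u hu F hF, ← lint_abs_rpow_gauss hb, ← lintegral_mul_const _ (by fun_prop)]
    refine lintegral_congr fun t => ?_
    have hg := lint_gauss (V := (ℝ ∙ u)ᗮ) one_pos
    rw [hfin, div_one] at hg
    rw [← hg, ← lintegral_const_mul _ (by fun_prop)]
    refine lintegral_congr fun y => ?_
    rw [← ENNReal.ofReal_mul (by positivity), mul_assoc, ← exp_add]
    have h1 := inner_decomp u hu t y
    have h2 := norm_sq_decomp u hu t y
    simp only [hFdef, h1, h2]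
    congr 3; ring
  have B : ∫⁻ x, F x = (∫⁻ θ, ENNReal.ofReal (|inner ℝ u (θ : EuclideanSpace ℝ (Fin n))| ^ b)
        ∂(volume : Measure (EuclideanSpace ℝ (Fin n))).toSphere) *
        ENNReal.ofReal (Gamma ((b + n) / 2) / 2) := by
    rw [lint_polar_s8 F hF, ← lintegral_mul_const _ (by fun_prop)]
    refine lintegral_congr fun θ => ?_
    have hg := lint_rpow_gauss (q := b + n - 1) (by linarith)
    rw [sub_add_cancel] at hg
    rw [← hg, ← lintegral_const_mul _ (by fun_prop)]
    refine setLIntegral_congr_fun measurableSet_Ioi fun r hr => ?_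
    have hr : 0 < r := hr
    simp only [hFdef]
    rw [← ENNReal.ofReal_mul (by positivity), ← ENNReal.ofReal_mul (by positivity),
      inner_smul_right, norm_smul, norm_eq_of_mem_sphere θ, abs_mul, mul_rpow (by positivity)
      (by positivity), finrank_euclideanSpace_fin, norm_eq_abs, abs_of_pos hr, ← rpow_natCast,
      Nat.cast_sub (by omega), show b + n - 1 = b + (n - 1 : ℝ) by ring, rpow_add hr]
    simp only [mul_one, Nat.cast_one]
    congr 1; ring
  rw [A, mul_comm _ (ENNReal.ofReal (Gamma ((b + n) / 2) / 2))] at B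
  have hz : ENNReal.ofReal (Gamma ((b + n) / 2) / 2) ≠ 0 := by simpa using hG2
  rw [(ENNReal.eq_div_iff hz ENNReal.ofReal_ne_top).2 B.symm, ← ENNReal.ofReal_mul hG1.le,
    ← ENNReal.ofReal_div_of_pos (by positivity)]
  congr 1
  field_simp

theorem sph_moment {n : ℕ} (hn : 2 ≤ n) {b : ℝ} (hb : -1 < b)
    (x : EuclideanSpace ℝ (Fin n)) (hx : x ≠ 0) :
    ∫⁻ θ, ENNReal.ofReal (|inner ℝ (θ : EuclideanSpace ℝ (Fin n)) x| ^ b) ∂(sphMeasure n) =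
      ENNReal.ofReal (‖x‖ ^ b * (Gamma ((n : ℝ) / 2) / Gamma (1 / 2) * Gamma ((b + 1) / 2) /
        Gamma ((b + n) / 2))) := by
  have hn' : (2 : ℝ) ≤ n := by exact_mod_cast hn
  have hG1 : 0 < Gamma ((b + 1) / 2) := Gamma_pos_of_pos (by linarith)
  have hG2 : 0 < Gamma ((b + n) / 2) := Gamma_pos_of_pos (by linarith)
  have hG3 : 0 < Gamma ((n : ℝ) / 2) := Gamma_pos_of_pos (by linarith)
  have hG4 : 0 < Gamma (1 / 2 : ℝ) := Gamma_pos_of_pos (by norm_num)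
  have hx' : 0 < ‖x‖ := norm_pos_iff.2 hx
  set u := ‖x‖⁻¹ • x with hu_def
  have hu : ‖u‖ = 1 := by rw [hu_def, norm_smul, norm_inv, norm_norm]; field_simp
  have hxu : x = ‖x‖ • u := by rw [hu_def, smul_smul, mul_inv_cancel₀ hx'.ne', one_smul]
  have h0 := lint_sphere_moment hn (b := 0) (by norm_num) u hu
  have h1 := lint_sphere_moment hn hb u hu
  simp only [rpow_zero, ENNReal.ofReal_one, lintegral_const, one_mul, zero_add] at h0
  have e : ∀ θ : sphere (0 : EuclideanSpace ℝ (Fin n)) 1,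
      ENNReal.ofReal (|inner ℝ (θ : EuclideanSpace ℝ (Fin n)) x| ^ b) =
      ENNReal.ofReal (‖x‖ ^ b) *
        ENNReal.ofReal (|inner ℝ u (θ : EuclideanSpace ℝ (Fin n))| ^ b) := fun θ => by
    rw [← ENNReal.ofReal_mul (by positivity), ← mul_rpow (by positivity) (by positivity)]
    congr 2
    conv_lhs => rw [hxu]
    rw [inner_smul_right, abs_mul, abs_norm, real_inner_comm]
  simp_rw [e]
  rw [lintegral_const_mul _ (by fun_prop), sphMeasure, lintegral_smul_measure, h1, h0,
    smul_eq_mul, ← ENNReal.ofReal_inv_of_pos (by positivity),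
    ← ENNReal.ofReal_mul (by positivity), ← ENNReal.ofReal_mul (by positivity)]
  congr 1
  field_simp

theorem sect_bound {n : ℕ} (hn : 2 ≤ n) (S : Set (EuclideanSpace ℝ (Fin n)))
    (hS : MeasurableSet S) {p : ℝ} (hp : 1 ≤ p) {a : ℝ} (ha : (n : ℝ) - 1 < a)
    (θ : sphere (0 : EuclideanSpace ℝ (Fin n)) 1) {t : ℝ} (ht : t ≠ 0) :
    sectVol n S θ t ^ p ≤
      ENNReal.ofReal ((|t| ^ (n - 1 - a) * (π ^ (((n : ℝ) - 1) / 2) *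
        Gamma ((a - (n - 1)) / 2) / Gamma (a / 2))) ^ (p - 1)) *
      ∫⁻ y : ((ℝ ∙ (θ : EuclideanSpace ℝ (Fin n)))ᗮ), S.indicator 1
        (t • (θ : EuclideanSpace ℝ (Fin n)) + (y : EuclideanSpace ℝ (Fin n))) *
        ENNReal.ofReal (‖t • (θ : EuclideanSpace ℝ (Fin n)) +
          (y : EuclideanSpace ℝ (Fin n))‖ ^ (a * (p - 1))) := by
  have hn' : (2 : ℝ) ≤ n := by exact_mod_cast hn
  have hp0 : 0 < p := by linarith
  have hθ : ‖(θ : EuclideanSpace ℝ (Fin n))‖ = 1 := norm_eq_of_mem_sphere θ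
  have hG1 : 0 < Gamma ((a - (n - 1)) / 2) := Gamma_pos_of_pos (by linarith)
  have hG2 : 0 < Gamma (a / 2) := Gamma_pos_of_pos (by linarith)
  set X : ((ℝ ∙ (θ : EuclideanSpace ℝ (Fin n)))ᗮ) → EuclideanSpace ℝ (Fin n) :=
    fun y => t • (θ : EuclideanSpace ℝ (Fin n)) + (y : EuclideanSpace ℝ (Fin n)) with hX
  have hXm : Measurable X := by fun_prop
  have hXsq : ∀ y, ‖X y‖ ^ 2 = t ^ 2 + ‖y‖ ^ 2 := norm_sq_decomp _ hθ t
  have hXpos : ∀ y, 0 < ‖X y‖ := fun y => by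
    have h1 : 0 < ‖X y‖ ^ 2 := by rw [hXsq]; positivity
    refine lt_of_le_of_ne (norm_nonneg _) fun h => ?_
    rw [← h] at h1; norm_num at h1
  have hind : Measurable (S.indicator (1 : EuclideanSpace ℝ (Fin n) → ℝ≥0∞)) :=
    measurable_one.indicator hS
  have hg : ∫⁻ y, ENNReal.ofReal (‖X y‖ ^ (-a)) = ENNReal.ofReal (|t| ^ (n - 1 - a) *
      (π ^ (((n : ℝ) - 1) / 2) * Gamma ((a - (n - 1)) / 2) / Gamma (a / 2))) := by
    have h := lint_cauchy (V := ((ℝ ∙ (θ : EuclideanSpace ℝ (Fin n)))ᗮ)) (a := a)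
      (by rw [finrank_orth _ hθ]; exact ha) ht
    rw [finrank_orth _ hθ] at h
    rw [← h]
    refine lintegral_congr fun y => ?_
    rw [← hXsq, ← rpow_natCast, ← rpow_mul (norm_nonneg _)]
    congr 2; push_cast; ring
  have hsect : sectVol n S θ t = ∫⁻ y, (S.indicator 1 (X y) *
      ENNReal.ofReal (‖X y‖ ^ (a * (p - 1)))) ^ (1 / p) *
      ENNReal.ofReal (‖X y‖ ^ (-a)) ^ (1 - 1 / p) := by
    have : sectVol n S θ t = volume (X ⁻¹' S) := rfl
    rw [this, ← lintegral_indicator_one (hXm hS)]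
    refine lintegral_congr fun y => ?_
    have hy := hXpos y
    by_cases h : X y ∈ S
    · rw [Set.indicator_of_mem h, Set.indicator_of_mem (show y ∈ X ⁻¹' S from h)]
      simp only [Pi.one_apply, one_mul]
      rw [ENNReal.ofReal_rpow_of_pos (by positivity), ENNReal.ofReal_rpow_of_pos (by positivity),
        ← ENNReal.ofReal_mul (by positivity), ← rpow_mul hy.le, ← rpow_mul hy.le, ← rpow_add hy]
      have : a * (p - 1) * (1 / p) + -a * (1 - 1 / p) = 0 := by field_simp; ring
      rw [this]; simp
    · rw [Set.indicator_of_notMem h, Set.indicator_of_notMem (show y ∉ X ⁻¹' S from h)]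
      rw [zero_mul, ENNReal.zero_rpow_of_pos (by positivity), zero_mul]
  have h1p : 0 ≤ 1 - 1 / p := by
    rw [sub_nonneg, div_le_one hp0]; exact hp
  have hhol := ENNReal.lintegral_mul_norm_pow_le (μ := volume)
    (f := fun y => S.indicator 1 (X y) * ENNReal.ofReal (‖X y‖ ^ (a * (p - 1))))
    (g := fun y => ENNReal.ofReal (‖X y‖ ^ (-a)))
    ((hind.comp hXm).mul (by fun_prop)).aemeasurable
    (by fun_prop) (p := 1 / p) (q := 1 - 1 / p) (by positivity) h1p (by ring)
  rw [← hsect, hg] at hhol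
  calc sectVol n S θ t ^ p ≤ _ := ENNReal.rpow_le_rpow hhol hp0.le
    _ = _ := by
      rw [ENNReal.mul_rpow_of_nonneg _ _ hp0.le, ← ENNReal.rpow_mul, ← ENNReal.rpow_mul,
        one_div_mul_cancel hp0.ne', ENNReal.rpow_one, mul_comm,
        ENNReal.ofReal_rpow_of_pos (by positivity)]
      congr 3
      field_simp

/-- Weighted volume estimate for hyperplane cross-sections of a Borel measurable set
(case `k = n-1`). -/
theorem stmt8 (n : ℕ) (hn : 2 ≤ n) (S : Set (EuclideanSpace ℝ (Fin n))) (hS : MeasurableSet S)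
    (p : ℝ) (hp : 1 ≤ p) (μ ν ω : ℝ)
    (hμ : μ > ((n : ℝ) - 1) - n / p)
    (hν : ν = μ - ((n : ℝ) - 1) * (1 - 1 / p))
    (hω : ω = Real.pi ^ (((n : ℝ) - 1) * (1 - 1 / p) / 2) *
      (Real.Gamma ((n : ℝ) / 2) / Real.Gamma (1 / 2)) ^ (1 / p) *
      Real.Gamma ((μ + (n : ℝ) / p - n + 1) / 2) / Real.Gamma ((μ + (n : ℝ) / p) / 2)) :
    (∫⁻ θ, ∫⁻ t : ℝ, sectVol n S θ t ^ p * ENNReal.ofReal |t| ^ (ν * p) ∂volume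
        ∂(sphMeasure n)) ≤
      ENNReal.ofReal ω ^ p * ∫⁻ x in S, ENNReal.ofReal ‖x‖ ^ (μ * p) := by
  have hn' : (2 : ℝ) ≤ n := by exact_mod_cast hn
  have hp0 : 0 < p := by linarith
  obtain ⟨a, ha_def⟩ : ∃ a, a = μ + (n : ℝ) / p := ⟨_, rfl⟩
  have ha : (n : ℝ) - 1 < a := by rw [ha_def]; linarith
  rw [show μ + (n : ℝ) / p - n + 1 = a - (n - 1) by rw [ha_def]; ring, ← ha_def] at hω
  have hG1 : 0 < Gamma ((a - (n - 1)) / 2) := Gamma_pos_of_pos (by linarith)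
  have hG2 : 0 < Gamma (a / 2) := Gamma_pos_of_pos (by linarith)
  have hG3 : 0 < Gamma ((n : ℝ) / 2) := Gamma_pos_of_pos (by linarith)
  have hG4 : 0 < Gamma (1 / 2 : ℝ) := Gamma_pos_of_pos (by norm_num)
  set C : ℝ := π ^ (((n : ℝ) - 1) / 2) * Gamma ((a - (n - 1)) / 2) / Gamma (a / 2) with hC
  have hCpos : 0 < C := by positivity
  set D : ℝ := Gamma ((n : ℝ) / 2) / Gamma (1 / 2) * Gamma ((a - (n - 1)) / 2) /
    Gamma (a / 2) with hD
  have hDpos : 0 < D := by positivity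
  have hωpos : 0 < ω := by rw [hω]; positivity
  have hconst : C ^ (p - 1) * D = ω ^ p := by
    have hGG : 0 < Gamma ((a - (n - 1)) / 2) / Gamma (a / 2) := by positivity
    have hNN : 0 < Gamma ((n : ℝ) / 2) / Gamma (1 / 2) := by positivity
    rw [hω, hC, hD, mul_div_assoc, mul_div_assoc, mul_div_assoc, mul_rpow (by positivity) hGG.le,
      mul_rpow (by positivity) hGG.le, mul_rpow (by positivity) (by positivity),
      ← rpow_mul pi_pos.le, ← rpow_mul pi_pos.le, ← rpow_mul hNN.le, one_div_mul_cancel hp0.ne',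
      rpow_one, rpow_sub_one hGG.ne',
      show ((n : ℝ) - 1) * (1 - 1 / p) / 2 * p = ((n : ℝ) - 1) / 2 * (p - 1) by field_simp]
    field_simp
  have hνp : ν * p = (a - n) - (n - 1 - a) * (p - 1) := by
    rw [hν, ha_def]; field_simp; ring
  have hind : Measurable (S.indicator (1 : EuclideanSpace ℝ (Fin n) → ℝ≥0∞)) :=
    measurable_one.indicator hS
  set K : EuclideanSpace ℝ (Fin n) → sphere (0 : EuclideanSpace ℝ (Fin n)) 1 → ℝ≥0∞ :=
    fun x θ => S.indicator 1 x * ENNReal.ofReal (‖x‖ ^ (a * (p - 1))) *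
      ENNReal.ofReal (|inner ℝ (θ : EuclideanSpace ℝ (Fin n)) x| ^ (a - n)) with hK
  have hKm : Measurable (fun z : sphere (0 : EuclideanSpace ℝ (Fin n)) 1 ×
      EuclideanSpace ℝ (Fin n) => K z.2 z.1) := by
    refine ((hind.comp measurable_snd).mul (by fun_prop)).mul (by fun_prop)
  have hKm1 : ∀ θ, Measurable (fun x => K x θ) := fun θ =>
    hKm.comp (measurable_const.prodMk measurable_id)
  have step : ∀ θ : sphere (0 : EuclideanSpace ℝ (Fin n)) 1,
      ∫⁻ t : ℝ, sectVol n S θ t ^ p * ENNReal.ofReal |t| ^ (ν * p) ≤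
        ENNReal.ofReal (C ^ (p - 1)) * ∫⁻ x, K x θ := fun θ => by
    have hθ : ‖(θ : EuclideanSpace ℝ (Fin n))‖ = 1 := norm_eq_of_mem_sphere θ
    rw [← lint_decomp _ hθ _ (hKm1 θ), ← lintegral_const_mul' _ _ ENNReal.ofReal_ne_top]
    refine lintegral_mono_ae ?_
    filter_upwards [Measure.ae_ne volume (0 : ℝ)] with t ht
    have ht' : 0 < |t| := abs_pos.2 ht
    have hKi : ∀ y : ((ℝ ∙ (θ : EuclideanSpace ℝ (Fin n)))ᗮ),
        K (t • (θ : EuclideanSpace ℝ (Fin n)) + (y : EuclideanSpace ℝ (Fin n))) θ =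
        S.indicator 1 (t • (θ : EuclideanSpace ℝ (Fin n)) + (y : EuclideanSpace ℝ (Fin n))) *
          ENNReal.ofReal (‖t • (θ : EuclideanSpace ℝ (Fin n)) +
          (y : EuclideanSpace ℝ (Fin n))‖ ^ (a * (p - 1))) * ENNReal.ofReal (|t| ^ (a - n)) :=
      fun y => by simp only [hK, inner_decomp _ hθ t y]
    simp_rw [hKi]
    rw [lintegral_mul_const' _ _ ENNReal.ofReal_ne_top]
    refine (mul_le_mul_left (sect_bound hn S hS hp ha θ ht) _).trans_eq ?_
    rw [ENNReal.ofReal_rpow_of_pos ht', mul_right_comm, ← ENNReal.ofReal_mul (by positivity),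
      mul_comm (lintegral _ _), ← mul_assoc, ← ENNReal.ofReal_mul (by positivity)]
    congr 2
    rw [← hC, mul_rpow (by positivity) hCpos.le, ← rpow_mul ht'.le, mul_right_comm,
      ← rpow_add ht', hνp, mul_comm]
    congr 2; ring
  have hfinm : IsFiniteMeasure (sphMeasure n) := by
    have : Nontrivial (EuclideanSpace ℝ (Fin n)) := by
      have : Nonempty (Fin n) := ⟨⟨0, by omega⟩⟩
      infer_instance
    refine ⟨?_⟩
    rw [sphMeasure, Measure.smul_apply, smul_eq_mul]
    refine ENNReal.mul_lt_top (ENNReal.inv_lt_top.2 ?_) (measure_lt_top _ _)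
    exact pos_iff_ne_zero.2 (Measure.measure_univ_ne_zero.2 (Measure.toSphere_ne_zero _))
  have hnull : ∀ᵐ x : EuclideanSpace ℝ (Fin n), x ≠ 0 := by
    have : Nonempty (Fin n) := ⟨⟨0, by omega⟩⟩
    exact Measure.ae_ne volume 0
  calc _ ≤ ∫⁻ θ, ENNReal.ofReal (C ^ (p - 1)) * (∫⁻ x, K x θ) ∂(sphMeasure n) :=
        lintegral_mono step
    _ = ENNReal.ofReal (C ^ (p - 1)) * ∫⁻ x, ∫⁻ θ, K x θ ∂(sphMeasure n) := by
        rw [lintegral_const_mul' _ _ ENNReal.ofReal_ne_top,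
          lintegral_lintegral_swap hKm.aemeasurable]
    _ = ENNReal.ofReal (C ^ (p - 1)) * ∫⁻ x, ENNReal.ofReal D *
          S.indicator (fun x => ENNReal.ofReal ‖x‖ ^ (μ * p)) x := by
        congr 1
        refine lintegral_congr_ae ?_
        filter_upwards [hnull] with x hx
        have hx' : 0 < ‖x‖ := norm_pos_iff.2 hx
        simp only [hK]
        rw [lintegral_const_mul _ (by fun_prop), sph_moment hn (by linarith) x hx,
          show a - n + 1 = a - (n - 1 : ℝ) by ring, sub_add_cancel, ← hD]
        by_cases h : x ∈ S
        · rw [Set.indicator_of_mem h, Set.indicator_of_mem h, ENNReal.ofReal_rpow_of_pos hx',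
            Pi.one_apply, one_mul, ← ENNReal.ofReal_mul (by positivity),
            ← ENNReal.ofReal_mul hDpos.le, ← mul_assoc, ← rpow_add hx', mul_comm]
          congr 3
          rw [ha_def]; field_simp; ring
        · rw [Set.indicator_of_notMem h, Set.indicator_of_notMem h]; simp
    _ = _ := by
        rw [lintegral_const_mul' _ _ ENNReal.ofReal_ne_top, lintegral_indicator hS, ← mul_assoc,
          ← ENNReal.ofReal_mul (by positivity), hconst, ← ENNReal.ofReal_rpow_of_pos hωpos]
end
end
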